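/- Let H²_β be a weighted Hardy space of polynomial growth and let f₁, f₂ be analytic on an open neighborhood of the closed unit disk. Then M_{f₁} is similar to M_{f₂} on H²_β if and only if there exist two finite Blaschke products B₁ and B₂ of the same order and a function h analytic on an open neighborhood of the closed unit disk such that f₁ = h ∘ B₁ and f₂ = h ∘ B₂. -/

import Mathlib

noncomputable section

open Complex Filter Topology

/-- The sequence-space (ℓ²) model of a weighted Hardy space `H²_β`.
An element `a : H2` represents the analytic function whose `k`-th Taylor
coefficient is `a k / β k` (so that `‖a‖` is exactly the `H²_β`-norm). -/
abbrev H2 : Type := lp (fun _ : ℕ => ℂ) 2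

/-- The direct sum (ℓ²-sense) of `m` copies of `H2`. -/
abbrev Hm (m : ℕ) : Type := PiLp 2 (fun _ : Fin m => H2)

/-- The open unit disk 𝔻 ⊆ ℂ. -/
def unitDisk : Set ℂ := Metric.ball 0 1

/-- `β_0 = 1` and `β_k = ∏_{j=1}^k w_j`. -/
def betaSeq (w : ℕ → ℝ) (k : ℕ) : ℝ := ∏ j ∈ Finset.Icc 1 k, w j

/-- The analytic function on 𝔻 represented by the vector `a` in the model of `H²_β`:
`f(z) = ∑_k (a k / β k) z^k`. -/
def repFun (β : ℕ → ℝ) (a : H2) (z : ℂ) : ℂ := ∑' k, (a k / (β k : ℂ)) * z ^ k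

/-- `T` is (the ℓ²-model of) the multiplication operator `M_g` on `H²_β`.
Existence of such a `T` says precisely that `M_g` is bounded on `H²_β`. -/
def RepMul (β : ℕ → ℝ) (g : ℂ → ℂ) (T : H2 →L[ℂ] H2) : Prop :=
  ∀ a : H2, ∀ z ∈ unitDisk, repFun β (T a) z = g z * repFun β a z

/-- `T` is (the ℓ²-model of) the composition operator `C_ψ` on `H²_β`.
Existence of such a `T` says precisely that `C_ψ` is bounded on `H²_β`. -/
def RepComp (β : ℕ → ℝ) (ψ : ℂ → ℂ) (T : H2 →L[ℂ] H2) : Prop :=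
  ∀ a : H2, ∀ z ∈ unitDisk, repFun β (T a) z = repFun β a (ψ z)

/-- The Möbius factor `φ_{z₀}(z) = (z₀ - z)/(1 - conj z₀ · z)`. -/
def mobius (z₀ z : ℂ) : ℂ := (z₀ - z) / (1 - (starRingEnd ℂ) z₀ * z)

/-- `φ` belongs to `Aut(𝔻)`, i.e. `φ(z) = e^{iθ}(z₀ - z)/(1 - conj z₀ · z)`. -/
def IsDiskAut (φ : ℂ → ℂ) : Prop :=
  ∃ (θ : ℝ) (z₀ : ℂ), z₀ ∈ unitDisk ∧
    ∀ z, φ z = Complex.exp (θ * Complex.I) * mobius z₀ z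

/-- `B` is a finite Blaschke product of order `m`. -/
def IsBlaschke (m : ℕ) (B : ℂ → ℂ) : Prop :=
  ∃ (θ : ℝ) (zs : Fin m → ℂ), (∀ j, zs j ∈ unitDisk) ∧
    ∀ z, B z = Complex.exp (θ * Complex.I) * ∏ j, mobius (zs j) z

/-- `w` is a positive weight sequence tending to `1` such that the weighted Hardy
space `H²_β` is of polynomial growth: `sup_k (k+1)|w_k - 1| < ∞`. -/
def PolyGrowth (w : ℕ → ℝ) : Prop :=
  (∀ k, 1 ≤ k → 0 < w k) ∧ Tendsto w atTop (nhds 1) ∧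
    ∃ M : ℝ, ∀ k : ℕ, 1 ≤ k → ((k : ℝ) + 1) * |w k - 1| ≤ M

/-- `f` is analytic on an open neighbourhood of the closed unit disk. -/
def AnalyticOnClosedDisk (f : ℂ → ℂ) : Prop :=
  ∃ U : Set ℂ, IsOpen U ∧ Metric.closedBall (0:ℂ) 1 ⊆ U ∧ AnalyticOnNhd ℂ f U

/-!
*Sufficiency.* Repeat the zeros of a Blaschke product `B` of order `m` periodically. In the
Takenaka–Malmquist basis of this sequence, multiplication by `B` is the shift by `m` places, so the
matrix of multiplication by `h ∘ B` depends only on `h` and `m`. The basis is orthonormal in the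
unweighted space, and the entries of its matrix decay exponentially outside of a cone around the
diagonal. Within such a cone the weights of the two indices of an entry are comparable, so the
change of basis is still an isomorphism after conjugation by the weight.

*Necessity.* Let `Y M_{f₁} = M_{f₂} Y`. Evaluation at a generic point `α`, preceded by `Y`, vanishes
on the range of `M_{f₁} - f₂ α`, hence is a combination of evaluations at points `ζ` with
`f₁ ζ = f₂ α`. The points `ζ` which so occur are linked to `α`, and their number `M` does not depend
on `α`. The product of `φ_c ζ` over the points `ζ` linked to `α` is a quotient of determinants
formed from operators `Y`, so it is a bounded analytic function of `α`, and its zeros include the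
points linked to `c`. By Schwarz's lemma its modulus is at most that of the product of `φ_α ζ` over
the points `ζ` linked to `c`. As `α` and `c` may be exchanged, equality holds, and the function is a
Blaschke product of order `M`. These Blaschke products and the symbols take the same values at
linked points, so the symbols are functions of the Blaschke products, and the common `h` is an
average over fibres.
-/

/-! ### Weights -/

/-- The class of weights for which the elements of `H²_β` are analytic functions on the disk,
`H²_β` contains every function analytic on the closed disk, and `M_z` is bounded. -/
structure HardyWeight (β : ℕ → ℝ) : Prop where
  pos : ∀ k, 0 < β k
  summable_pow_mul : ∀ r : ℝ, 0 ≤ r → r < 1 → Summable fun k => r ^ k * β k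
  summable_pow_div : ∀ r : ℝ, 0 ≤ r → r < 1 → Summable fun k => r ^ k / β k
  exists_succ_le : ∃ C : ℝ, ∀ k, β (k + 1) ≤ C * β k

/-- Positive weights whose values at comparable indices are comparable. Indices are shifted by one
in the comparison so that `0` is comparable to every index up to `K`. -/
structure SlowlyVarying (β : ℕ → ℝ) : Prop where
  pos : ∀ k, 0 < β k
  exists_le_mul : ∀ K : ℕ, ∃ C : ℝ, ∀ n k, n ≤ K * (k + 1) → k ≤ K * (n + 1) → β n ≤ C * β k

lemma HardyWeight.ofReal_ne_zero {β : ℕ → ℝ} (hβ : HardyWeight β) (k : ℕ) : (β k : ℂ) ≠ 0 :=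
  Complex.ofReal_ne_zero.2 (hβ.pos k).ne'

lemma HardyWeight.norm_ofReal {β : ℕ → ℝ} (hβ : HardyWeight β) (k : ℕ) : ‖(β k : ℂ)‖ = β k :=
  Complex.norm_of_nonneg (hβ.pos k).le

lemma HardyWeight.one : HardyWeight fun _ => 1 where
  pos _ := one_pos
  summable_pow_mul r hr hr1 := by simpa using summable_geometric_of_lt_one hr hr1
  summable_pow_div r hr hr1 := by simpa using summable_geometric_of_lt_one hr hr1
  exists_succ_le := ⟨1, by simp⟩

namespace SlowlyVarying

variable {β : ℕ → ℝ}

lemma inv (hβ : SlowlyVarying β) : SlowlyVarying fun k => (β k)⁻¹ where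
  pos k := inv_pos.2 (hβ.pos k)
  exists_le_mul K := by
    obtain ⟨C, hC⟩ := hβ.exists_le_mul K
    refine ⟨C, fun n k hn hk => ?_⟩
    rw [← div_eq_mul_inv, le_div_iff₀ (hβ.pos k), inv_mul_le_iff₀ (hβ.pos n), mul_comm]
    exact hC k n hk hn

lemma exists_le_mul_pow (hβ : SlowlyVarying β) : ∃ A : ℕ, ∀ n, β n ≤ β 0 * ((n : ℝ) + 1) ^ A := by
  obtain ⟨C, hC⟩ := hβ.exists_le_mul 2
  obtain ⟨A, hA⟩ := pow_unbounded_of_one_lt C (one_lt_two : (1 : ℝ) < 2)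
  refine ⟨A, fun n => ?_⟩
  induction n using Nat.strong_induction_on with
  | _ n ih =>
    rcases n.eq_zero_or_pos with rfl | hn
    · simp
    have hhalf : (((n - 1) / 2 : ℕ) : ℝ) + 1 ≤ ((n : ℝ) + 1) / 2 := by
      rw [le_div_iff₀ two_pos]
      exact_mod_cast (by lia : ((n - 1) / 2 + 1) * 2 ≤ n + 1)
    calc β n ≤ C * β ((n - 1) / 2) := hC n _ (by lia) (by lia)
      _ ≤ 2 ^ A * (β 0 * (((n : ℝ) + 1) / 2) ^ A) := by
          have hpos := hβ.pos ((n - 1) / 2)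
          refine mul_le_mul hA.le ((ih _ (by lia)).trans ?_) hpos.le (by positivity)
          have := (hβ.pos 0).le
          gcongr
      _ = β 0 * ((n : ℝ) + 1) ^ A := by rw [div_pow]; field_simp

lemma summable_pow_mul (hβ : SlowlyVarying β) {r : ℝ} (hr : 0 ≤ r) (hr1 : r < 1) :
    Summable fun k => r ^ k * β k := by
  obtain ⟨A, hA⟩ := hβ.exists_le_mul_pow
  have hr' : ‖r‖ < 1 := by rwa [Real.norm_of_nonneg hr]
  have hpoly : Summable fun k : ℕ => β 0 * 2 ^ (A - 1) * ((k : ℝ) ^ A * r ^ k + r ^ k) :=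
    ((summable_pow_mul_geometric_of_norm_lt_one A hr').add
      (summable_geometric_of_lt_one hr hr1)).mul_left _
  refine hpoly.of_nonneg_of_le (fun k => mul_nonneg (pow_nonneg hr k) (hβ.pos k).le) fun k => ?_
  calc r ^ k * β k ≤ r ^ k * (β 0 * (2 ^ (A - 1) * ((k : ℝ) ^ A + 1 ^ A))) := by
        refine mul_le_mul_of_nonneg_left ((hA k).trans ?_) (pow_nonneg hr k)
        exact mul_le_mul_of_nonneg_left (add_pow_le k.cast_nonneg zero_le_one A) (hβ.pos 0).le
    _ = β 0 * 2 ^ (A - 1) * ((k : ℝ) ^ A * r ^ k + r ^ k) := by rw [one_pow]; ring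

lemma hardyWeight (hβ : SlowlyVarying β) : HardyWeight β where
  pos := hβ.pos
  summable_pow_mul _ := hβ.summable_pow_mul
  summable_pow_div _ := hβ.inv.summable_pow_mul
  exists_succ_le := by
    obtain ⟨C, hC⟩ := hβ.exists_le_mul 1
    exact ⟨C, fun k => hC _ _ (by lia) (by lia)⟩

end SlowlyVarying

lemma betaSeq_succ (w : ℕ → ℝ) (k : ℕ) : betaSeq w (k + 1) = betaSeq w k * w (k + 1) :=
  Finset.prod_Icc_succ_top (by lia) w

namespace PolyGrowth

variable {w : ℕ → ℝ}

lemma betaSeq_pos (hw : PolyGrowth w) (k : ℕ) : 0 < betaSeq w k :=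
  Finset.prod_pos fun j hj => hw.1 j (Finset.mem_Icc.1 hj).1

lemma exists_abs_log_le (hw : PolyGrowth w) :
    ∃ A, 0 ≤ A ∧ ∀ k : ℕ, |Real.log (w (k + 1))| ≤ A / (k + 1) := by
  obtain ⟨hpos, hlim, M, hM⟩ := hw
  have hlim_inv : Tendsto (fun k => (w (k + 1))⁻¹) atTop (𝓝 1) := by
    simpa using ((tendsto_add_atTop_iff_nat 1).2 hlim).inv₀ one_ne_zero
  obtain ⟨D, hD⟩ := hlim_inv.bddAbove_range
  have hM0 : 0 ≤ M := le_trans (by positivity) (hM 1 le_rfl)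
  refine ⟨M * max 1 D, by positivity, fun k => ?_⟩
  have hk : 0 < w (k + 1) := hpos _ (by lia)
  have hlog : |Real.log (w (k + 1))| ≤ |w (k + 1) - 1| * max 1 D := by
    refine abs_le'.2 ⟨?_, ?_⟩
    · calc Real.log (w (k + 1)) ≤ w (k + 1) - 1 := Real.log_le_sub_one_of_pos hk
        _ ≤ |w (k + 1) - 1| * max 1 D :=
          (le_abs_self _).trans (le_mul_of_one_le_right (abs_nonneg _) (le_max_left _ _))
    · calc -Real.log (w (k + 1)) ≤ (w (k + 1))⁻¹ - 1 := by
            rw [← Real.log_inv]; exact Real.log_le_sub_one_of_pos (inv_pos.2 hk)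
        _ = -(w (k + 1) - 1) * (w (k + 1))⁻¹ := by field_simp; ring
        _ ≤ |w (k + 1) - 1| * max 1 D :=
          mul_le_mul (neg_le_abs _) ((hD ⟨k, rfl⟩).trans (le_max_right _ _)) (inv_pos.2 hk).le
            (abs_nonneg _)
  have hdev : |w (k + 1) - 1| ≤ M / (k + 1) := by
    have := hM (k + 1) (by lia)
    push_cast at this
    rw [le_div_iff₀ (by positivity)]
    nlinarith [abs_nonneg (w (k + 1) - 1)]
  calc |Real.log (w (k + 1))| ≤ M / (k + 1) * max 1 D := hlog.trans (by gcongr)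
    _ = M * max 1 D / (k + 1) := by ring

lemma abs_log_betaSeq_add_sub_le (hw : PolyGrowth w) {A : ℝ} (hA : 0 ≤ A)
    (hlog : ∀ k : ℕ, |Real.log (w (k + 1))| ≤ A / (k + 1)) (k d : ℕ) :
    |Real.log (betaSeq w (k + d)) - Real.log (betaSeq w k)| ≤ A / (k + 1) * d := by
  induction d with
  | zero => simp
  | succ d ih =>
    have hstep : Real.log (betaSeq w (k + (d + 1))) - Real.log (betaSeq w k) =
        Real.log (betaSeq w (k + d)) - Real.log (betaSeq w k) + Real.log (w (k + d + 1)) := by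
      rw [← add_assoc, betaSeq_succ,
        Real.log_mul (hw.betaSeq_pos _).ne' (hw.1 _ (by lia)).ne']
      ring
    have hterm : |Real.log (w (k + d + 1))| ≤ A / (k + 1) := by
      refine (hlog (k + d)).trans ?_
      gcongr
      exact_mod_cast k.le_add_right d
    rw [hstep, Nat.cast_succ, mul_add, mul_one]
    exact (abs_add_le _ _).trans (add_le_add ih hterm)

lemma slowlyVarying_betaSeq (hw : PolyGrowth w) : SlowlyVarying (betaSeq w) where
  pos := hw.betaSeq_pos
  exists_le_mul K := by
    obtain ⟨A, hA, hlog⟩ := hw.exists_abs_log_le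
    have hdiff : ∀ k d : ℕ, k + d ≤ K * (k + 1) →
        |Real.log (betaSeq w (k + d)) - Real.log (betaSeq w k)| ≤ A * K := by
      intro k d h
      refine (hw.abs_log_betaSeq_add_sub_le hA hlog k d).trans ?_
      rw [div_mul_eq_mul_div, div_le_iff₀ (by positivity), mul_assoc]
      refine mul_le_mul_of_nonneg_left ?_ hA
      exact_mod_cast (Nat.le_add_left d k).trans h
    refine ⟨Real.exp (A * K), fun n k hn hk => ?_⟩
    have habs : |Real.log (betaSeq w n) - Real.log (betaSeq w k)| ≤ A * K := by
      rcases le_total k n with h | h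
      · obtain ⟨d, rfl⟩ := Nat.exists_eq_add_of_le h
        exact hdiff k d hn
      · obtain ⟨d, rfl⟩ := Nat.exists_eq_add_of_le h
        rw [abs_sub_comm]
        exact hdiff n d hk
    rw [← Real.log_le_log_iff (hw.betaSeq_pos n) (mul_pos (Real.exp_pos _) (hw.betaSeq_pos k)),
      Real.log_mul (Real.exp_pos _).ne' (hw.betaSeq_pos k).ne', Real.log_exp]
    linarith [le_abs_self (Real.log (betaSeq w n) - Real.log (betaSeq w k))]

end PolyGrowth

/-! ### Square-summable sequences -/

section EllTwo

variable {ι 𝕜 F : Type*} [RCLike 𝕜] [NormedAddCommGroup F] [NormedSpace 𝕜 F]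

lemma memℓp_two_of_summable_norm {f : ι → 𝕜} (h : Summable fun i => ‖f i‖) : Memℓp f 2 :=
  (memℓp_gen (p := 1) (by simpa using h)).of_exponent_ge (by norm_num)

lemma lp_two_hasSum_norm_sq (a : lp (fun _ : ι => 𝕜) 2) :
    HasSum (fun k => ‖a k‖ ^ 2) (‖a‖ ^ 2) := by
  simpa using lp.hasSum_norm (p := 2) (by norm_num) a

lemma lp_two_sum_norm_sq_le (a : lp (fun _ : ι => 𝕜) 2) (s : Finset ι) :
    ∑ k ∈ s, ‖a k‖ ^ 2 ≤ ‖a‖ ^ 2 :=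
  sum_le_hasSum s (fun _ _ => by positivity) (lp_two_hasSum_norm_sq a)

lemma exists_clm_apply_of_sum_norm_sq_le (A : lp (fun _ : ι => 𝕜) 2 →ₗ[𝕜] ι → 𝕜) {C : ℝ}
    (hC : 0 ≤ C) (hA : ∀ x s, ∑ n ∈ s, ‖A x n‖ ^ 2 ≤ (C * ‖x‖) ^ 2) :
    ∃ T : lp (fun _ : ι => 𝕜) 2 →L[𝕜] lp (fun _ : ι => 𝕜) 2, ∀ x n, T x n = A x n := by
  have hmem : ∀ x, Memℓp (A x) 2 := fun x =>
    memℓp_gen' (C := (C * ‖x‖) ^ 2) fun s => by simpa using hA x s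
  let L : lp (fun _ : ι => 𝕜) 2 →ₗ[𝕜] lp (fun _ : ι => 𝕜) 2 :=
    { toFun := fun x => ⟨A x, hmem x⟩
      map_add' := fun x y => Subtype.ext (map_add A x y)
      map_smul' := fun c x => Subtype.ext (map_smul A c x) }
  refine ⟨L.mkContinuous C fun x => ?_, fun x n => rfl⟩
  exact lp.norm_le_of_forall_sum_le (by norm_num) (by positivity) fun s => by
    simp only [ENNReal.toReal_ofNat, Real.rpow_two]
    exact hA x s

lemma lp_two_hasSum_smul_map_single [DecidableEq ι] (L : lp (fun _ : ι => 𝕜) 2 →L[𝕜] F)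
    (a : lp (fun _ : ι => 𝕜) 2) :
    HasSum (fun k => a k • L (lp.single 2 k (1 : 𝕜))) (L a) := by
  have hsingle : ∀ k, lp.single (E := fun _ : ι => 𝕜) 2 k (a k) =
      a k • lp.single 2 k (1 : 𝕜) := fun k => by
    rw [← lp.single_smul, smul_eq_mul, mul_one]
  simpa only [hsingle, map_smul] using (lp.hasSum_single (by norm_num) a).mapL L

lemma lp_two_clm_ext [DecidableEq ι] {L₁ L₂ : lp (fun _ : ι => 𝕜) 2 →L[𝕜] F}
    (h : ∀ k, L₁ (lp.single 2 k (1 : 𝕜)) = L₂ (lp.single 2 k (1 : 𝕜))) : L₁ = L₂ := by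
  ext a
  have h₂ := lp_two_hasSum_smul_map_single L₂ a
  simp only [← h] at h₂
  exact (lp_two_hasSum_smul_map_single L₁ a).unique h₂

lemma lp_two_hasSum_matrix [DecidableEq ι]
    (V : lp (fun _ : ι => 𝕜) 2 →L[𝕜] lp (fun _ : ι => 𝕜) 2) (y : lp (fun _ : ι => 𝕜) 2) (n : ι) :
    HasSum (fun k => V (lp.single 2 k (1 : 𝕜)) n * y k) (V y n) := by
  have h := lp_two_hasSum_smul_map_single ((lp.evalCLM 𝕜 (fun _ : ι => 𝕜) 2 n).comp V) y
  exact h.congr_fun fun k => mul_comm (V (lp.single 2 k (1 : 𝕜)) n) (y k)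

end EllTwo

/-! ### Point evaluations -/

lemma mem_unitDisk {z : ℂ} : z ∈ unitDisk ↔ ‖z‖ < 1 := mem_ball_zero_iff

lemma isOpen_unitDisk : IsOpen unitDisk := Metric.isOpen_ball

lemma zero_mem_unitDisk : (0 : ℂ) ∈ unitDisk := Metric.mem_ball_self one_pos

lemma isPreconnected_unitDisk : IsPreconnected unitDisk :=
  (convex_ball (0 : ℂ) 1).isPreconnected

lemma eball_zero_one : Metric.eball (0 : ℂ) 1 = unitDisk := by
  rw [unitDisk, ← ENNReal.ofReal_one, Metric.eball_ofReal]

section Evaluation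

variable {β : ℕ → ℝ} {z : ℂ}

/-- The vector representing the reproducing kernel of `H²_β` at the point `z` of the disk. -/
def reproducingKernel (hβ : HardyWeight β) (hz : z ∈ unitDisk) : H2 :=
  ⟨fun k => (starRingEnd ℂ) z ^ k / (β k : ℂ), memℓp_two_of_summable_norm <| by
    simpa [abs_of_pos (hβ.pos _)] using
      hβ.summable_pow_div ‖z‖ (norm_nonneg z) (mem_unitDisk.1 hz)⟩

@[simp]
lemma reproducingKernel_apply (hβ : HardyWeight β) (hz : z ∈ unitDisk) (k : ℕ) :
    reproducingKernel hβ hz k = (starRingEnd ℂ) z ^ k / (β k : ℂ) := rfl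

/-- The functional on the model of `H²_β` sending a vector to the value at `z` of the function it
represents. -/
def evalAt (hβ : HardyWeight β) (hz : z ∈ unitDisk) : H2 →L[ℂ] ℂ :=
  innerSL ℂ (reproducingKernel hβ hz)

lemma hasSum_evalAt (hβ : HardyWeight β) (hz : z ∈ unitDisk) (a : H2) :
    HasSum (fun k => a k / (β k : ℂ) * z ^ k) (evalAt hβ hz a) := by
  refine (lp.hasSum_inner (𝕜 := ℂ) (reproducingKernel hβ hz) a).congr_fun fun k => ?_
  simp only [reproducingKernel_apply, RCLike.inner_apply, map_div₀, map_pow, conj_conj,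
    Complex.conj_ofReal]
  ring

@[simp]
lemma evalAt_apply (hβ : HardyWeight β) (hz : z ∈ unitDisk) (a : H2) :
    evalAt hβ hz a = repFun β a z := (hasSum_evalAt hβ hz a).tsum_eq.symm

lemma inner_reproducingKernel (hβ : HardyWeight β) (hz : z ∈ unitDisk) (a : H2) :
    inner ℂ (reproducingKernel hβ hz) a = repFun β a z := evalAt_apply hβ hz a

lemma hasSum_repFun (hβ : HardyWeight β) (hz : z ∈ unitDisk) (a : H2) :
    HasSum (fun k => a k / (β k : ℂ) * z ^ k) (repFun β a z) :=
  evalAt_apply hβ hz a ▸ hasSum_evalAt hβ hz a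

lemma repFun_add (hβ : HardyWeight β) (hz : z ∈ unitDisk) (a b : H2) :
    repFun β (a + b) z = repFun β a z + repFun β b z := by
  simp only [← evalAt_apply hβ hz, map_add]

lemma repFun_sub (hβ : HardyWeight β) (hz : z ∈ unitDisk) (a b : H2) :
    repFun β (a - b) z = repFun β a z - repFun β b z := by
  simp only [← evalAt_apply hβ hz, map_sub]

lemma repFun_smul (hβ : HardyWeight β) (hz : z ∈ unitDisk) (c : ℂ) (a : H2) :
    repFun β (c • a) z = c * repFun β a z := by
  simp only [← evalAt_apply hβ hz, map_smul, smul_eq_mul]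

lemma repFun_single (k : ℕ) (z : ℂ) :
    repFun β (lp.single 2 k (1 : ℂ)) z = (β k : ℂ)⁻¹ * z ^ k := by
  rw [repFun, tsum_eq_single k fun n hn => by simp [hn]]
  simp

lemma hasFPowerSeriesOnBall_repFun (hβ : HardyWeight β) (a : H2) :
    HasFPowerSeriesOnBall (repFun β a)
      (FormalMultilinearSeries.ofScalars ℂ fun k => a k / (β k : ℂ)) 0 1 where
  r_le := ENNReal.le_of_forall_nnreal_lt fun r hr => by
    have hr : ((r : ℝ) : ℂ) ∈ unitDisk := by simpa [mem_unitDisk] using hr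
    refine FormalMultilinearSeries.le_radius_of_summable_norm _ ?_
    simpa [FormalMultilinearSeries.ofScalars_norm] using (hasSum_repFun hβ hr a).summable.norm
  r_pos := one_pos
  hasSum {y} hy := by
    rw [eball_zero_one] at hy
    simpa [mul_comm] using hasSum_repFun hβ hy a

lemma differentiableOn_repFun (hβ : HardyWeight β) (a : H2) :
    DifferentiableOn ℂ (repFun β a) unitDisk :=
  eball_zero_one ▸ (hasFPowerSeriesOnBall_repFun hβ a).differentiableOn

lemma repFun_injOn (hβ : HardyWeight β) {a b : H2}
    (h : ∀ z ∈ unitDisk, repFun β a z = repFun β b z) : a = b := by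
  have hnear : repFun β b =ᶠ[𝓝 0] repFun β a := by
    filter_upwards [isOpen_unitDisk.mem_nhds zero_mem_unitDisk] with z hz using (h z hz).symm
  have hcoeff := FormalMultilinearSeries.ofScalars_series_injective ℂ ℂ <|
    (hasFPowerSeriesOnBall_repFun hβ a).hasFPowerSeriesAt.eq_formalMultilinearSeries
      ((hasFPowerSeriesOnBall_repFun hβ b).hasFPowerSeriesAt.congr hnear)
  ext k
  exact (div_left_inj' (hβ.ofReal_ne_zero k)).1 (congrFun hcoeff k)

end Evaluation

/-! ### Functions analytic on the closed disk and their multiplication operators -/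

lemma mem_closedBall_of_mem_unitDisk {z : ℂ} (hz : z ∈ unitDisk) :
    z ∈ Metric.closedBall (0 : ℂ) 1 := Metric.ball_subset_closedBall hz

lemma analyticOnClosedDisk_iff {f : ℂ → ℂ} :
    AnalyticOnClosedDisk f ↔ ∀ z ∈ Metric.closedBall (0 : ℂ) 1, AnalyticAt ℂ f z :=
  ⟨fun ⟨_, _, hU, hf⟩ z hz => hf z (hU hz),
    fun h => ⟨{z | AnalyticAt ℂ f z}, isOpen_analyticAt ℂ f, h, fun _ hz => hz⟩⟩

lemma analyticOnClosedDisk_of_differentiableOn {f : ℂ → ℂ} {R : ℝ} (hR : 1 < R)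
    (hf : DifferentiableOn ℂ f (Metric.ball 0 R)) : AnalyticOnClosedDisk f :=
  ⟨Metric.ball 0 R, Metric.isOpen_ball, Metric.closedBall_subset_ball hR,
    hf.analyticOnNhd Metric.isOpen_ball⟩

lemma analyticOnClosedDisk_const (c : ℂ) : AnalyticOnClosedDisk fun _ => c :=
  analyticOnClosedDisk_iff.2 fun _ _ => analyticAt_const

lemma analyticOnClosedDisk_eval (p : Polynomial ℂ) : AnalyticOnClosedDisk fun z => p.eval z :=
  analyticOnClosedDisk_iff.2 fun z _ => p.differentiable.analyticAt z

/-- The Taylor coefficients of a function at the origin. -/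
def taylorCoeff (f : ℂ → ℂ) (n : ℕ) : ℂ := (n.factorial : ℂ)⁻¹ * iteratedDeriv n f 0

lemma hasSum_taylorCoeff {f : ℂ → ℂ} {R : ℝ} (hf : DifferentiableOn ℂ f (Metric.ball 0 R)) {z : ℂ}
    (hz : ‖z‖ < R) : HasSum (fun n => taylorCoeff f n * z ^ n) (f z) :=
  (Complex.hasSum_taylorSeries_on_ball hf (mem_ball_zero_iff.2 hz)).congr_fun fun n => by
    simp only [taylorCoeff, sub_zero, smul_eq_mul]
    ring

lemma norm_taylorCoeff_le {f : ℂ → ℂ} {R C : ℝ} (hR : 0 < R)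
    (hf : DifferentiableOn ℂ f (Metric.closedBall 0 R)) (hC : ∀ z, ‖z‖ = R → ‖f z‖ ≤ C) (n : ℕ) :
    ‖taylorCoeff f n‖ ≤ C / R ^ n := by
  have hcauchy := Complex.norm_iteratedDeriv_le_of_forall_mem_sphere_norm_le n hR
    (hf.diffContOnCl_ball le_rfl) fun z hz => hC z (mem_sphere_zero_iff_norm.1 hz)
  rw [taylorCoeff, norm_mul, norm_inv, Complex.norm_natCast,
    inv_mul_le_iff₀ (Nat.cast_pos.2 n.factorial_pos), ← mul_div_assoc]
  exact hcauchy

namespace AnalyticOnClosedDisk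

variable {f : ℂ → ℂ}

lemma exists_analyticOnNhd_closedBall (hf : AnalyticOnClosedDisk f) :
    ∃ R : ℝ, 1 < R ∧ AnalyticOnNhd ℂ f (Metric.closedBall 0 R) := by
  obtain ⟨U, hU, hsub, hfU⟩ := hf
  obtain ⟨δ, hδ, h⟩ := (isCompact_closedBall (0 : ℂ) 1).exists_cthickening_subset_open hU hsub
  rw [cthickening_closedBall hδ.le zero_le_one] at h
  exact ⟨δ + 1, by linarith, hfU.mono h⟩

lemma differentiableOn (hf : AnalyticOnClosedDisk f) : DifferentiableOn ℂ f unitDisk :=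
  fun z hz => (analyticOnClosedDisk_iff.1 hf z
    (mem_closedBall_of_mem_unitDisk hz)).differentiableAt.differentiableWithinAt

lemma mul {g : ℂ → ℂ} (hf : AnalyticOnClosedDisk f) (hg : AnalyticOnClosedDisk g) :
    AnalyticOnClosedDisk fun z => f z * g z :=
  analyticOnClosedDisk_iff.2 fun z hz =>
    (analyticOnClosedDisk_iff.1 hf z hz).mul (analyticOnClosedDisk_iff.1 hg z hz)

lemma exists_norm_taylorCoeff_le (hf : AnalyticOnClosedDisk f) :
    ∃ C r : ℝ, 0 < r ∧ r < 1 ∧ ∀ n, ‖taylorCoeff f n‖ ≤ C * r ^ n := by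
  obtain ⟨R, hR, hfR⟩ := hf.exists_analyticOnNhd_closedBall
  obtain ⟨C, hC⟩ := (isCompact_sphere (0 : ℂ) R).exists_bound_of_continuousOn
    (hfR.continuousOn.mono Metric.sphere_subset_closedBall)
  refine ⟨C, R⁻¹, by positivity, inv_lt_one_of_one_lt₀ hR, fun n => ?_⟩
  rw [inv_pow, ← div_eq_mul_inv]
  exact norm_taylorCoeff_le (by positivity) hfR.differentiableOn
    (fun z hz => hC z (mem_sphere_zero_iff_norm.2 hz)) n

lemma exists_repFun_eq (hf : AnalyticOnClosedDisk f) {β : ℕ → ℝ} (hβ : HardyWeight β) :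
    ∃ a : H2, ∀ z ∈ unitDisk, repFun β a z = f z := by
  obtain ⟨C, r, hr, hr1, hC⟩ := hf.exists_norm_taylorCoeff_le
  have hsum : Summable fun k => ‖taylorCoeff f k * (β k : ℂ)‖ := by
    refine ((hβ.summable_pow_mul r hr.le hr1).mul_left C).of_nonneg_of_le
      (fun _ => norm_nonneg _) fun k => ?_
    rw [norm_mul, hβ.norm_ofReal, ← mul_assoc]
    exact mul_le_mul_of_nonneg_right (hC k) (hβ.pos k).le
  refine ⟨⟨_, memℓp_two_of_summable_norm hsum⟩, fun z hz => ?_⟩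
  refine (hasSum_repFun hβ hz _).unique ?_
  refine (hasSum_taylorCoeff hf.differentiableOn (mem_unitDisk.1 hz)).congr_fun fun k => ?_
  simp only [mul_div_cancel_right₀ _ (hβ.ofReal_ne_zero k)]

end AnalyticOnClosedDisk

lemma exists_repFun_eq_pow {β : ℕ → ℝ} (hβ : HardyWeight β) (n : ℕ) :
    ∃ a : H2, ∀ z ∈ unitDisk, repFun β a z = z ^ n := by
  simpa only [Polynomial.eval_X_pow] using
    (analyticOnClosedDisk_eval (Polynomial.X ^ n)).exists_repFun_eq hβ

section Shift

variable {β : ℕ → ℝ}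

lemma exists_shift_apply (hβ : HardyWeight β) : ∃ S : H2 →L[ℂ] H2, ∀ a,
    S a 0 = 0 ∧ ∀ k, S a (k + 1) = ((β (k + 1) / β k : ℝ) : ℂ) * a k := by
  obtain ⟨C, hC⟩ := hβ.exists_succ_le
  have hratio : ∀ k, 0 ≤ β (k + 1) / β k := fun k => (div_pos (hβ.pos _) (hβ.pos _)).le
  have hratio_le : ∀ k, β (k + 1) / β k ≤ C := fun k => (div_le_iff₀ (hβ.pos k)).2 (hC k)
  let A : H2 →ₗ[ℂ] ℕ → ℂ :=
    { toFun := fun a n => n.casesOn 0 fun k => ((β (k + 1) / β k : ℝ) : ℂ) * a k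
      map_add' := fun a b => funext fun n => by cases n <;> simp [mul_add]
      map_smul' := fun c a => funext fun n => by cases n <;> simp [mul_left_comm] }
  obtain ⟨S, hS⟩ := exists_clm_apply_of_sum_norm_sq_le A ((hratio 0).trans (hratio_le 0)) <| by
    intro a s
    have hterm : ∀ k, ‖A a (k + 1)‖ ^ 2 ≤ C ^ 2 * ‖a k‖ ^ 2 := fun k => by
      rw [← mul_pow]
      refine pow_le_pow_left₀ (norm_nonneg _) ?_ 2
      calc ‖A a (k + 1)‖ = β (k + 1) / β k * ‖a k‖ := by
            rw [← Complex.norm_of_nonneg (hratio k)]; exact norm_mul _ _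
        _ ≤ C * ‖a k‖ := mul_le_mul_of_nonneg_right (hratio_le k) (norm_nonneg _)
    obtain ⟨N, hN⟩ := s.exists_nat_subset_range
    calc ∑ n ∈ s, ‖A a n‖ ^ 2 ≤ ∑ n ∈ Finset.range (N + 1), ‖A a n‖ ^ 2 :=
          Finset.sum_le_sum_of_subset_of_nonneg (hN.trans (Finset.range_mono N.le_succ))
            fun _ _ _ => by positivity
      _ = ∑ k ∈ Finset.range N, ‖A a (k + 1)‖ ^ 2 := by
          rw [Finset.sum_range_succ', show A a 0 = 0 from rfl]
          simp
      _ ≤ C ^ 2 * ∑ k ∈ Finset.range N, ‖a k‖ ^ 2 := by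
          rw [Finset.mul_sum]
          exact Finset.sum_le_sum fun k _ => hterm k
      _ ≤ (C * ‖a‖) ^ 2 := by
          rw [mul_pow]
          exact mul_le_mul_of_nonneg_left (lp_two_sum_norm_sq_le a _) (sq_nonneg C)
  exact ⟨S, fun a => ⟨hS a 0, fun k => hS a (k + 1)⟩⟩

lemma repMul_id_of_shift (hβ : HardyWeight β) {S : H2 →L[ℂ] H2} (hS : ∀ a,
    S a 0 = 0 ∧ ∀ k, S a (k + 1) = ((β (k + 1) / β k : ℝ) : ℂ) * a k) :
    RepMul β (fun z => z) S := by
  intro a z hz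
  refine (hasSum_repFun hβ hz (S a)).unique ?_
  rw [← hasSum_nat_add_iff' 1]
  simp only [Finset.range_one, Finset.sum_singleton, (hS a).1, (hS a).2, zero_div, zero_mul,
    sub_zero, Complex.ofReal_div]
  refine ((hasSum_repFun hβ hz a).mul_left z).congr_fun fun k => ?_
  have := hβ.ofReal_ne_zero k
  have := hβ.ofReal_ne_zero (k + 1)
  field_simp
  ring

lemma exists_repMul_id (hβ : HardyWeight β) : ∃ S, RepMul β (fun z => z) S :=
  (exists_shift_apply hβ).imp fun _ hS => repMul_id_of_shift hβ hS

lemma exists_isometry_repMul_id :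
    ∃ S : H2 →L[ℂ] H2, RepMul (fun _ => 1) (fun z => z) S ∧ ∀ a, ‖S a‖ = ‖a‖ := by
  obtain ⟨S, hS⟩ := exists_shift_apply HardyWeight.one
  refine ⟨S, repMul_id_of_shift HardyWeight.one hS, fun a => ?_⟩
  have hSa := (hasSum_nat_add_iff' 1).2 (lp_two_hasSum_norm_sq (S a))
  simp only [Finset.range_one, Finset.sum_singleton, (hS a).1, (hS a).2, norm_zero, div_one,
    Complex.ofReal_one, one_mul, ne_eq, OfNat.ofNat_ne_zero, not_false_eq_true, zero_pow,
    sub_zero] at hSa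
  exact (sq_eq_sq₀ (norm_nonneg _) (norm_nonneg _)).1 (hSa.unique (lp_two_hasSum_norm_sq a))

end Shift

namespace RepMul

variable {β : ℕ → ℝ} {f g : ℂ → ℂ} {S T : H2 →L[ℂ] H2}

lemma one : RepMul β (fun _ => 1) 1 := fun _ _ _ => (one_mul _).symm

lemma add (hβ : HardyWeight β) (hS : RepMul β f S) (hT : RepMul β g T) :
    RepMul β (fun z => f z + g z) (S + T) := fun a z hz => by
  rw [add_apply, repFun_add hβ hz, hS a z hz, hT a z hz, add_mul]

lemma const_smul (hβ : HardyWeight β) (c : ℂ) (hS : RepMul β f S) :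
    RepMul β (fun z => c * f z) (c • S) := fun a z hz => by
  rw [smul_apply, repFun_smul hβ hz, hS a z hz, mul_assoc]

lemma mul (hS : RepMul β f S) (hT : RepMul β g T) :
    RepMul β (fun z => f z * g z) (S * T) := fun a z hz => by
  rw [mul_apply_eq_comp, hS _ z hz, hT a z hz, mul_assoc]

lemma pow (hS : RepMul β f S) (n : ℕ) : RepMul β (fun z => f z ^ n) (S ^ n) := by
  induction n with
  | zero => simpa only [pow_zero] using one
  | succ n ih => simpa only [pow_succ] using ih.mul hS

lemma congr (hS : RepMul β f S) (hfg : ∀ z ∈ unitDisk, f z = g z) : RepMul β g S :=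
  fun a z hz => by rw [hS a z hz, hfg z hz]

lemma unique (hβ : HardyWeight β) (hS : RepMul β f S) (hT : RepMul β f T) : S = T :=
  ContinuousLinearMap.ext fun a => repFun_injOn hβ fun z hz => by rw [hS a z hz, hT a z hz]

lemma aeval (hβ : HardyWeight β) (hS : RepMul β f S) (p : Polynomial ℂ) :
    RepMul β (fun z => p.eval (f z)) (Polynomial.aeval S p) := by
  induction p using Polynomial.induction_on' with
  | add p q hp hq => simpa only [Polynomial.eval_add, map_add] using hp.add hβ hq
  | monomial n c =>
    simpa only [Polynomial.eval_monomial, Polynomial.aeval_monomial, Algebra.smul_def] using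
      (hS.pow n).const_smul hβ c

lemma commute (hβ : HardyWeight β) (hS : RepMul β f S) (hT : RepMul β g T) : Commute S T :=
  (hS.mul hT).unique hβ ((hT.mul hS).congr fun z _ => mul_comm (g z) (f z))

end RepMul

/-! ### Möbius maps -/

section Mobius

variable {a z : ℂ}

lemma norm_mul_norm_lt_one (ha : a ∈ unitDisk) (hz : ‖z‖ ≤ 1) : ‖a‖ * ‖z‖ < 1 :=
  (mul_le_of_le_one_right (norm_nonneg a) hz).trans_lt (mem_unitDisk.1 ha)

lemma one_sub_norm_sq_pos (ha : a ∈ unitDisk) : 0 < 1 - ‖a‖ ^ 2 :=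
  sub_pos.2 (pow_lt_one₀ (norm_nonneg a) (mem_unitDisk.1 ha) two_ne_zero)

lemma one_sub_conj_mul_ne_zero (h : ‖a‖ * ‖z‖ < 1) : 1 - (starRingEnd ℂ) a * z ≠ 0 := by
  refine sub_ne_zero.2 fun h1 => h.ne ?_
  rw [← RCLike.norm_conj a, ← norm_mul, ← h1, norm_one]

lemma one_sub_conj_mul_ne_zero_of_mem (ha : a ∈ unitDisk) (hz : z ∈ unitDisk) :
    1 - (starRingEnd ℂ) a * z ≠ 0 :=
  one_sub_conj_mul_ne_zero (norm_mul_norm_lt_one ha (mem_unitDisk.1 hz).le)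

lemma one_sub_norm_mobius_sq (h : 1 - (starRingEnd ℂ) a * z ≠ 0) :
    1 - ‖mobius a z‖ ^ 2 =
      (1 - ‖a‖ ^ 2) * (1 - ‖z‖ ^ 2) / ‖1 - (starRingEnd ℂ) a * z‖ ^ 2 := by
  have hden : ‖1 - (starRingEnd ℂ) a * z‖ ^ 2 ≠ 0 := by positivity
  rw [mobius, norm_div, div_pow, eq_div_iff hden, sub_mul, div_mul_cancel₀ _ hden]
  simp only [← Complex.normSq_eq_norm_sq, Complex.normSq_apply, Complex.sub_re, Complex.sub_im,
    Complex.mul_re, Complex.mul_im, Complex.one_re, Complex.one_im, Complex.conj_re,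
    Complex.conj_im]
  ring

lemma mobius_mem_unitDisk (ha : a ∈ unitDisk) (hz : z ∈ unitDisk) : mobius a z ∈ unitDisk := by
  have hden := one_sub_conj_mul_ne_zero_of_mem ha hz
  have := one_sub_norm_sq_pos ha
  have := one_sub_norm_sq_pos hz
  have hpos : 0 < 1 - ‖mobius a z‖ ^ 2 := by
    rw [one_sub_norm_mobius_sq hden]
    positivity
  exact mem_unitDisk.2 ((sq_lt_one_iff₀ (norm_nonneg _)).1 (sub_pos.1 hpos))

lemma one_lt_norm_mobius (ha : a ∈ unitDisk) (hz : 1 < ‖z‖)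
    (hden : 1 - (starRingEnd ℂ) a * z ≠ 0) : 1 < ‖mobius a z‖ := by
  have hneg : 1 - ‖mobius a z‖ ^ 2 < 0 := by
    rw [one_sub_norm_mobius_sq hden]
    have hz2 : 1 - ‖z‖ ^ 2 < 0 := sub_neg.2 (one_lt_pow₀ hz two_ne_zero)
    exact div_neg_of_neg_of_pos (mul_neg_of_pos_of_neg (one_sub_norm_sq_pos ha) hz2)
      (by positivity)
  exact (one_lt_sq_iff₀ (norm_nonneg _)).1 (sub_neg.1 hneg)

lemma norm_mobius_comm (a z : ℂ) : ‖mobius a z‖ = ‖mobius z a‖ := by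
  rw [mobius, mobius, norm_div, norm_div, norm_sub_rev]
  congr 1
  rw [← RCLike.norm_conj]
  simp [mul_comm]

@[simp]
lemma mobius_self (a : ℂ) : mobius a a = 0 := by simp [mobius]

@[simp]
lemma mobius_zero (a : ℂ) : mobius a 0 = a := by simp [mobius]

lemma mobius_eq_zero_iff (ha : a ∈ unitDisk) (hz : z ∈ unitDisk) : mobius a z = 0 ↔ z = a := by
  rw [mobius, div_eq_zero_iff, or_iff_left (one_sub_conj_mul_ne_zero_of_mem ha hz), sub_eq_zero,
    eq_comm]

lemma mobius_mobius (ha : a ∈ unitDisk) (hz : z ∈ unitDisk) : mobius a (mobius a z) = z := by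
  have hz' := one_sub_conj_mul_ne_zero_of_mem ha hz
  have hmul : mobius a z * (1 - (starRingEnd ℂ) a * z) = a - z := div_mul_cancel₀ _ hz'
  rw [mobius, div_eq_iff (one_sub_conj_mul_ne_zero_of_mem ha (mobius_mem_unitDisk ha hz))]
  refine mul_right_cancel₀ hz' ?_
  linear_combination (-1 + (starRingEnd ℂ) a * z) * hmul

lemma differentiableOn_mobius {s : Set ℂ} (h : ∀ z ∈ s, ‖a‖ * ‖z‖ < 1) :
    DifferentiableOn ℂ (mobius a) s :=
  DifferentiableOn.div (by fun_prop) (by fun_prop) fun z hz => one_sub_conj_mul_ne_zero (h z hz)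

lemma analyticOnClosedDisk_mobius (ha : a ∈ unitDisk) : AnalyticOnClosedDisk (mobius a) := by
  rw [mem_unitDisk] at ha
  have hR : 1 < 2 / (1 + ‖a‖) := by rw [lt_div_iff₀ (by positivity)]; linarith
  refine analyticOnClosedDisk_of_differentiableOn hR (differentiableOn_mobius fun z hz => ?_)
  rw [mem_ball_zero_iff, lt_div_iff₀ (by positivity)] at hz
  nlinarith [norm_nonneg a, norm_nonneg z]

lemma differentiableOn_mobius_unitDisk (ha : a ∈ unitDisk) :
    DifferentiableOn ℂ (mobius a) unitDisk :=
  (analyticOnClosedDisk_mobius ha).differentiableOn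

end Mobius

/-! ### Division of bounded analytic functions -/

lemma norm_le_of_eventually_nhdsNE {F : ℂ → ℂ} {z : ℂ} {C : ℝ} (hF : ContinuousAt F z)
    (h : ∀ᶠ x in 𝓝[≠] z, ‖F x‖ ≤ C) : ‖F z‖ ≤ C :=
  le_of_tendsto (hF.norm.tendsto.mono_left nhdsWithin_le_nhds) h

section Division

variable {U : Set ℂ} {N D : ℂ → ℂ}

lemma eventually_nhdsNE_ne_zero (hU : IsOpen U) (hU' : IsPreconnected U)
    (hD : DifferentiableOn ℂ D U) (hD0 : ∃ z ∈ U, D z ≠ 0) {z : ℂ} (hz : z ∈ U) :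
    ∀ᶠ x in 𝓝[≠] z, D x ≠ 0 := by
  have hDa := hD.analyticOnNhd hU
  refine (hDa z hz).eventually_eq_zero_or_eventually_ne_zero.resolve_left fun h => ?_
  obtain ⟨y, hy, hy0⟩ := hD0
  exact hy0 (hDa.eqOn_zero_of_preconnected_of_eventuallyEq_zero hU' hz h hy)

lemma differentiableOn_limUnder_div (hU : IsOpen U) (hU' : IsPreconnected U)
    (hN : DifferentiableOn ℂ N U) (hD : DifferentiableOn ℂ D U)
    (hle : ∀ z ∈ U, ‖N z‖ ≤ ‖D z‖) (hD0 : ∃ z ∈ U, D z ≠ 0) :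
    DifferentiableOn ℂ (fun z => limUnder (𝓝[≠] z) fun x => N x / D x) U := by
  intro z hz
  obtain ⟨s, hs, hso, hzs⟩ := eventually_nhds_iff.1 <|
    (eventually_nhdsWithin_iff.1 (eventually_nhdsNE_ne_zero hU hU' hD hD0 hz)).and
      (hU.mem_nhds hz)
  have hdiv : ∀ x ∈ U, D x ≠ 0 → DifferentiableAt ℂ (fun x => N x / D x) x := fun x hx h0 =>
    (hN.differentiableAt (hU.mem_nhds hx)).fun_div (hD.differentiableAt (hU.mem_nhds hx)) h0
  have hremovable := Complex.differentiableOn_update_limUnder_of_bddAbove (hso.mem_nhds hzs)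
    (fun x hx => (hdiv x (hs x hx.1).2 ((hs x hx.1).1 hx.2)).differentiableWithinAt)
    ⟨1, by
      rintro _ ⟨x, hx, rfl⟩
      simpa only [Function.comp_apply, norm_div] using
        div_le_one_of_le₀ (hle x (hs x hx.1).2) (norm_nonneg _)⟩
  refine ((hremovable.differentiableAt (hso.mem_nhds hzs)).congr_of_eventuallyEq
    ?_).differentiableWithinAt
  filter_upwards [hso.mem_nhds hzs] with x hx
  by_cases hxz : x = z
  · rw [hxz, Function.update_self]
  · rw [Function.update_of_ne hxz]
    exact ((hdiv x (hs x hx).2 ((hs x hx).1 hxz)).continuousAt.tendsto.mono_left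
      nhdsWithin_le_nhds).limUnder_eq

lemma exists_differentiableOn_eq_div (hU : IsOpen U) (hU' : IsPreconnected U)
    (hN : DifferentiableOn ℂ N U) (hD : DifferentiableOn ℂ D U)
    (hle : ∀ z ∈ U, ‖N z‖ ≤ ‖D z‖) (hD0 : ∃ z ∈ U, D z ≠ 0) :
    ∃ F : ℂ → ℂ, DifferentiableOn ℂ F U ∧ (∀ z ∈ U, ‖F z‖ ≤ 1) ∧
      ∀ z ∈ U, D z ≠ 0 → F z = N z / D z := by
  have hF := differentiableOn_limUnder_div hU hU' hN hD hle hD0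
  have hFdiv : ∀ z ∈ U, D z ≠ 0 → (limUnder (𝓝[≠] z) fun x => N x / D x) = N z / D z :=
    fun z hz h0 => ((hN.differentiableAt (hU.mem_nhds hz)).continuousAt.div
      (hD.differentiableAt (hU.mem_nhds hz)).continuousAt h0 |>.tendsto.mono_left
        nhdsWithin_le_nhds).limUnder_eq
  refine ⟨_, hF, fun z hz => ?_, hFdiv⟩
  refine norm_le_of_eventually_nhdsNE (hF.continuousOn.continuousAt (hU.mem_nhds hz)) ?_
  filter_upwards [eventually_nhdsNE_ne_zero hU hU' hD hD0 hz,
    nhdsWithin_le_nhds (hU.mem_nhds hz)] with x hx hxU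
  rw [hFdiv x hxU hx, norm_div]
  exact div_le_one_of_le₀ (hle x hxU) (norm_nonneg _)

end Division

section Schwarz

variable {F : ℂ → ℂ}

lemma norm_le_norm_mobius (hF : DifferentiableOn ℂ F unitDisk) (hb : ∀ z ∈ unitDisk, ‖F z‖ ≤ 1)
    {s : ℂ} (hs : s ∈ unitDisk) (hFs : F s = 0) {z : ℂ} (hz : z ∈ unitDisk) :
    ‖F z‖ ≤ ‖mobius s z‖ := by
  have hmaps : Set.MapsTo (fun z => F (mobius s z)) (Metric.ball 0 1) (Metric.closedBall 0 1) :=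
    fun w hw => mem_closedBall_zero_iff.2 (hb _ (mobius_mem_unitDisk hs hw))
  have hschwarz := Complex.norm_le_norm_of_mapsTo_ball
    (hF.comp (differentiableOn_mobius_unitDisk hs) fun w hw => mobius_mem_unitDisk hs hw) hmaps
    (by rw [Function.comp_apply, mobius_zero, hFs]) (mem_unitDisk.1 (mobius_mem_unitDisk hs hz))
  rwa [Function.comp_apply, mobius_mobius hs hz] at hschwarz

lemma exists_eq_mobius_mul (hF : DifferentiableOn ℂ F unitDisk)
    (hb : ∀ z ∈ unitDisk, ‖F z‖ ≤ 1) {s : ℂ} (hs : s ∈ unitDisk) (hFs : F s = 0) :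
    ∃ G : ℂ → ℂ, DifferentiableOn ℂ G unitDisk ∧ (∀ z ∈ unitDisk, ‖G z‖ ≤ 1) ∧
      ∀ z ∈ unitDisk, F z = mobius s z * G z := by
  have hhalf : (1 / 2 : ℂ) ∈ unitDisk := by rw [mem_unitDisk]; norm_num
  have hne : ∃ z ∈ unitDisk, mobius s z ≠ 0 :=
    ⟨mobius s (1 / 2), mobius_mem_unitDisk hs hhalf, by rw [mobius_mobius hs hhalf]; norm_num⟩
  obtain ⟨G, hG, hG1, hGdiv⟩ := exists_differentiableOn_eq_div isOpen_unitDisk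
    isPreconnected_unitDisk hF (differentiableOn_mobius_unitDisk hs)
    (fun z hz => norm_le_norm_mobius hF hb hs hFs hz) hne
  refine ⟨G, hG, hG1, fun z hz => ?_⟩
  by_cases hzs : z = s
  · rw [hzs, hFs, mobius_self, zero_mul]
  · have h0 := mt (mobius_eq_zero_iff hs hz).1 hzs
    rw [hGdiv z hz h0, mul_div_cancel₀ _ h0]

lemma exists_eq_prod_mobius_mul (S : Finset ℂ) (hS : ∀ s ∈ S, s ∈ unitDisk)
    (hF : DifferentiableOn ℂ F unitDisk) (hb : ∀ z ∈ unitDisk, ‖F z‖ ≤ 1)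
    (hFS : ∀ s ∈ S, F s = 0) :
    ∃ G : ℂ → ℂ, DifferentiableOn ℂ G unitDisk ∧ (∀ z ∈ unitDisk, ‖G z‖ ≤ 1) ∧
      ∀ z ∈ unitDisk, F z = (∏ s ∈ S, mobius s z) * G z := by
  classical
  induction S using Finset.induction_on generalizing F with
  | empty => exact ⟨F, hF, hb, by simp⟩
  | insert a S ha ih =>
    simp only [Finset.forall_mem_insert] at hS hFS
    obtain ⟨G, hG, hG1, hFG⟩ := exists_eq_mobius_mul hF hb hS.1 hFS.1
    have hGS : ∀ s ∈ S, G s = 0 := fun s hs => by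
      have h0 : mobius a s ≠ 0 :=
        mt (mobius_eq_zero_iff hS.1 (hS.2 s hs)).1 (ne_of_mem_of_not_mem hs ha)
      have hFs := hFS.2 s hs
      rw [hFG s (hS.2 s hs)] at hFs
      exact (mul_eq_zero.1 hFs).resolve_left h0
    obtain ⟨K, hK, hK1, hGK⟩ := ih hS.2 hG hG1 hGS
    refine ⟨K, hK, hK1, fun z hz => ?_⟩
    rw [hFG z hz, hGK z hz, Finset.prod_insert ha, mul_assoc]

end Schwarz

/-! ### The Takenaka–Malmquist basis of the unweighted space -/

section PartialComp

variable {𝕜 H : Type*} [RCLike 𝕜] [NormedAddCommGroup H] [InnerProductSpace 𝕜 H]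
  {M : ℕ → H →ₗᵢ[𝕜] H} {k : ℕ → H}

/-- The compositions `M 0 ∘ M 1 ∘ ⋯ ∘ M (n - 1)` of a sequence of isometries. -/
def partialComp (M : ℕ → H →ₗᵢ[𝕜] H) : ℕ → H →ₗᵢ[𝕜] H
  | 0 => 1
  | n + 1 => partialComp M n * M n

lemma partialComp_succ_apply (M : ℕ → H →ₗᵢ[𝕜] H) (n : ℕ) (x : H) :
    partialComp M (n + 1) x = partialComp M n (M n x) := rfl

lemma antitone_range_partialComp (M : ℕ → H →ₗᵢ[𝕜] H) :
    Antitone fun n => Set.range (partialComp M n) :=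
  antitone_nat_of_succ_le fun n => by
    rintro _ ⟨x, rfl⟩
    exact ⟨M n x, (partialComp_succ_apply M n x).symm⟩

lemma orthonormal_partialComp (hk : ∀ n, ‖k n‖ = 1) (hkM : ∀ n x, inner 𝕜 (k n) (M n x) = 0) :
    Orthonormal 𝕜 fun n => partialComp M n (k n) := by
  have hlt : ∀ i j, i < j → inner 𝕜 (partialComp M i (k i)) (partialComp M j (k j)) = 0 := by
    intro i j hij
    obtain ⟨y, hy⟩ := antitone_range_partialComp M (Nat.succ_le_of_lt hij) ⟨k j, rfl⟩
    rw [← hy, partialComp_succ_apply, LinearIsometry.inner_map_map, hkM]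
  refine ⟨fun n => by rw [LinearIsometry.norm_map, hk], fun i j hij => ?_⟩
  rcases hij.lt_or_gt with h | h
  · exact hlt i j h
  · rw [inner_eq_zero_symm]
    exact hlt j i h

lemma orthogonal_span_partialComp_eq_bot
    (hrange : ∀ n x, inner 𝕜 (k n) x = 0 → x ∈ Set.range (M n))
    (hinter : ∀ x, (∀ n, x ∈ Set.range (partialComp M n)) → x = 0) :
    (Submodule.span 𝕜 (Set.range fun n => partialComp M n (k n)))ᗮ = ⊥ := by
  refine (Submodule.eq_bot_iff _).2 fun x hx => hinter x fun n => ?_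
  induction n with
  | zero => exact ⟨x, rfl⟩
  | succ n ih =>
    obtain ⟨y, rfl⟩ := ih
    have horth := (Submodule.mem_orthogonal _ _).1 hx _ (Submodule.subset_span ⟨n, rfl⟩)
    rw [LinearIsometry.inner_map_map] at horth
    obtain ⟨y', rfl⟩ := hrange n y horth
    exact ⟨y', partialComp_succ_apply M n y'⟩

end PartialComp

section Szego

variable {a z w : ℂ}

/-- The vector representing the reproducing kernel of the unweighted Hardy space. -/
abbrev szegoKernel (ha : a ∈ unitDisk) : H2 := reproducingKernel HardyWeight.one ha

lemma repFun_szegoKernel (ha : a ∈ unitDisk) (hz : z ∈ unitDisk) :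
    repFun (fun _ => 1) (szegoKernel ha) z = (1 - (starRingEnd ℂ) a * z)⁻¹ := by
  have h : ‖(starRingEnd ℂ) a * z‖ < 1 := by
    rw [norm_mul, RCLike.norm_conj]
    exact norm_mul_norm_lt_one ha (mem_unitDisk.1 hz).le
  rw [repFun, ← tsum_geometric_of_norm_lt_one h]
  simp [mul_pow]

lemma norm_szegoKernel_sq (ha : a ∈ unitDisk) : ‖szegoKernel ha‖ ^ 2 = (1 - ‖a‖ ^ 2)⁻¹ := by
  have h := repFun_szegoKernel ha ha
  rw [← inner_reproducingKernel HardyWeight.one ha, inner_self_eq_norm_sq_to_K, mul_comm,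
    Complex.mul_conj, Complex.normSq_eq_norm_sq] at h
  exact Complex.ofReal_injective (by push_cast at h ⊢; exact h)

lemma norm_sqrt_smul_szegoKernel (ha : a ∈ unitDisk) :
    ‖(Real.sqrt (1 - ‖a‖ ^ 2) : ℂ) • szegoKernel ha‖ = 1 := by
  have hpos := one_sub_norm_sq_pos ha
  refine (sq_eq_sq₀ (norm_nonneg _) zero_le_one).1 ?_
  rw [norm_smul, mul_pow, norm_szegoKernel_sq, Complex.norm_of_nonneg (Real.sqrt_nonneg _),
    Real.sq_sqrt hpos.le, mul_inv_cancel₀ hpos.ne', one_pow]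

lemma RepMul.inv {β : ℕ → ℝ} {f : ℂ → ℂ} {S T : H2 →L[ℂ] H2} (hS : RepMul β f S)
    (hST : S * T = 1) (hf : ∀ z ∈ unitDisk, f z ≠ 0) : RepMul β (fun z => (f z)⁻¹) T := by
  intro x z hz
  have h := hS (T x) z hz
  rw [← mul_apply_eq_comp, hST, one_apply_eq_self] at h
  rw [h, inv_mul_cancel_left₀ (hf z hz)]

lemma exists_linearIsometry_repMul_mobius (ha : a ∈ unitDisk) :
    ∃ M : H2 →ₗᵢ[ℂ] H2, RepMul (fun _ => 1) (mobius a) M.toContinuousLinearMap := by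
  obtain ⟨S, hS, hSnorm⟩ := exists_isometry_repMul_id
  have hlt : ‖(starRingEnd ℂ) a • S‖ < 1 := by
    rw [norm_smul, RCLike.norm_conj]
    exact (mul_le_of_le_one_right (norm_nonneg a) (S.opNorm_le_bound zero_le_one fun x => by
      rw [hSnorm, one_mul])).trans_lt (mem_unitDisk.1 ha)
  obtain ⟨U, hU⟩ : IsUnit (1 - (starRingEnd ℂ) a • S) := isUnit_one_sub_of_norm_lt_one hlt
  have hUrep : RepMul (fun _ => 1) (fun z => 1 - (starRingEnd ℂ) a * z) (U : H2 →L[ℂ] H2) := by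
    rw [hU, sub_eq_add_neg, ← neg_smul]
    refine (RepMul.one.add HardyWeight.one (hS.const_smul HardyWeight.one _)).congr fun z _ => ?_
    ring
  let M : H2 →L[ℂ] H2 := (a • 1 + (-1 : ℂ) • S) * ↑U⁻¹
  have hM : RepMul (fun _ => 1) (mobius a) M := by
    have hnum := (RepMul.one.const_smul HardyWeight.one a).add HardyWeight.one
      (hS.const_smul HardyWeight.one (-1))
    refine (hnum.mul (hUrep.inv U.mul_inv fun z hz =>
      one_sub_conj_mul_ne_zero_of_mem ha hz)).congr fun z _ => ?_
    rw [mobius, div_eq_mul_inv]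
    ring
  have hMnorm : ∀ x, ‖M x‖ = ‖x‖ := by
    intro x
    obtain ⟨y, rfl⟩ : ∃ y, (U : H2 →L[ℂ] H2) y = x :=
      ⟨(↑U⁻¹ : H2 →L[ℂ] H2) x, by rw [← mul_apply_eq_comp, U.mul_inv, one_apply_eq_self]⟩
    have hMU : M * U = a • 1 - S := by
      simp only [M, mul_assoc, U.inv_mul, mul_one, neg_smul, one_smul, sub_eq_add_neg]
    rw [← mul_apply_eq_comp, hMU, hU]
    refine (sq_eq_sq₀ (norm_nonneg _) (norm_nonneg _)).1 ?_
    simp only [sub_apply, smul_apply, one_apply_eq_self]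
    rw [@norm_sub_sq ℂ, @norm_sub_sq ℂ, inner_smul_left, inner_smul_right, norm_smul, norm_smul,
      hSnorm, RCLike.norm_conj]
    ring
  exact ⟨{ M.toLinearMap with norm_map' := hMnorm }, hM⟩

lemma conj_mobius_smul_szegoKernel {M : H2 →L[ℂ] H2} (ha : a ∈ unitDisk) (hw : w ∈ unitDisk)
    (hM : RepMul (fun _ => 1) (mobius a) M) :
    (starRingEnd ℂ) (mobius a w) • M (szegoKernel hw) =
      szegoKernel hw - ((1 - a * (starRingEnd ℂ) a) / (1 - (starRingEnd ℂ) w * a)) •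
        szegoKernel ha := by
  refine repFun_injOn HardyWeight.one fun z hz => ?_
  rw [repFun_smul HardyWeight.one hz, repFun_sub HardyWeight.one hz,
    repFun_smul HardyWeight.one hz, hM _ z hz, repFun_szegoKernel hw hz, repFun_szegoKernel ha hz]
  have hz' := one_sub_conj_mul_ne_zero_of_mem ha hz
  have hw' := one_sub_conj_mul_ne_zero_of_mem hw hz
  have ha' := one_sub_conj_mul_ne_zero_of_mem hw ha
  simp only [mobius, map_div₀, map_sub, map_mul, map_one, Complex.conj_conj]
  generalize (starRingEnd ℂ) a = a' at *
  generalize (starRingEnd ℂ) w = w' at *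
  field_simp
  ring

lemma exists_apply_eq_of_repFun_eq_zero {M : H2 →L[ℂ] H2} (ha : a ∈ unitDisk)
    (hM : RepMul (fun _ => 1) (mobius a) M) {x : H2} (hx : repFun (fun _ => 1) x a = 0) :
    ∃ y, M y = x := by
  refine ⟨ContinuousLinearMap.adjoint M x, repFun_injOn HardyWeight.one fun w hw => ?_⟩
  have h := congrArg (fun v => inner ℂ v x) (conj_mobius_smul_szegoKernel ha hw hM)
  simp only [inner_sub_left, inner_smul_left, inner_reproducingKernel, hx, mul_zero, sub_zero,
    Complex.conj_conj] at h
  rw [hM _ w hw, ← inner_reproducingKernel HardyWeight.one hw,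
    ContinuousLinearMap.adjoint_inner_right, h]

end Szego

/-- The Takenaka–Malmquist functions of the points `a`. The unimodular constants `u` absorb the
factor `e^{iθ}` of a Blaschke product. -/
def takenakaMalmquist (a u : ℕ → ℂ) (n : ℕ) (z : ℂ) : ℂ :=
  (Real.sqrt (1 - ‖a n‖ ^ 2) : ℂ) * (1 - (starRingEnd ℂ) (a n) * z)⁻¹ *
    ∏ i ∈ Finset.range n, (u i * mobius (a i) z)

section TakenakaMalmquist

variable {a u : ℕ → ℂ}

lemma repFun_partialComp {β : ℕ → ℝ} {f : ℕ → ℂ → ℂ} {M : ℕ → H2 →ₗᵢ[ℂ] H2}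
    (hM : ∀ n, RepMul β (f n) (M n).toContinuousLinearMap) (n : ℕ) (x : H2) {z : ℂ}
    (hz : z ∈ unitDisk) :
    repFun β (partialComp M n x) z = (∏ i ∈ Finset.range n, f i z) * repFun β x z := by
  induction n generalizing x with
  | zero => simp [partialComp]
  | succ n ih =>
    rw [partialComp_succ_apply, ih, Finset.prod_range_succ, mul_assoc]
    exact congrArg _ (hM n x z hz)

lemma eq_zero_of_forall_mem_range_partialComp {β : ℕ → ℝ} (hβ : HardyWeight β) {f : ℕ → ℂ → ℂ}
    {M : ℕ → H2 →ₗᵢ[ℂ] H2} (hM : ∀ n, RepMul β (f n) (M n).toContinuousLinearMap)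
    (hf : ∀ z ∈ unitDisk, Tendsto (fun n => ∏ i ∈ Finset.range n, f i z) atTop (𝓝 0)) {x : H2}
    (hx : ∀ n, x ∈ Set.range (partialComp M n)) : x = 0 := by
  refine repFun_injOn hβ fun z hz => ?_
  have hbound : ∀ n, ‖repFun β x z‖ ≤ ‖∏ i ∈ Finset.range n, f i z‖ * (‖evalAt hβ hz‖ * ‖x‖) := by
    intro n
    obtain ⟨y, rfl⟩ := hx n
    rw [repFun_partialComp hM n y hz, norm_mul, LinearIsometry.norm_map, ← evalAt_apply hβ hz]
    exact mul_le_mul_of_nonneg_left ((evalAt hβ hz).le_opNorm y) (norm_nonneg _)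
  have hlim := (hf z hz).norm.mul_const (‖evalAt hβ hz‖ * ‖x‖)
  rw [norm_zero, zero_mul] at hlim
  rw [norm_le_zero_iff.1 (ge_of_tendsto' hlim hbound), ← evalAt_apply hβ hz, map_zero]

lemma RepMul.exists_linearIsometry_const_mul {β : ℕ → ℝ} (hβ : HardyWeight β) {f : ℂ → ℂ}
    {N : H2 →ₗᵢ[ℂ] H2} (hN : RepMul β f N.toContinuousLinearMap) {c : ℂ} (hc : ‖c‖ = 1) :
    ∃ M : H2 →ₗᵢ[ℂ] H2, RepMul β (fun z => c * f z) M.toContinuousLinearMap ∧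
      ∀ x, M x = c • N x :=
  ⟨{ c • N.toLinearMap with
      norm_map' := fun x => by
        change ‖c • N x‖ = ‖x‖
        rw [norm_smul, hc, one_mul, LinearIsometry.norm_map] },
    hN.const_smul hβ c, fun _ => rfl⟩

lemma exists_hilbertBasis_takenakaMalmquist (ha : ∀ n, a n ∈ unitDisk) (hu : ∀ n, ‖u n‖ = 1)
    (hlim : ∀ z ∈ unitDisk,
      Tendsto (fun n => ∏ i ∈ Finset.range n, (u i * mobius (a i) z)) atTop (𝓝 0)) :
    ∃ b : HilbertBasis ℕ ℂ H2, ∀ n, ∀ z ∈ unitDisk,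
      repFun (fun _ => 1) (b n) z = takenakaMalmquist a u n z := by
  choose N hN using fun n => exists_linearIsometry_repMul_mobius (ha n)
  have hu0 : ∀ n, u n ≠ 0 := fun n => norm_ne_zero_iff.1 (by rw [hu]; exact one_ne_zero)
  choose M hM hMN using fun n => (hN n).exists_linearIsometry_const_mul HardyWeight.one (hu n)
  have hinner : ∀ n x, inner ℂ ((Real.sqrt (1 - ‖a n‖ ^ 2) : ℂ) • szegoKernel (ha n)) x =
      Real.sqrt (1 - ‖a n‖ ^ 2) * repFun (fun _ => 1) x (a n) := fun n x => by
    rw [inner_smul_left, inner_reproducingKernel, Complex.conj_ofReal]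
  have horth : Orthonormal ℂ fun n =>
      partialComp M n ((Real.sqrt (1 - ‖a n‖ ^ 2) : ℂ) • szegoKernel (ha n)) := by
    refine orthonormal_partialComp (fun n => norm_sqrt_smul_szegoKernel (ha n)) fun n x => ?_
    have h := hM n x (a n) (ha n)
    simp only [mobius_self, mul_zero, zero_mul] at h
    rw [hinner]
    exact mul_eq_zero_of_right _ h
  refine ⟨HilbertBasis.mkOfOrthogonalEqBot horth (orthogonal_span_partialComp_eq_bot
    (fun n x hx => ?_) fun x => eq_zero_of_forall_mem_range_partialComp HardyWeight.one hM hlim),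
    fun n z hz => ?_⟩
  · rw [hinner, mul_eq_zero, or_iff_right (Complex.ofReal_ne_zero.2
      (Real.sqrt_pos.2 (one_sub_norm_sq_pos (ha n))).ne')] at hx
    obtain ⟨y, hy⟩ := exists_apply_eq_of_repFun_eq_zero (ha n) (hN n) hx
    refine ⟨(u n)⁻¹ • y, ?_⟩
    rw [map_smul, hMN, inv_smul_smul₀ (hu0 n)]
    exact hy
  · rw [HilbertBasis.coe_mkOfOrthogonalEqBot, repFun_partialComp hM n _ hz,
      repFun_smul HardyWeight.one hz, repFun_szegoKernel (ha n) hz, takenakaMalmquist, mul_comm]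

end TakenakaMalmquist

/-! ### Conjugation of cone-decaying matrices by slowly varying weights -/

section MatrixBounds

variable {ι 𝕜 : Type*} [RCLike 𝕜]

lemma exists_clm_hasSum_of_norm_le_mul {m : ι → ι → 𝕜} {p q : ι → ℝ} (hp : Summable p)
    (hq : Summable q) (hp0 : ∀ n, 0 ≤ p n) (hq0 : ∀ k, 0 ≤ q k)
    (hm : ∀ n k, ‖m n k‖ ≤ p n * q k) :
    ∃ T : lp (fun _ : ι => 𝕜) 2 →L[𝕜] lp (fun _ : ι => 𝕜) 2,
      ∀ x n, HasSum (fun k => m n k * x k) (T x n) := by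
  have hterm : ∀ (x : lp (fun _ : ι => 𝕜) 2) n k, ‖m n k * x k‖ ≤ p n * ‖x‖ * q k :=
    fun x n k => calc
      ‖m n k * x k‖ ≤ p n * q k * ‖x‖ := by
        rw [norm_mul]
        gcongr
        · exact mul_nonneg (hp0 n) (hq0 k)
        · exact hm n k
        · exact lp.norm_apply_le_norm (by norm_num) x k
      _ = p n * ‖x‖ * q k := by ring
  have hsum : ∀ (x : lp (fun _ : ι => 𝕜) 2) n, Summable fun k => m n k * x k := fun x n =>
    Summable.of_norm_bounded (hq.mul_left (p n * ‖x‖)) (hterm x n)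
  let A : lp (fun _ : ι => 𝕜) 2 →ₗ[𝕜] ι → 𝕜 :=
    { toFun := fun x n => ∑' k, m n k * x k
      map_add' := fun x y => funext fun n => by
        simp only [lp.coeFn_add, Pi.add_apply, mul_add, (hsum x n).tsum_add (hsum y n)]
      map_smul' := fun c x => funext fun n => by
        simp only [lp.coeFn_smul, Pi.smul_apply, smul_eq_mul, mul_left_comm, tsum_mul_left,
          RingHom.id_apply] }
  have hrow : ∀ (x : lp (fun _ : ι => 𝕜) 2) n, ‖A x n‖ ≤ p n * (‖x‖ * ∑' k, q k) := fun x n => by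
    refine (tsum_of_norm_bounded (hq.mul_left (p n * ‖x‖)).hasSum (hterm x n)).trans_eq ?_
    rw [tsum_mul_left, mul_assoc]
  have hQ : 0 ≤ ∑' k, q k := tsum_nonneg hq0
  obtain ⟨T, hT⟩ := exists_clm_apply_of_sum_norm_sq_le A
    (mul_nonneg (tsum_nonneg hp0) hQ) fun x s => calc
      ∑ n ∈ s, ‖A x n‖ ^ 2 ≤ ∑ n ∈ s, (p n * (‖x‖ * ∑' k, q k)) ^ 2 := by
        gcongr with n
        exact hrow x n
      _ ≤ (∑ n ∈ s, p n * (‖x‖ * ∑' k, q k)) ^ 2 :=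
        Finset.sum_sq_le_sq_sum_of_nonneg fun n _ => mul_nonneg (hp0 n) (by positivity)
      _ ≤ ((∑' n, p n) * (‖x‖ * ∑' k, q k)) ^ 2 := by
        rw [← Finset.sum_mul]
        have := Finset.sum_nonneg fun n (_ : n ∈ s) => hp0 n
        gcongr
        exact hp.sum_le_tsum s fun n _ => hp0 n
      _ = ((∑' n, p n) * (∑' k, q k) * ‖x‖) ^ 2 := by ring
  exact ⟨T, fun x n => (hT x n).symm ▸ (hsum x n).hasSum⟩

lemma sum_norm_sq_conj_weight_le [DecidableEq ι] {β : ι → ℝ} (hβ : ∀ k, 0 < β k)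
    (V : lp (fun _ : ι => 𝕜) 2 →L[𝕜] lp (fun _ : ι => 𝕜) 2) {s t : Finset ι} {b C : ℝ}
    (hb : 0 ≤ b) (ht : ∀ n ∈ t, β n ≤ C * b) (hs : ∀ k ∈ s, b ≤ C * β k) (x : ι → 𝕜) :
    ∑ n ∈ t, ‖(β n : 𝕜) * V (∑ k ∈ s, lp.single 2 k (x k / (β k : 𝕜))) n‖ ^ 2 ≤
      (C ^ 2 * ‖V‖) ^ 2 * ∑ k ∈ s, ‖x k‖ ^ 2 := by
  set P : lp (fun _ : ι => 𝕜) 2 := ∑ k ∈ s, lp.single 2 k (x k / (β k : 𝕜))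
  have hnorm : ∀ k, ‖(β k : 𝕜)‖ = β k := fun k => RCLike.norm_of_nonneg (hβ k).le
  have hP : (b * ‖P‖) ^ 2 ≤ C ^ 2 * ∑ k ∈ s, ‖x k‖ ^ 2 := by
    have hP2 : ‖P‖ ^ 2 = ∑ k ∈ s, ‖x k / (β k : 𝕜)‖ ^ 2 := by
      simpa using lp.norm_sum_single (E := fun _ : ι => 𝕜) (p := 2) (by norm_num)
        (fun k => x k / (β k : 𝕜)) s
    rw [mul_pow, hP2, Finset.mul_sum, Finset.mul_sum]
    refine Finset.sum_le_sum fun k hk => ?_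
    rw [norm_div, hnorm, ← mul_pow, ← mul_pow]
    have hk0 := hβ k
    refine pow_le_pow_left₀ (by positivity) ?_ 2
    rw [mul_div_assoc', div_le_iff₀ hk0]
    calc b * ‖x k‖ ≤ C * β k * ‖x k‖ := by gcongr; exact hs k hk
      _ = C * ‖x k‖ * β k := by ring
  calc ∑ n ∈ t, ‖(β n : 𝕜) * V P n‖ ^ 2 ≤ ∑ n ∈ t, (C * b) ^ 2 * ‖V P n‖ ^ 2 := by
        refine Finset.sum_le_sum fun n hn => ?_
        rw [norm_mul, hnorm, mul_pow]
        have := (hβ n).le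
        gcongr
        exact ht n hn
    _ ≤ (C * b) ^ 2 * (‖V‖ * ‖P‖) ^ 2 := by
        rw [← Finset.mul_sum]
        gcongr
        refine (lp_two_sum_norm_sq_le _ _).trans ?_
        gcongr
        exact V.le_opNorm _
    _ = (C * ‖V‖) ^ 2 * (b * ‖P‖) ^ 2 := by ring
    _ ≤ (C * ‖V‖) ^ 2 * (C ^ 2 * ∑ k ∈ s, ‖x k‖ ^ 2) := by gcongr
    _ = (C ^ 2 * ‖V‖) ^ 2 * ∑ k ∈ s, ‖x k‖ ^ 2 := by ring

lemma lp_two_sum_matrix [DecidableEq ι]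
    (V : lp (fun _ : ι => 𝕜) 2 →L[𝕜] lp (fun _ : ι => 𝕜) 2) (s : Finset ι) (c : ι → 𝕜) (n : ι) :
    V (∑ k ∈ s, lp.single 2 k (c k)) n = ∑ k ∈ s, V (lp.single 2 k (1 : 𝕜)) n * c k := by
  simp only [map_sum, lp.coeFn_sum, Finset.sum_apply]
  refine Finset.sum_congr rfl fun k _ => ?_
  rw [← mul_one (c k), ← smul_eq_mul (c k) 1, lp.single_smul, map_smul, lp.coeFn_smul,
    Pi.smul_apply, smul_eq_mul, smul_eq_mul, mul_one, mul_comm]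

end MatrixBounds

section LogBlocks

variable {K n k : ℕ}

/-- The indices whose base-`K` logarithm differs from `j` by at most one. -/
def nearLog (K j : ℕ) : Finset ℕ :=
  {k ∈ Finset.range (K ^ (j + 2)) | j ≤ Nat.log K k + 1}

lemma mem_nearLog (hK : 2 ≤ K) {j : ℕ} :
    k ∈ nearLog K j ↔ Nat.log K k ≤ j + 1 ∧ j ≤ Nat.log K k + 1 := by
  rw [nearLog, Finset.mem_filter, Finset.mem_range]
  exact and_congr_left fun _ =>
    ⟨fun h => Nat.le_of_lt_succ (Nat.log_lt_of_lt_pow' (j + 1).succ_ne_zero h),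
      fun h => Nat.lt_pow_of_log_lt hK (Nat.lt_succ_of_le h)⟩

lemma mul_lt_of_log_add_one_lt (hK : 2 ≤ K) (h : Nat.log K k + 1 < Nat.log K n) : K * k < n := by
  have hn : n ≠ 0 := by rintro rfl; simp at h
  calc K * k < K * K ^ (Nat.log K k + 1) :=
        Nat.mul_lt_mul_of_pos_left (Nat.lt_pow_succ_log_self (by lia) k) (by lia)
    _ = K ^ (Nat.log K k + 2) := (pow_succ' K _).symm
    _ ≤ K ^ Nat.log K n := Nat.pow_le_pow_right (by lia) h
    _ ≤ n := Nat.pow_log_le_self K hn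

lemma le_sq_mul_of_log_le (hK : 2 ≤ K) (h : Nat.log K n ≤ Nat.log K k + 1) :
    n ≤ K ^ 2 * (k + 1) := by
  have hk : K ^ Nat.log K k ≤ k + 1 := by
    rcases eq_or_ne k 0 with rfl | hk
    · simp
    · exact (Nat.pow_log_le_self K hk).trans (by lia)
  calc n ≤ K ^ (Nat.log K n + 1) := (Nat.lt_pow_succ_log_self (by lia) n).le
    _ ≤ K ^ (2 + Nat.log K k) := Nat.pow_le_pow_right (by lia) (by lia)
    _ = K ^ 2 * K ^ Nat.log K k := pow_add K 2 _
    _ ≤ K ^ 2 * (k + 1) := Nat.mul_le_mul_left _ hk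

lemma card_filter_mem_nearLog_le (hK : 2 ≤ K) (t : Finset ℕ) :
    Finset.card {j ∈ t | k ∈ nearLog K j} ≤ 3 := by
  have hsub : {j ∈ t | k ∈ nearLog K j} ⊆ Finset.Icc (Nat.log K k - 1) (Nat.log K k + 1) := by
    intro j hj
    have := (mem_nearLog hK).1 (Finset.mem_filter.1 hj).2
    rw [Finset.mem_Icc]
    lia
  refine (Finset.card_le_card hsub).trans ?_
  rw [Nat.card_Icc]
  lia

lemma sum_sum_nearLog_norm_sq_le (hK : 2 ≤ K) (t : Finset ℕ) (x : H2) :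
    ∑ j ∈ t, ∑ k ∈ nearLog K j, ‖x k‖ ^ 2 ≤ 3 * ‖x‖ ^ 2 := by
  have hcomm : ∀ j k, j ∈ t ∧ k ∈ nearLog K j ↔
      j ∈ {j ∈ t | k ∈ nearLog K j} ∧ k ∈ t.biUnion (nearLog K) := by
    simp only [Finset.mem_filter, Finset.mem_biUnion]
    tauto
  rw [Finset.sum_comm' hcomm]
  calc _ ≤ ∑ k ∈ t.biUnion (nearLog K), 3 * ‖x k‖ ^ 2 := by
        refine Finset.sum_le_sum fun k _ => ?_
        rw [Finset.sum_const, nsmul_eq_mul]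
        gcongr
        exact_mod_cast card_filter_mem_nearLog_le hK t
    _ ≤ 3 * ‖x‖ ^ 2 := by
        rw [← Finset.mul_sum]
        gcongr
        exact lp_two_sum_norm_sq_le x _

end LogBlocks

/-- The matrix `v` decays exponentially outside of a cone around the diagonal. -/
def ConeDecay (v : ℕ → ℕ → ℂ) : Prop :=
  ∃ (K : ℕ) (C θ : ℝ), 2 ≤ K ∧ 0 ≤ C ∧ 0 < θ ∧ θ < 1 ∧
    ∀ n k, (K * k < n ∨ K * n < k) → ‖v n k‖ ≤ C * θ ^ n * θ ^ k

lemma single_apply_eq_mul_inv_smul {β : ℕ → ℝ} (hβ : ∀ k, (β k : ℂ) ≠ 0) (k n : ℕ) :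
    (lp.single 2 k (1 : ℂ) : H2) n = (β n : ℂ) * ((β k : ℂ)⁻¹ • lp.single 2 k (1 : ℂ) : H2) n := by
  rw [lp.coeFn_smul, Pi.smul_apply, smul_eq_mul]
  rcases eq_or_ne n k with rfl | h
  · rw [mul_inv_cancel_left₀ (hβ n)]
  · rw [lp.single_apply_ne 2 k _ h, mul_zero, mul_zero]

section NearDiagonal

variable (β : ℕ → ℝ) (V : H2 →L[ℂ] H2) (K : ℕ)

/-- The conjugate of `V` by the weight, with only the matrix entries kept whose indices have
base-`K` logarithms differing by at most one. -/
def nearDiagonal : H2 →ₗ[ℂ] ℕ → ℂ where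
  toFun x n := ∑ k ∈ nearLog K (Nat.log K n),
    (β n : ℂ) * V (lp.single 2 k (1 : ℂ)) n * (x k / (β k : ℂ))
  map_add' x y := funext fun n => by
    simp only [lp.coeFn_add, Pi.add_apply, add_div, mul_add, Finset.sum_add_distrib]
  map_smul' c x := funext fun n => by
    simp only [lp.coeFn_smul, Pi.smul_apply, smul_eq_mul, mul_div_assoc c, Finset.mul_sum,
      mul_left_comm _ c, RingHom.id_apply]

lemma nearDiagonal_apply (x : H2) (n : ℕ) : nearDiagonal β V K x n =
    (β n : ℂ) * V (∑ k ∈ nearLog K (Nat.log K n), lp.single 2 k (x k / (β k : ℂ))) n := by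
  simp only [lp_two_sum_matrix, Finset.mul_sum, ← mul_assoc]
  rfl

end NearDiagonal

namespace SlowlyVarying

variable {β : ℕ → ℝ} (hβ : SlowlyVarying β)
include hβ

lemma exists_clm_near_diagonal (V : H2 →L[ℂ] H2) {K : ℕ} (hK : 2 ≤ K) :
    ∃ T : H2 →L[ℂ] H2, ∀ x n, T x n = nearDiagonal β V K x n := by
  obtain ⟨C, hC⟩ := hβ.exists_le_mul (K ^ 2)
  have hcmp : ∀ n k, Nat.log K n ≤ Nat.log K k + 1 → Nat.log K k ≤ Nat.log K n + 1 →
      β n ≤ C * β k := fun n k hnk hkn =>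
    hC n k (le_sq_mul_of_log_le hK hnk) (le_sq_mul_of_log_le hK hkn)
  have hblock : ∀ (x : H2) (s : Finset ℕ) (j : ℕ),
      ∑ n ∈ s with Nat.log K n = j, ‖nearDiagonal β V K x n‖ ^ 2 ≤
        (C ^ 2 * ‖V‖) ^ 2 * ∑ k ∈ nearLog K j, ‖x k‖ ^ 2 := by
    intro x s j
    have hlog : Nat.log K (K ^ j) = j := Nat.log_pow (by lia) j
    refine le_trans (Finset.sum_le_sum fun n hn => ?_) (sum_norm_sq_conj_weight_le hβ.pos V
      (t := {n ∈ s | Nat.log K n = j}) (hβ.pos (K ^ j)).le (fun n hn => ?_) (fun k hk => ?_) x)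
    · rw [nearDiagonal_apply, (Finset.mem_filter.1 hn).2]
      rfl
    · have := (Finset.mem_filter.1 hn).2
      exact hcmp n (K ^ j) (by lia) (by lia)
    · have := (mem_nearLog hK).1 hk
      exact hcmp (K ^ j) k (by lia) (by lia)
  refine exists_clm_apply_of_sum_norm_sq_le (nearDiagonal β V K)
    (C := 2 * (C ^ 2 * ‖V‖)) (by positivity) fun x s => ?_
  rw [← Finset.sum_fiberwise_of_maps_to (t := s.image (Nat.log K)) (g := Nat.log K)
    fun n hn => Finset.mem_image_of_mem _ hn]
  calc _ ≤ (C ^ 2 * ‖V‖) ^ 2 * ∑ j ∈ s.image (Nat.log K), ∑ k ∈ nearLog K j, ‖x k‖ ^ 2 := by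
        rw [Finset.mul_sum]
        exact Finset.sum_le_sum fun j _ => hblock x s j
    _ ≤ (C ^ 2 * ‖V‖) ^ 2 * (4 * ‖x‖ ^ 2) := by
        gcongr
        exact (sum_sum_nearLog_norm_sq_le hK _ x).trans (by gcongr; norm_num)
    _ = (2 * (C ^ 2 * ‖V‖) * ‖x‖) ^ 2 := by ring

lemma exists_clm_far_from_diagonal {v : ℕ → ℕ → ℂ} {K : ℕ} {C θ : ℝ} (hK : 2 ≤ K) (hC : 0 ≤ C)
    (hθ : 0 < θ) (hθ1 : θ < 1)
    (hv : ∀ n k, (K * k < n ∨ K * n < k) → ‖v n k‖ ≤ C * θ ^ n * θ ^ k) :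
    ∃ T : H2 →L[ℂ] H2, ∀ x n, HasSum (fun k =>
      (if k ∈ nearLog K (Nat.log K n) then 0 else (β n : ℂ) * v n k / (β k : ℂ)) * x k)
        (T x n) := by
  have hW := hβ.hardyWeight
  have hp : ∀ n, 0 ≤ C * (θ ^ n * β n) := fun n =>
    mul_nonneg hC (mul_nonneg (pow_nonneg hθ.le _) (hβ.pos n).le)
  have hq : ∀ k, 0 ≤ θ ^ k / β k := fun k => div_nonneg (pow_nonneg hθ.le _) (hβ.pos k).le
  refine exists_clm_hasSum_of_norm_le_mul ((hW.summable_pow_mul θ hθ.le hθ1).mul_left C)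
    (hW.summable_pow_div θ hθ.le hθ1) hp hq fun n k => ?_
  split_ifs with h
  · rw [norm_zero]
    exact mul_nonneg (hp n) (hq k)
  · rw [mem_nearLog hK, not_and_or, not_le, not_le] at h
    have hfar := hv n k (h.symm.imp (mul_lt_of_log_add_one_lt hK) (mul_lt_of_log_add_one_lt hK))
    have hk := hβ.pos k
    have hn := hβ.pos n
    rw [norm_div, norm_mul, hW.norm_ofReal, hW.norm_ofReal, mul_div_assoc']
    refine div_le_div_of_nonneg_right ?_ hk.le
    calc β n * ‖v n k‖ ≤ β n * (C * θ ^ n * θ ^ k) := by gcongr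
      _ = C * (θ ^ n * β n) * θ ^ k := by ring

/-- In the conclusion, `x ↦ y` is the unbounded operator of division by the weight, so `T` is the
bounded extension of the conjugate of `V` by it. -/
lemma exists_clm_conj_of_coneDecay (V : H2 →L[ℂ] H2)
    (hV : ConeDecay fun n k => V (lp.single 2 k (1 : ℂ)) n) :
    ∃ T : H2 →L[ℂ] H2, ∀ x y : H2, (∀ k, x k = (β k : ℂ) * y k) →
      ∀ n, T x n = (β n : ℂ) * V y n := by
  obtain ⟨K, C, θ, hK, hC, hθ, hθ1, hv⟩ := hV
  obtain ⟨T₁, hT₁⟩ := hβ.exists_clm_near_diagonal V hK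
  obtain ⟨T₂, hT₂⟩ := hβ.exists_clm_far_from_diagonal hK hC hθ hθ1 hv
  refine ⟨T₁ + T₂, fun x y hxy n => ?_⟩
  have hβ0 := hβ.hardyWeight.ofReal_ne_zero
  have hnear : HasSum (fun k => if k ∈ nearLog K (Nat.log K n) then
      (β n : ℂ) * V (lp.single 2 k (1 : ℂ)) n * y k else 0) (T₁ x n) := by
    rw [hT₁, nearDiagonal, LinearMap.coe_mk, AddHom.coe_mk,
      Finset.sum_congr rfl fun k hk => show _ = if k ∈ nearLog K (Nat.log K n) then
          (β n : ℂ) * V (lp.single 2 k (1 : ℂ)) n * y k else 0 by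
        rw [if_pos hk, hxy, mul_div_cancel_left₀ _ (hβ0 k)]]
    exact hasSum_sum_of_ne_finset_zero fun k hk => if_neg hk
  refine (hnear.add (hT₂ x n)).unique
    (((lp_two_hasSum_matrix V y n).mul_left (β n : ℂ)).congr_fun fun k => ?_)
  split_ifs
  · ring
  · rw [hxy k, zero_add, div_mul_eq_mul_div, mul_left_comm, mul_div_cancel_left₀ _ (hβ0 k),
      mul_assoc]

lemma exists_clequiv_conj_of_coneDecay (V : H2 ≃L[ℂ] H2)
    (hV : ConeDecay fun n k => V (lp.single 2 k (1 : ℂ)) n)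
    (hV' : ConeDecay fun n k => V.symm (lp.single 2 k (1 : ℂ)) n) :
    ∃ W : H2 ≃L[ℂ] H2, ∀ k n, W (lp.single 2 k (1 : ℂ)) n =
      (β n : ℂ) * ((β k : ℂ)⁻¹ * V (lp.single 2 k (1 : ℂ)) n) := by
  obtain ⟨W, hW⟩ := hβ.exists_clm_conj_of_coneDecay (V : H2 →L[ℂ] H2) hV
  obtain ⟨W', hW'⟩ := hβ.exists_clm_conj_of_coneDecay (V.symm : H2 →L[ℂ] H2) hV'
  have hsingle := single_apply_eq_mul_inv_smul hβ.hardyWeight.ofReal_ne_zero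
  have hWW' : W.comp W' = ContinuousLinearMap.id ℂ H2 := lp_two_clm_ext fun k => by
    ext n
    refine (hW _ _ (hW' _ _ (hsingle k)) n).trans ?_
    rw [ContinuousLinearEquiv.coe_coe, ContinuousLinearEquiv.coe_coe, V.apply_symm_apply,
      ← hsingle, ContinuousLinearMap.id_apply]
  have hW'W : W'.comp W = ContinuousLinearMap.id ℂ H2 := lp_two_clm_ext fun k => by
    ext n
    refine (hW' _ _ (hW _ _ (hsingle k)) n).trans ?_
    rw [ContinuousLinearEquiv.coe_coe, ContinuousLinearEquiv.coe_coe, V.symm_apply_apply,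
      ← hsingle, ContinuousLinearMap.id_apply]
  refine ⟨ContinuousLinearEquiv.equivOfInverse W W' (DFunLike.congr_fun hW'W)
    (DFunLike.congr_fun hWW'), fun k n => ?_⟩
  refine (hW _ _ (hsingle k) n).trans ?_
  rw [map_smul]
  rfl

end SlowlyVarying

/-! ### Multiplication by a function of a Blaschke product -/

lemma exists_pow_mul_pow_le {A r : ℝ} (hA : 0 < A) (hr : 0 ≤ r) (hr1 : r < 1) :
    ∃ (K : ℕ) (θ : ℝ), 2 ≤ K ∧ 0 < θ ∧ θ < 1 ∧
      ∀ n k : ℕ, K * k < n → A ^ k * r ^ n ≤ θ ^ n * θ ^ k := by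
  obtain ⟨θ, hθ0, hθ1, hrθ⟩ : ∃ θ : ℝ, 0 < θ ∧ θ < 1 ∧ r ≤ θ ^ 3 := by
    refine ⟨(2 + r) / 3, by positivity, by linarith, ?_⟩
    have := one_add_mul_le_pow (a := (r - 1) / 3) (by linarith) 3
    calc r = 1 + (3 : ℕ) * ((r - 1) / 3) := by push_cast; ring
      _ ≤ (1 + (r - 1) / 3) ^ 3 := this
      _ = ((2 + r) / 3) ^ 3 := by ring
  obtain ⟨K, hK⟩ := exists_pow_lt_of_lt_one (inv_pos.2 hA) hθ1
  refine ⟨K + 2, θ, by lia, hθ0, hθ1, fun n k hn => ?_⟩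
  have hnk : θ ^ n ≤ θ ^ k := pow_le_pow_of_le_one hθ0.le hθ1.le (by nlinarith)
  have hAn : A ^ k * θ ^ n ≤ 1 := calc
    A ^ k * θ ^ n ≤ A ^ k * (θ ^ K) ^ k := by
      rw [← pow_mul]
      gcongr A ^ k * ?_
      exact pow_le_pow_of_le_one hθ0.le hθ1.le (by nlinarith)
    _ ≤ A ^ k * A⁻¹ ^ k := by gcongr
    _ = 1 := by rw [← mul_pow, mul_inv_cancel₀ hA.ne', one_pow]
  calc A ^ k * r ^ n ≤ A ^ k * (θ ^ 3) ^ n := by gcongr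
    _ = (A ^ k * θ ^ n) * (θ ^ n * θ ^ n) := by ring
    _ ≤ 1 * (θ ^ n * θ ^ k) := by gcongr
    _ = θ ^ n * θ ^ k := one_mul _

lemma coneDecay_of_norm_le {v : ℕ → ℕ → ℂ} {C₁ A₁ r₁ C₂ A₂ r₂ : ℝ} (hA₁ : 0 < A₁) (hr₁ : 0 ≤ r₁)
    (hr₁' : r₁ < 1) (hA₂ : 0 < A₂) (hr₂ : 0 ≤ r₂) (hr₂' : r₂ < 1)
    (h₁ : ∀ n k, ‖v n k‖ ≤ C₁ * (A₁ ^ k * r₁ ^ n))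
    (h₂ : ∀ n k, ‖v n k‖ ≤ C₂ * (A₂ ^ n * r₂ ^ k)) : ConeDecay v := by
  obtain ⟨K₁, θ₁, hK₁, hθ₁, hθ₁', hcone₁⟩ := exists_pow_mul_pow_le hA₁ hr₁ hr₁'
  obtain ⟨K₂, θ₂, -, hθ₂, hθ₂', hcone₂⟩ := exists_pow_mul_pow_le hA₂ hr₂ hr₂'
  have hC : ∀ {C x y : ℝ}, 0 ≤ x → C ≤ |C₁| + |C₂| → x ≤ y → C * x ≤ (|C₁| + |C₂|) * y :=
    fun hx hC hxy => mul_le_mul hC hxy hx (by positivity)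
  refine ⟨K₁ + K₂, |C₁| + |C₂|, max θ₁ θ₂, by lia, by positivity, lt_max_of_lt_left hθ₁,
    max_lt hθ₁' hθ₂', ?_⟩
  rintro n k (h | h)
  · calc ‖v n k‖ ≤ C₁ * (A₁ ^ k * r₁ ^ n) := h₁ n k
      _ ≤ (|C₁| + |C₂|) * (θ₁ ^ n * θ₁ ^ k) :=
        hC (by positivity) (by linarith [le_abs_self C₁, abs_nonneg C₂]) (hcone₁ n k (by nlinarith))
      _ ≤ (|C₁| + |C₂|) * (max θ₁ θ₂ ^ n * max θ₁ θ₂ ^ k) := by gcongr <;> exact le_max_left _ _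
      _ = (|C₁| + |C₂|) * max θ₁ θ₂ ^ n * max θ₁ θ₂ ^ k := by ring
  · calc ‖v n k‖ ≤ C₂ * (A₂ ^ n * r₂ ^ k) := h₂ n k
      _ ≤ (|C₁| + |C₂|) * (θ₂ ^ k * θ₂ ^ n) :=
        hC (by positivity) (by linarith [le_abs_self C₂, abs_nonneg C₁]) (hcone₂ k n (by nlinarith))
      _ ≤ (|C₁| + |C₂|) * (max θ₁ θ₂ ^ k * max θ₁ θ₂ ^ n) := by gcongr <;> exact le_max_right _ _
      _ = (|C₁| + |C₂|) * max θ₁ θ₂ ^ n * max θ₁ θ₂ ^ k := by ring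

lemma ConeDecay.conj_transpose {v : ℕ → ℕ → ℂ} (h : ConeDecay v) :
    ConeDecay fun n k => (starRingEnd ℂ) (v k n) := by
  obtain ⟨K, C, θ, hK, hC, hθ, hθ1, h⟩ := h
  refine ⟨K, C, θ, hK, hC, hθ, hθ1, fun n k hnk => ?_⟩
  rw [RCLike.norm_conj, mul_right_comm]
  exact h k n hnk.symm

lemma one_sub_mul_le_norm_one_sub_conj_mul {a z : ℂ} {ρ R : ℝ} (ha : ‖a‖ ≤ ρ) (hz : ‖z‖ ≤ R) :
    1 - ρ * R ≤ ‖1 - (starRingEnd ℂ) a * z‖ := by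
  have hsub := norm_sub_norm_le (1 : ℂ) ((starRingEnd ℂ) a * z)
  rw [norm_one, norm_mul, RCLike.norm_conj] at hsub
  have := mul_le_mul ha hz (norm_nonneg _) ((norm_nonneg _).trans ha)
  linarith

lemma exists_norm_mobius_le {ρ r : ℝ} (hρ : ρ < 1) (hr : r < 1) :
    ∃ μ : ℝ, 0 ≤ μ ∧ μ < 1 ∧ ∀ a z : ℂ, ‖a‖ ≤ ρ → ‖z‖ ≤ r → ‖mobius a z‖ ≤ μ := by
  set S : Set (ℂ × ℂ) := Metric.closedBall 0 ρ ×ˢ Metric.closedBall 0 r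
  have hS : ∀ p ∈ S, p.1 ∈ unitDisk ∧ p.2 ∈ unitDisk := fun p hp =>
    ⟨Metric.closedBall_subset_ball hρ hp.1, Metric.closedBall_subset_ball hr hp.2⟩
  have hcont : ContinuousOn (fun p : ℂ × ℂ => ‖mobius p.1 p.2‖) S :=
    (ContinuousOn.div (by fun_prop) (by fun_prop) fun p hp =>
      one_sub_conj_mul_ne_zero_of_mem (hS p hp).1 (hS p hp).2).norm
  rcases S.eq_empty_or_nonempty with hempty | hne
  · refine ⟨0, le_rfl, one_pos, fun a z ha hz => (Set.notMem_empty (a, z) ?_).elim⟩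
    rw [← hempty]
    exact ⟨mem_closedBall_zero_iff.2 ha, mem_closedBall_zero_iff.2 hz⟩
  obtain ⟨p, hp, hmax⟩ :=
    ((isCompact_closedBall _ _).prod (isCompact_closedBall _ _)).exists_isMaxOn hne hcont
  exact ⟨_, norm_nonneg _, mem_unitDisk.1 (mobius_mem_unitDisk (hS p hp).1 (hS p hp).2),
    fun a z ha hz => hmax (a := (a, z))
      ⟨mem_closedBall_zero_iff.2 ha, mem_closedBall_zero_iff.2 hz⟩⟩

section TakenakaMalmquistDecay

variable {a u : ℕ → ℂ}

lemma norm_prod_mul_mobius_le (hu : ∀ n, ‖u n‖ = 1) {A : ℝ} {z : ℂ}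
    (hA : ∀ n, ‖mobius (a n) z‖ ≤ A) (n : ℕ) :
    ‖∏ i ∈ Finset.range n, (u i * mobius (a i) z)‖ ≤ A ^ n := by
  rw [norm_prod]
  refine (Finset.prod_le_prod (fun _ _ => norm_nonneg _) fun i _ => ?_).trans_eq
    (Finset.prod_const A |>.trans (by rw [Finset.card_range]))
  rw [norm_mul, hu, one_mul]
  exact hA i

lemma norm_takenakaMalmquist_le (hu : ∀ n, ‖u n‖ = 1) {A δ : ℝ} (hδ : 0 < δ) {z : ℂ}
    (hden : ∀ n, δ ≤ ‖1 - (starRingEnd ℂ) (a n) * z‖) (hA : ∀ n, ‖mobius (a n) z‖ ≤ A) (n : ℕ) :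
    ‖takenakaMalmquist a u n z‖ ≤ δ⁻¹ * A ^ n := by
  have hsqrt : ‖(Real.sqrt (1 - ‖a n‖ ^ 2) : ℂ)‖ ≤ 1 := by
    rw [Complex.norm_of_nonneg (Real.sqrt_nonneg _)]
    exact Real.sqrt_le_one.2 (by linarith [sq_nonneg ‖a n‖])
  rw [takenakaMalmquist, norm_mul, norm_mul, norm_inv]
  refine mul_le_mul ?_ (norm_prod_mul_mobius_le hu hA n) (norm_nonneg _) (by positivity)
  exact (mul_le_of_le_one_left (by positivity) hsqrt).trans (inv_anti₀ hδ (hden n))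

lemma differentiableOn_takenakaMalmquist {s : Set ℂ} (h : ∀ n, ∀ z ∈ s, ‖a n‖ * ‖z‖ < 1) (n : ℕ) :
    DifferentiableOn ℂ (takenakaMalmquist a u n) s := by
  refine DifferentiableOn.mul (DifferentiableOn.const_mul ?_ _) ?_
  · exact DifferentiableOn.inv (by fun_prop) fun z hz => one_sub_conj_mul_ne_zero (h n z hz)
  · exact DifferentiableOn.fun_finsetProd fun i _ => (differentiableOn_mobius (h i)).const_mul _

lemma coneDecay_taylorCoeff_takenakaMalmquist {ρ : ℝ} (hρ : ρ < 1) (ha : ∀ n, ‖a n‖ ≤ ρ)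
    (hu : ∀ n, ‖u n‖ = 1) :
    ConeDecay fun n k => taylorCoeff (takenakaMalmquist a u k) n := by
  have hρ0 : 0 ≤ ρ := (norm_nonneg (a 0)).trans (ha 0)
  obtain ⟨R, hR, hρR⟩ : ∃ R : ℝ, 1 < R ∧ ρ * R < 1 := by
    refine ⟨2 / (1 + ρ), by rw [lt_div_iff₀ (by linarith)]; linarith, ?_⟩
    rw [mul_div_assoc', div_lt_one (by linarith)]
    linarith
  have hdiff : ∀ {r}, r ≤ R → ∀ k,
      DifferentiableOn ℂ (takenakaMalmquist a u k) (Metric.closedBall 0 r) := fun hr k =>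
    differentiableOn_takenakaMalmquist (fun n z hz => (mul_le_mul (ha n)
      ((mem_closedBall_zero_iff.1 hz).trans hr) (norm_nonneg _) hρ0).trans_lt hρR) k
  obtain ⟨μ, hμ0, hμ1, hμ⟩ := exists_norm_mobius_le hρ one_half_lt_one
  refine coneDecay_of_norm_le (C₁ := (1 - ρ * R)⁻¹) (A₁ := (ρ + R) / (1 - ρ * R)) (r₁ := R⁻¹)
    (C₂ := (1 - ρ * (1 / 2))⁻¹) (A₂ := 2) (r₂ := μ) (div_pos (by linarith) (by linarith))
    (by positivity) (inv_lt_one_of_one_lt₀ hR) two_pos hμ0 hμ1 (fun n k => ?_) fun n k => ?_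
  · refine (norm_taylorCoeff_le (by linarith) (hdiff le_rfl k) (fun z hz =>
      norm_takenakaMalmquist_le hu (A := (ρ + R) / (1 - ρ * R)) (by linarith)
        (fun i => one_sub_mul_le_norm_one_sub_conj_mul (ha i) hz.le) (fun i => ?_) k) n).trans_eq
      (by rw [inv_pow, div_eq_mul_inv, mul_assoc])
    rw [mobius, norm_div]
    refine div_le_div₀ (by linarith) ?_ (by linarith)
      (one_sub_mul_le_norm_one_sub_conj_mul (ha i) hz.le)
    exact (norm_sub_le _ _).trans (by linarith [ha i])
  · refine (norm_taylorCoeff_le one_half_pos (hdiff (by linarith) k) (fun z hz =>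
      norm_takenakaMalmquist_le hu (by linarith)
        (fun i => one_sub_mul_le_norm_one_sub_conj_mul (ha i) hz.le)
        (fun i => hμ _ _ (ha i) hz.le) k) n).trans_eq ?_
    rw [one_div_pow, div_div_eq_mul_div, div_one]
    ring

lemma taylorCoeff_eq_of_repFun_eq {β : ℕ → ℝ} (hβ : HardyWeight β) {x : H2} {f : ℂ → ℂ}
    (h : ∀ z ∈ unitDisk, repFun β x z = f z) (n : ℕ) : taylorCoeff f n = x n / (β n : ℂ) := by
  have hf : HasFPowerSeriesAt f _ 0 :=
    (hasFPowerSeriesOnBall_repFun hβ x).hasFPowerSeriesAt.congr <|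
      Filter.eventually_of_mem (isOpen_unitDisk.mem_nhds zero_mem_unitDisk) h
  have hcoeff := congrFun (FormalMultilinearSeries.ofScalars_series_injective ℂ ℂ
    (hf.analyticAt.hasFPowerSeriesAt.eq_formalMultilinearSeries hf)) n
  rw [← hcoeff, taylorCoeff, div_eq_inv_mul]

lemma SlowlyVarying.exists_clequiv_repFun_takenakaMalmquist {β : ℕ → ℝ} (hβ : SlowlyVarying β)
    {ρ : ℝ} (hρ : ρ < 1) (ha : ∀ n, ‖a n‖ ≤ ρ) (hu : ∀ n, ‖u n‖ = 1) :
    ∃ W : H2 ≃L[ℂ] H2, ∀ k, ∀ z ∈ unitDisk,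
      repFun β (W (lp.single 2 k (1 : ℂ))) z = takenakaMalmquist a u k z / (β k : ℂ) := by
  obtain ⟨b, hb⟩ := exists_hilbertBasis_takenakaMalmquist
    (fun n => mem_unitDisk.2 ((ha n).trans_lt hρ)) hu fun z hz => by
      obtain ⟨μ, hμ0, hμ1, hμ⟩ := exists_norm_mobius_le hρ (mem_unitDisk.1 hz)
      exact squeeze_zero_norm (norm_prod_mul_mobius_le hu fun n => hμ _ _ (ha n) le_rfl)
        (tendsto_pow_atTop_nhds_zero_of_lt_one hμ0 hμ1)
  have hcone : ConeDecay fun n k => b k n := by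
    simpa only [taylorCoeff_eq_of_repFun_eq HardyWeight.one (hb _), Complex.ofReal_one, div_one]
      using coneDecay_taylorCoeff_takenakaMalmquist hρ ha hu
  let V : H2 ≃L[ℂ] H2 := b.repr.symm.toContinuousLinearEquiv
  have hV : ∀ k, V (lp.single 2 k (1 : ℂ)) = b k := b.repr_symm_single
  have hV' : ∀ k n, V.symm (lp.single 2 k (1 : ℂ)) n = (starRingEnd ℂ) (b n k) := fun k n => by
    refine (b.repr_apply_apply (lp.single 2 k (1 : ℂ)) n).trans ?_
    rw [lp.inner_single_right, RCLike.inner_apply, one_mul]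
  obtain ⟨W, hW⟩ := hβ.exists_clequiv_conj_of_coneDecay V (by simpa only [hV] using hcone)
    (by simpa only [hV'] using hcone.conj_transpose)
  refine ⟨W, fun k z hz => ?_⟩
  have hsum := (hasSum_repFun HardyWeight.one hz (b k)).div_const (β k : ℂ)
  rw [hb k z hz] at hsum
  refine (hasSum_repFun hβ.hardyWeight hz _).unique (hsum.congr_fun fun n => ?_)
  rw [hW, hV, mul_div_cancel_left₀ _ (hβ.hardyWeight.ofReal_ne_zero n), Complex.ofReal_one, div_one]
  ring

lemma takenakaMalmquist_add_mul {m : ℕ} (ha : Function.Periodic a m) (hu : Function.Periodic u m)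
    (k l : ℕ) (z : ℂ) : takenakaMalmquist a u (k + l * m) z =
      (∏ i ∈ Finset.range m, (u i * mobius (a i) z)) ^ l * takenakaMalmquist a u k z := by
  have hstep : ∀ k, takenakaMalmquist a u (k + m) z =
      (∏ i ∈ Finset.range m, (u i * mobius (a i) z)) * takenakaMalmquist a u k z := fun k => by
    have ha' : ∀ i, a (m + i) = a i := fun i => add_comm m i ▸ ha i
    have hu' : ∀ i, u (m + i) = u i := fun i => add_comm m i ▸ hu i
    simp only [takenakaMalmquist, add_comm k m, Finset.prod_range_add, ha', hu']
    ring
  induction l with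
  | zero => simp
  | succ l ih => rw [add_one_mul, ← add_assoc, hstep, ih, pow_succ']; ring

end TakenakaMalmquistDecay

namespace IsBlaschke

variable {m : ℕ} {B : ℂ → ℂ}

lemma exists_periodic (hB : IsBlaschke m B) (hm : 0 < m) :
    ∃ (a u : ℕ → ℂ) (ρ : ℝ), ρ < 1 ∧ (∀ n, ‖a n‖ ≤ ρ) ∧ (∀ n, ‖u n‖ = 1) ∧
      Function.Periodic a m ∧ Function.Periodic u m ∧
        ∀ z, ∏ i ∈ Finset.range m, (u i * mobius (a i) z) = B z := by
  obtain ⟨θ, zs, hzs, hBzs⟩ := hB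
  have : Nonempty (Fin m) := ⟨⟨0, hm⟩⟩
  obtain ⟨i, hi⟩ := Finite.exists_max fun j => ‖zs j‖
  refine ⟨fun n => zs ⟨n % m, Nat.mod_lt n hm⟩,
    fun n => if n % m = 0 then Complex.exp (θ * Complex.I) else 1, ‖zs i‖,
    mem_unitDisk.1 (hzs i), fun n => hi _, fun n => ?_, fun n => ?_, fun n => ?_, fun z => ?_⟩
  · dsimp only
    split_ifs
    · exact Complex.norm_exp_ofReal_mul_I θ
    · exact norm_one
  · simp only [Nat.add_mod_right]
  · simp only [Nat.add_mod_right]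
  · rw [hBzs, Finset.prod_mul_distrib, Finset.prod_range, Finset.prod_range]
    congr 1
    · rw [Finset.prod_eq_single ⟨0, hm⟩ (fun i _ hi => ?_) (by simp)]
      · rw [if_pos (Nat.zero_mod m)]
      · rw [if_neg]
        rwa [Nat.mod_eq_of_lt i.2, ← Fin.val_mk hm, ← Fin.ext_iff]
    · simp only [Nat.mod_eq_of_lt (Fin.is_lt _)]

lemma norm_le_one (hB : IsBlaschke m B) {z : ℂ} (hz : z ∈ unitDisk) : ‖B z‖ ≤ 1 := by
  obtain ⟨θ, zs, hzs, hBzs⟩ := hB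
  rw [hBzs, norm_mul, Complex.norm_exp_ofReal_mul_I, one_mul, norm_prod]
  exact Finset.prod_le_one (fun _ _ => norm_nonneg _) fun j _ =>
    (mem_unitDisk.1 (mobius_mem_unitDisk (hzs j) hz)).le

end IsBlaschke

lemma AnalyticOnClosedDisk.summable_taylorCoeff_smul_single {h : ℂ → ℂ}
    (hh : AnalyticOnClosedDisk h) {β : ℕ → ℝ} (hβ : HardyWeight β) {m : ℕ} (hm : 0 < m) (k : ℕ) :
    Summable fun l => (taylorCoeff h l * (β (k + l * m) : ℂ)) •
      (lp.single 2 (k + l * m) (1 : ℂ) : H2) := by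
  obtain ⟨C, r, hr, hr1, hC⟩ := hh.exists_norm_taylorCoeff_le
  obtain ⟨s, hs, hs1, hsr⟩ : ∃ s : ℝ, 0 < s ∧ s < 1 ∧ s ^ m = r :=
    ⟨r ^ (m : ℝ)⁻¹, by positivity, Real.rpow_lt_one hr.le hr1 (by positivity),
      Real.rpow_inv_natCast_pow hr.le hm.ne'⟩
  have hinj : Function.Injective fun l : ℕ => k + l * m := fun x y hxy =>
    Nat.eq_of_mul_eq_mul_right hm (Nat.add_left_cancel hxy)
  refine Summable.of_norm_bounded
    (((hβ.summable_pow_mul s hs.le hs1).comp_injective hinj).mul_left (C / s ^ k)) fun l => ?_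
  have hpos := hβ.pos (k + l * m)
  rw [norm_smul, lp.norm_single (by norm_num), norm_one, mul_one, norm_mul, hβ.norm_ofReal]
  calc ‖taylorCoeff h l‖ * β (k + l * m) ≤ C * r ^ l * β (k + l * m) := by gcongr; exact hC l
    _ = C / s ^ k * (s ^ (k + l * m) * β (k + l * m)) := by
      rw [← hsr, pow_add, ← pow_mul, mul_comm m l]
      field_simp

section Sufficiency

variable {β : ℕ → ℝ} (hβ : SlowlyVarying β) {m : ℕ} (hm : 0 < m) {h : ℂ → ℂ}
  (hh : AnalyticOnClosedDisk h)
include hβ hm hh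

/-- Up to similarity, multiplication by `h ∘ B` depends only on `h` and on the order of `B`. -/
lemma RepMul.exists_clequiv_apply_single {f B : ℂ → ℂ} {T : H2 →L[ℂ] H2} (hT : RepMul β f T)
    (hB : IsBlaschke m B) (hf : ∀ z ∈ unitDisk, f z = h (B z)) :
    ∃ W : H2 ≃L[ℂ] H2, ∀ k, T (W (lp.single 2 k (1 : ℂ))) =
      W ((β k : ℂ)⁻¹ • ∑' l, (taylorCoeff h l * (β (k + l * m) : ℂ)) •
        (lp.single 2 (k + l * m) (1 : ℂ) : H2)) := by
  have hW := hβ.hardyWeight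
  obtain ⟨a, u, ρ, hρ, ha, hu, haper, huper, hprod⟩ := hB.exists_periodic hm
  obtain ⟨W, hWE⟩ := hβ.exists_clequiv_repFun_takenakaMalmquist hρ ha hu
  obtain ⟨R, hR, hhR⟩ := hh.exists_analyticOnNhd_closedBall
  refine ⟨W, fun k => repFun_injOn hW fun z hz => ?_⟩
  have hvector := (hh.summable_taylorCoeff_smul_single hW hm k).hasSum.mapL
    ((evalAt hW hz).comp (W : H2 →L[ℂ] H2))
  have hscalar := (hasSum_taylorCoeff (hhR.differentiableOn.mono Metric.ball_subset_closedBall)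
    ((hB.norm_le_one hz).trans_lt hR)).mul_right (takenakaMalmquist a u k z)
  simp only [ContinuousLinearMap.comp_apply, map_smul, ContinuousLinearEquiv.coe_coe, evalAt_apply,
    hWE _ z hz, takenakaMalmquist_add_mul haper huper, hprod, smul_eq_mul] at hvector
  rw [hT _ z hz, hWE k z hz, map_smul, repFun_smul hW hz, hf z hz,
    hvector.unique (hscalar.congr_fun fun l => ?_)]
  · ring
  · have := hW.ofReal_ne_zero (k + l * m)
    field_simp

lemma exists_clequiv_of_eq_comp_blaschke {f₁ f₂ B₁ B₂ : ℂ → ℂ} {T₁ T₂ : H2 →L[ℂ] H2}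
    (hT₁ : RepMul β f₁ T₁) (hT₂ : RepMul β f₂ T₂) (hB₁ : IsBlaschke m B₁) (hB₂ : IsBlaschke m B₂)
    (hf₁ : ∀ z ∈ unitDisk, f₁ z = h (B₁ z)) (hf₂ : ∀ z ∈ unitDisk, f₂ z = h (B₂ z)) :
    ∃ X : H2 ≃L[ℂ] H2, ∀ a : H2, X (T₁ a) = T₂ (X a) := by
  obtain ⟨W₁, hW₁⟩ := hT₁.exists_clequiv_apply_single hβ hm hh hB₁ hf₁
  obtain ⟨W₂, hW₂⟩ := hT₂.exists_clequiv_apply_single hβ hm hh hB₂ hf₂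
  have hcomp : ((W₂ : H2 →L[ℂ] H2).comp (W₁.symm : H2 →L[ℂ] H2)).comp
      (T₁.comp (W₁ : H2 →L[ℂ] H2)) = T₂.comp (W₂ : H2 →L[ℂ] H2) := lp_two_clm_ext fun k => by
    simp only [ContinuousLinearMap.comp_apply, ContinuousLinearEquiv.coe_coe, hW₁, hW₂,
      W₁.symm_apply_apply]
  refine ⟨W₁.symm.trans W₂, fun a => ?_⟩
  simpa using DFunLike.congr_fun hcomp (W₁.symm a)

end Sufficiency

/-! ### Generic values of analytic functions -/

namespace AnalyticOnClosedDisk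

variable {f p : ℂ → ℂ}

lemma finite_zeros (hf : AnalyticOnClosedDisk f) (h : ∃ z ∈ Metric.closedBall (0 : ℂ) 1, f z ≠ 0) :
    {z ∈ Metric.closedBall (0 : ℂ) 1 | f z = 0}.Finite := by
  by_contra hinf
  obtain ⟨x, hx, hacc⟩ := Set.Infinite.exists_accPt_of_subset_isCompact hinf
    (isCompact_closedBall (0 : ℂ) 1) fun z hz => hz.1
  obtain ⟨z, hz, hfz⟩ := h
  have hfreq : ∃ᶠ z in 𝓝[≠] x, f z = 0 :=
    (accPt_iff_frequently_nhdsNE.1 hacc).mono fun z hz => hz.2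
  exact hfz (AnalyticOnNhd.eqOn_zero_of_preconnected_of_frequently_eq_zero
    (analyticOnClosedDisk_iff.1 hf) (convex_closedBall (0 : ℂ) 1).isPreconnected hx hfreq hz)

lemma exists_eq_mul_of_simple_zeros (hf : AnalyticOnClosedDisk f) (hp : AnalyticOnClosedDisk p)
    (h : ∀ z ∈ Metric.closedBall (0 : ℂ) 1, f z = 0 → deriv f z ≠ 0 ∧ p z = 0) :
    ∃ v, AnalyticOnClosedDisk v ∧ ∀ z ∈ Metric.closedBall (0 : ℂ) 1, p z = f z * v z := by
  rw [analyticOnClosedDisk_iff] at hf hp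
  let v : ℂ → ℂ := fun z => if f z = 0 then deriv p z / deriv f z else p z / f z
  refine ⟨v, analyticOnClosedDisk_iff.2 fun z hz => ?_, fun z hz => ?_⟩
  · by_cases hfz : f z = 0
    · obtain ⟨hdf, hpz⟩ := h z hz hfz
      have hslope : ∀ {g : ℂ → ℂ}, AnalyticAt ℂ g z → AnalyticAt ℂ (dslope g z) z :=
        fun ⟨_, hq⟩ => ⟨_, hq.has_fpower_series_dslope_fslope⟩
      have hquot : AnalyticAt ℂ (fun x => dslope p z x / dslope f z x) z :=
        (hslope (hp z hz)).div (hslope (hf z hz)) (by rwa [dslope_same])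
      have hne := eventually_nhdsWithin_iff.1
        ((hf z hz).differentiableAt.hasDerivAt.eventually_ne (c := 0) hdf)
      refine hquot.congr ?_
      filter_upwards [hne] with x hfx
      by_cases hxz : x = z
      · simp only [v, hxz, dslope_same, if_pos hfz]
      · simp only [v, if_neg (hfx hxz), dslope_of_ne _ hxz, slope_def_field, hpz, hfz, sub_zero,
          div_div_div_cancel_right₀ (sub_ne_zero.2 hxz)]
    · refine ((hp z hz).div (hf z hz) hfz).congr ?_
      filter_upwards [(hf z hz).continuousAt.eventually_ne hfz] with x hfx
      simp only [v, if_neg hfx, Pi.div_apply]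
  · by_cases hfz : f z = 0
    · rw [hfz, zero_mul, (h z hz hfz).2]
    · simp only [v, if_neg hfz, mul_div_cancel₀ _ hfz]

end AnalyticOnClosedDisk

open MeasureTheory in
lemma ae_ne_zero_of_eq {f u : ℂ → ℂ} {U : Set ℂ} (hU : IsOpen U) (hU' : IsPreconnected U)
    (hf : DifferentiableOn ℂ f U) (hu : DifferentiableOn ℂ u U) (hu0 : ∃ z ∈ U, u z ≠ 0) :
    ∀ᵐ w, ∀ z ∈ U, f z = w → u z ≠ 0 := by
  have hnull : volume {z ∈ U | u z = 0} = 0 := measure_null_of_locally_null _ fun x hx => by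
    refine ⟨{x}, ?_, measure_singleton x⟩
    have hne := eventually_nhdsWithin_iff.1 (eventually_nhdsNE_ne_zero hU hU' hu hu0 hx.1)
    refine mem_nhdsWithin_iff_eventually.2 (hne.mono fun z hz hz0 => ?_)
    exact of_not_not fun hzx => hz hzx hz0.2
  have himage := addHaar_image_eq_zero_of_differentiableOn_of_addHaar_eq_zero volume
    ((hf.mono fun z hz => hz.1).restrictScalars ℝ) hnull
  filter_upwards [compl_mem_ae_iff.2 himage] with w hw z hz hzw hz0
  exact hw ⟨z, ⟨hz, hz0⟩, hzw⟩

/-- The values of `f` on the unit circle and at its critical points in the disk. Within the closed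
disk, every other value is taken only at interior points, and there with multiplicity one. -/
def criticalValues (f : ℂ → ℂ) : Set ℂ :=
  f '' Metric.sphere 0 1 ∪ f '' {z ∈ unitDisk | deriv f z = 0}

section CriticalValues

variable {f : ℂ → ℂ} {w z : ℂ}

lemma mem_unitDisk_of_notMem_criticalValues (hw : w ∉ criticalValues f)
    (hz : z ∈ Metric.closedBall (0 : ℂ) 1) (hzw : f z = w) : z ∈ unitDisk :=
  mem_unitDisk.2 <| (mem_closedBall_zero_iff.1 hz).lt_of_ne fun h =>
    hw (Or.inl ⟨z, mem_sphere_zero_iff_norm.2 h, hzw⟩)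

lemma deriv_ne_zero_of_notMem_criticalValues (hw : w ∉ criticalValues f)
    (hz : z ∈ unitDisk) (hzw : f z = w) : deriv f z ≠ 0 :=
  fun h => hw (Or.inr ⟨z, ⟨hz, h⟩, hzw⟩)

lemma AnalyticOnClosedDisk.sub_const (hf : AnalyticOnClosedDisk f) (w : ℂ) :
    AnalyticOnClosedDisk fun z => f z - w :=
  analyticOnClosedDisk_iff.2 fun z hz => (analyticOnClosedDisk_iff.1 hf z hz).sub analyticAt_const

lemma AnalyticOnClosedDisk.finite_fiber (hf : AnalyticOnClosedDisk f) (hw : w ∉ criticalValues f) :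
    {z ∈ unitDisk | f z = w}.Finite := by
  have hne : f 1 - w ≠ 0 := sub_ne_zero.2 fun h => hw (Or.inl ⟨1, by simp, h⟩)
  exact ((hf.sub_const w).finite_zeros ⟨1, by simp, hne⟩).subset fun z hz =>
    ⟨mem_closedBall_of_mem_unitDisk hz.1, sub_eq_zero.2 hz.2⟩

open MeasureTheory in
lemma AnalyticOnClosedDisk.ae_notMem_criticalValues (hf : AnalyticOnClosedDisk f)
    (hconst : ¬ ∃ c, ∀ z ∈ unitDisk, f z = c) : ∀ᵐ w, w ∉ criticalValues f := by
  have hderiv : ∃ z ∈ unitDisk, deriv f z ≠ 0 := by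
    by_contra! h
    exact hconst ((isOpen_unitDisk.exists_is_const_of_deriv_eq_zero isPreconnected_unitDisk
      hf.differentiableOn h))
  have hsphere : volume (f '' Metric.sphere 0 1) = 0 :=
    addHaar_image_eq_zero_of_differentiableOn_of_addHaar_eq_zero volume
      (fun z hz => ((analyticOnClosedDisk_iff.1 hf z
        (Metric.sphere_subset_closedBall hz)).differentiableAt.restrictScalars
          ℝ).differentiableWithinAt) (Measure.addHaar_sphere volume (0 : ℂ) 1)
  filter_upwards [compl_mem_ae_iff.2 hsphere, ae_ne_zero_of_eq isOpen_unitDisk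
    isPreconnected_unitDisk hf.differentiableOn (hf.differentiableOn.deriv isOpen_unitDisk)
    hderiv] with w hw hw'
  rintro (h | ⟨z, ⟨hz, hz0⟩, hzw⟩)
  exacts [hw h, hw' z hz hzw hz0]

end CriticalValues

open MeasureTheory in
lemma subset_closure_of_ae {f : ℂ → ℂ} {U : Set ℂ} (hU : IsOpen U) (hU' : IsPreconnected U)
    (hf : DifferentiableOn ℂ f U) (hconst : ¬ ∃ c, ∀ z ∈ U, f z = c) {P : ℂ → Prop}
    (hP : ∀ᵐ w, P w) : U ⊆ closure {z ∈ U | P (f z)} := by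
  refine fun z hz => mem_closure_iff.2 fun W hW hzW => ?_
  by_contra! hempty
  have hopen := ((hf.analyticOnNhd hU).is_constant_or_isOpen hU').resolve_left hconst
    (W ∩ U) Set.inter_subset_right (hW.inter hU)
  refine (hopen.measure_pos volume ⟨f z, z, ⟨hzW, hz⟩, rfl⟩).ne' ?_
  refine measure_mono_null ?_ hP
  rintro _ ⟨x, ⟨hxW, hxU⟩, rfl⟩ hx
  exact hempty.subset ⟨hxW, hxU, hx⟩

/-! ### Intertwining operators and linked points -/

lemma exists_linearMap_eq_sum_eval {𝕜 : Type*} [Field 𝕜] {K : Polynomial 𝕜 →ₗ[𝕜] 𝕜} {Z : Finset 𝕜}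
    (hK : ∀ p : Polynomial 𝕜, (∀ ζ ∈ Z, p.eval ζ = 0) → K p = 0) :
    ∃ c : 𝕜 → 𝕜, ∀ p, K p = ∑ ζ ∈ Z, c ζ * p.eval ζ := by
  have hker : ⨅ ζ : Z, LinearMap.ker (Polynomial.leval (ζ : 𝕜)) ≤ LinearMap.ker K := fun p hp =>
    hK p (by simpa only [Submodule.mem_iInf, LinearMap.mem_ker, Polynomial.leval_apply,
      Subtype.forall] using hp)
  have hspan : K ∈ Submodule.span 𝕜 (Polynomial.leval '' (Z : Set 𝕜)) := by
    rw [Set.image_eq_range]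
    exact mem_span_of_iInf_ker_le_ker hker
  obtain ⟨c, rfl⟩ := (Submodule.mem_span_image_finset_iff_exists_fun' 𝕜).1 hspan
  exact ⟨c, fun p => by simp⟩

section LinkedPoints

variable {β : ℕ → ℝ} {f₁ f₂ : ℂ → ℂ} {T₁ T₂ T₃ Y : H2 →L[ℂ] H2} {α ζ η : ℂ}

/-- The points of the disk linked to `α` by an operator `Y` with `Y T₁ = T₂ Y`, in the sense that
evaluation at `α` after `Y` is evaluation at that point. For `T₁ = T₂ = M_f` these will be the
points which the Blaschke product in `f = h ∘ B` identifies with `α`. -/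
def linkedPoints (β : ℕ → ℝ) (T₁ T₂ : H2 →L[ℂ] H2) (α : ℂ) : Set ℂ :=
  {ζ ∈ unitDisk | ∃ Y, SemiconjBy Y T₁ T₂ ∧ ∀ a, repFun β (Y a) α = repFun β a ζ}

lemma mem_linkedPoints_self (hα : α ∈ unitDisk) : α ∈ linkedPoints β T₁ T₁ α :=
  ⟨hα, 1, SemiconjBy.one_left _, fun _ => rfl⟩

lemma mem_linkedPoints_trans (hζ : ζ ∈ linkedPoints β T₂ T₃ α) (hη : η ∈ linkedPoints β T₁ T₂ ζ) :
    η ∈ linkedPoints β T₁ T₃ α := by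
  obtain ⟨-, Y, hY, hYζ⟩ := hζ
  obtain ⟨hη, Z, hZ, hZη⟩ := hη
  exact ⟨hη, Y * Z, hY.mul_left hZ, fun a => by rw [mul_apply_eq_comp, hYζ, hZη]⟩

lemma repFun_intertwiner_apply (hY : SemiconjBy Y T₁ T₂) (hT₂ : RepMul β f₂ T₂) (hα : α ∈ unitDisk)
    (a : H2) : repFun β (Y (T₁ a)) α = f₂ α * repFun β (Y a) α := by
  rw [← mul_apply_eq_comp, hY.eq, mul_apply_eq_comp, hT₂ _ α hα]

lemma apply_eq_of_mem_linkedPoints (hβ : HardyWeight β) (hT₁ : RepMul β f₁ T₁)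
    (hT₂ : RepMul β f₂ T₂) (hα : α ∈ unitDisk) (hζ : ζ ∈ linkedPoints β T₁ T₂ α) :
    f₁ ζ = f₂ α := by
  obtain ⟨hζ, Y, hY, hYζ⟩ := hζ
  obtain ⟨e, he⟩ := (analyticOnClosedDisk_eval 1).exists_repFun_eq hβ
  have h := repFun_intertwiner_apply hY hT₂ hα e
  simpa only [hYζ, hT₁ e ζ hζ, he ζ hζ, Polynomial.eval_one, mul_one] using h

lemma mem_linkedPoints_of_coeff_ne_zero (hβ : HardyWeight β) (hT₁ : RepMul β f₁ T₁)
    (hα : α ∈ unitDisk) (hY : SemiconjBy Y T₁ T₂) {Z : Finset ℂ}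
    (hZ : ∀ ζ ∈ Z, ζ ∈ unitDisk) {c : ℂ → ℂ}
    (hc : ∀ a, repFun β (Y a) α = ∑ ζ ∈ Z, c ζ * repFun β a ζ) (hζ : ζ ∈ Z) (hcζ : c ζ ≠ 0) :
    ζ ∈ linkedPoints β T₁ T₂ α := by
  obtain ⟨S, hS⟩ := exists_repMul_id hβ
  let L := Lagrange.basis Z id ζ
  have hL : RepMul β (fun z => L.eval z) (Polynomial.aeval S L) := hS.aeval hβ L
  have hLa : ∀ a, ∀ η ∈ Z, repFun β (Polynomial.aeval S L a) η = L.eval η * repFun β a η :=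
    fun a η hη => hL a η (hZ η hη)
  have hLζ : L.eval ζ = 1 := Lagrange.eval_basis_self (v := id) Function.injective_id.injOn hζ
  have hLne : ∀ η ∈ Z, η ≠ ζ → L.eval η = 0 := fun η hη hne =>
    Lagrange.eval_basis_of_ne (v := id) hne.symm hη
  have hLT : Commute (Polynomial.aeval S L) T₁ := hL.commute hβ hT₁
  refine ⟨hZ ζ hζ, (c ζ)⁻¹ • (Y * Polynomial.aeval S L), ?_, fun a => ?_⟩
  · exact (hY.mul_left hLT).smul_left _
  · rw [smul_apply, repFun_smul hβ hα, mul_apply_eq_comp, hc, Finset.sum_eq_single_of_mem ζ hζ,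
      hLa a ζ hζ, hLζ, one_mul, inv_mul_cancel_left₀ hcζ]
    intro η hη hne
    rw [hLa a η hη, hLne η hη hne, zero_mul, mul_zero]

section Generic

variable (hβ : HardyWeight β) (hf₁ : AnalyticOnClosedDisk f₁) (hT₁ : RepMul β f₁ T₁)
  (hT₂ : RepMul β f₂ T₂) (hα : α ∈ unitDisk) (hcrit : f₂ α ∉ criticalValues f₁)

include hβ hf₁ hT₁ hT₂ hα hcrit

/-- The point is that `a` lies in the range of `T₁ - f₂ α`, which `Y` maps into that of
`T₂ - f₂ α`. -/
lemma repFun_apply_eq_zero_of_vanishing (hY : SemiconjBy Y T₁ T₂) {a : H2} {p : ℂ → ℂ}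
    (hp : AnalyticOnClosedDisk p) (hap : ∀ z ∈ unitDisk, repFun β a z = p z)
    (hp0 : ∀ z ∈ unitDisk, f₁ z = f₂ α → p z = 0) : repFun β (Y a) α = 0 := by
  obtain ⟨v, hv, hpv⟩ := (hf₁.sub_const (f₂ α)).exists_eq_mul_of_simple_zeros hp fun z hz hz0 => by
    have hfz := sub_eq_zero.1 hz0
    have hzD := mem_unitDisk_of_notMem_criticalValues hcrit hz hfz
    rw [deriv_sub_const]
    exact ⟨deriv_ne_zero_of_notMem_criticalValues hcrit hzD hfz, hp0 z hzD hfz⟩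
  obtain ⟨b, hb⟩ := hv.exists_repFun_eq hβ
  have hab : a = T₁ b - f₂ α • b := repFun_injOn hβ fun z hz => by
    rw [repFun_sub hβ hz, repFun_smul hβ hz, hT₁ b z hz, hb z hz, hap z hz,
      hpv z (mem_closedBall_of_mem_unitDisk hz), sub_mul]
  rw [hab, map_sub, map_smul, repFun_sub hβ hα, repFun_smul hβ hα,
    repFun_intertwiner_apply hY hT₂ hα, sub_self]

lemma exists_eq_sum_of_fiber (hY : SemiconjBy Y T₁ T₂) {Z : Finset ℂ}
    (hZ : ∀ ζ, ζ ∈ Z ↔ ζ ∈ unitDisk ∧ f₁ ζ = f₂ α) :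
    ∃ c : ℂ → ℂ, ∀ a, repFun β (Y a) α = ∑ ζ ∈ Z, c ζ * repFun β a ζ := by
  obtain ⟨S, hS⟩ := exists_repMul_id hβ
  obtain ⟨e, he⟩ := (analyticOnClosedDisk_eval 1).exists_repFun_eq hβ
  have hrep : ∀ p : Polynomial ℂ, ∀ z ∈ unitDisk, repFun β (Polynomial.aeval S p e) z = p.eval z :=
    fun p z hz => by rw [hS.aeval hβ p e z hz, he z hz, Polynomial.eval_one, mul_one]
  let K : Polynomial ℂ →ₗ[ℂ] ℂ :=
    { toFun := fun p => repFun β (Y (Polynomial.aeval S p e)) α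
      map_add' := fun p q => by rw [map_add, add_apply, map_add, repFun_add hβ hα]
      map_smul' := fun c p => by rw [map_smul, smul_apply, map_smul, repFun_smul hβ hα]; rfl }
  obtain ⟨c, hc⟩ := exists_linearMap_eq_sum_eval (K := K) (Z := Z) fun p hp =>
    repFun_apply_eq_zero_of_vanishing hβ hf₁ hT₁ hT₂ hα hcrit hY (analyticOnClosedDisk_eval p)
      (hrep p) fun z hz hfz => hp z ((hZ z).2 ⟨hz, hfz⟩)
  refine ⟨c, fun a => ?_⟩
  have hsingle : ∀ k, repFun β (Y (lp.single 2 k (1 : ℂ))) α =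
      ∑ ζ ∈ Z, c ζ * ((β k : ℂ)⁻¹ * ζ ^ k) := fun k => by
    have hk : lp.single 2 k (1 : ℂ) =
        Polynomial.aeval S (Polynomial.monomial k (β k : ℂ)⁻¹) e := repFun_injOn hβ fun z hz => by
      rw [hrep _ z hz, repFun_single, Polynomial.eval_monomial]
    rw [hk]
    exact (hc _).trans (by simp only [Polynomial.eval_monomial])
  have hleft := lp_two_hasSum_smul_map_single ((evalAt hβ hα).comp Y) a
  simp only [ContinuousLinearMap.comp_apply, evalAt_apply, hsingle] at hleft
  refine hleft.unique ?_
  refine (hasSum_sum fun ζ hζ =>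
    (hasSum_repFun hβ ((hZ ζ).1 hζ).1 a).mul_left (c ζ)).congr_fun fun k => ?_
  rw [smul_eq_mul, Finset.mul_sum]
  exact Finset.sum_congr rfl fun ζ _ => by ring

lemma finite_linkedPoints : (linkedPoints β T₁ T₂ α).Finite :=
  (hf₁.finite_fiber hcrit).subset fun _ hζ =>
    ⟨hζ.1, apply_eq_of_mem_linkedPoints hβ hT₁ hT₂ hα hζ⟩

lemma exists_eq_sum_of_linkedPoints (hY : SemiconjBy Y T₁ T₂) {S : Finset ℂ}
    (hS : (S : Set ℂ) = linkedPoints β T₁ T₂ α) :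
    ∃ c : ℂ → ℂ, ∀ a, repFun β (Y a) α = ∑ ζ ∈ S, c ζ * repFun β a ζ := by
  have hfib := hf₁.finite_fiber hcrit
  have hZ : ∀ ζ, ζ ∈ hfib.toFinset ↔ ζ ∈ unitDisk ∧ f₁ ζ = f₂ α := fun ζ => hfib.mem_toFinset
  obtain ⟨c, hc⟩ := exists_eq_sum_of_fiber hβ hf₁ hT₁ hT₂ hα hcrit hY hZ
  have hsub : S ⊆ hfib.toFinset := fun ζ hζ => by
    have hζ : ζ ∈ linkedPoints β T₁ T₂ α := hS ▸ Finset.mem_coe.2 hζ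
    exact (hZ ζ).2 ⟨hζ.1, apply_eq_of_mem_linkedPoints hβ hT₁ hT₂ hα hζ⟩
  refine ⟨c, fun a => (hc a).trans (Finset.sum_subset hsub fun ζ hζ hζS => ?_).symm⟩
  suffices c ζ = 0 by rw [this, zero_mul]
  by_contra hcζ
  exact hζS (Finset.mem_coe.1 (hS ▸ mem_linkedPoints_of_coeff_ne_zero hβ hT₁ hα hY
    (fun η hη => ((hZ η).1 hη).1) hc hζ hcζ))

end Generic

end LinkedPoints

section EvaluationDet

variable {ι : Type*} [Fintype ι] [DecidableEq ι] {β : ℕ → ℝ} {f₁ f₂ : ℂ → ℂ}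
  {T₁ T₂ : H2 →L[ℂ] H2} {α : ℂ}

/-- The determinant of the values at `α` of the functions represented by the vectors `Y i (g j)`.
Its zeros measure the linear dependence of the functionals `a ↦ repFun β (Y i a) α`. -/
def evaluationDet (β : ℕ → ℝ) (Y : ι → H2 →L[ℂ] H2) (g : ι → H2) (α : ℂ) : ℂ :=
  Matrix.det (Matrix.of fun i j => repFun β (Y i (g j)) α)

lemma differentiableOn_evaluationDet (hβ : HardyWeight β) (Y : ι → H2 →L[ℂ] H2) (g : ι → H2) :
    DifferentiableOn ℂ (evaluationDet β Y g) unitDisk := by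
  unfold evaluationDet
  simp only [Matrix.det_apply, Matrix.of_apply]
  exact DifferentiableOn.fun_sum fun σ _ => (DifferentiableOn.fun_finsetProd fun i _ =>
    differentiableOn_repFun hβ _).const_smul _

lemma exists_evaluationDet_ne_zero {n : ℕ} (hn : (n : ℕ∞) ≤ (linkedPoints β T₁ T₂ α).encard)
    {g : Fin n → H2} (hg : ∀ j, ∀ z ∈ unitDisk, repFun β (g j) z = z ^ (j : ℕ)) :
    ∃ Y : Fin n → H2 →L[ℂ] H2, (∀ i, SemiconjBy (Y i) T₁ T₂) ∧ evaluationDet β Y g α ≠ 0 := by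
  obtain ⟨S, hS, hcard⟩ := Set.exists_subset_encard_eq hn
  have hSfin : S.Finite := Set.finite_of_encard_eq_coe hcard
  let e := hSfin.toFinset.equivFinOfCardEq (n := n) (by
    rwa [hSfin.encard_eq_coe_toFinset_card, Nat.cast_inj] at hcard)
  have hζ : ∀ i, (e.symm i : ℂ) ∈ linkedPoints β T₁ T₂ α := fun i =>
    hS (hSfin.mem_toFinset.1 (e.symm i).2)
  choose hζD Y hY hYζ using hζ
  refine ⟨Y, hY, ?_⟩
  have hmatrix : (Matrix.of fun i j => repFun β (Y i (g j)) α) =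
      Matrix.vandermonde fun i => (e.symm i : ℂ) := by
    ext i j
    rw [Matrix.of_apply, hYζ, hg j _ (hζD i), Matrix.vandermonde_apply]
  rw [evaluationDet, hmatrix, Matrix.det_vandermonde_ne_zero_iff]
  exact Subtype.val_injective.comp e.symm.injective

section Generic

variable (hβ : HardyWeight β) (hf₁ : AnalyticOnClosedDisk f₁) (hT₁ : RepMul β f₁ T₁)
  (hT₂ : RepMul β f₂ T₂) (hα : α ∈ unitDisk) (hcrit : f₂ α ∉ criticalValues f₁)
  {Y : ι → H2 →L[ℂ] H2} (hY : ∀ i, SemiconjBy (Y i) T₁ T₂)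

include hβ hf₁ hT₁ hT₂ hα hcrit hY

omit [Fintype ι] [DecidableEq ι] in
lemma exists_evalMatrix_eq_mul {S : Finset ℂ} (hS : (S : Set ℂ) = linkedPoints β T₁ T₂ α) :
    ∃ C : Matrix ι S ℂ, ∀ g : ι → H2, (Matrix.of fun i j => repFun β (Y i (g j)) α) =
      C * (Matrix.of fun (ζ : S) j => repFun β (g j) ζ) := by
  choose c hc using fun i => exists_eq_sum_of_linkedPoints hβ hf₁ hT₁ hT₂ hα hcrit (hY i) hS
  refine ⟨Matrix.of fun i ζ => c i ζ, fun g => ?_⟩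
  ext i j
  rw [Matrix.mul_apply, Matrix.of_apply, hc, ← Finset.sum_coe_sort]
  rfl

lemma card_le_encard_linkedPoints {g : ι → H2} (hdet : evaluationDet β Y g α ≠ 0) :
    (Fintype.card ι : ℕ∞) ≤ (linkedPoints β T₁ T₂ α).encard := by
  obtain ⟨S, hS⟩ := (finite_linkedPoints hβ hf₁ hT₁ hT₂ hα hcrit).exists_finset_coe
  obtain ⟨C, hC⟩ := exists_evalMatrix_eq_mul hβ hf₁ hT₁ hT₂ hα hcrit hY hS
  have hrank := Matrix.rank_of_isUnit (Matrix.of fun i j => repFun β (Y i (g j)) α)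
    ((Matrix.isUnit_iff_isUnit_det _).2 (isUnit_iff_ne_zero.2 hdet))
  rw [hC] at hrank
  rw [← hS, Set.encard_coe_eq_coe_finsetCard, Nat.cast_le, ← hrank, ← Fintype.card_coe S]
  exact (Matrix.rank_mul_le_left _ _).trans (Matrix.rank_le_card_width C)

lemma evaluationDet_eq_prod_mul {S : Finset ℂ} (hS : (S : Set ℂ) = linkedPoints β T₁ T₂ α)
    (hcard : S.card = Fintype.card ι) {g g' : ι → H2} {u : ℂ → ℂ}
    (hg : ∀ i, ∀ ζ ∈ S, repFun β (g' i) ζ = u ζ * repFun β (g i) ζ) :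
    evaluationDet β Y g' α = (∏ ζ ∈ S, u ζ) * evaluationDet β Y g α := by
  obtain ⟨C, hC⟩ := exists_evalMatrix_eq_mul hβ hf₁ hT₁ hT₂ hα hcrit hY hS
  let e : ι ≃ S := Fintype.equivOfCardEq (by rw [Fintype.card_coe, hcard])
  let E : (ι → H2) → Matrix ι ι ℂ := fun g => Matrix.of fun i j => repFun β (g j) (e i : ℂ)
  have hdet : ∀ g, evaluationDet β Y g α = (C.submatrix id e).det * (E g).det := fun g => by
    rw [evaluationDet, hC, ← Matrix.det_mul]
    exact congrArg Matrix.det (Matrix.submatrix_mul_equiv C _ id e id).symm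
  have hE : E g' = Matrix.diagonal (fun i => u (e i)) * E g := by
    ext i j
    rw [Matrix.diagonal_mul]
    exact hg j (e i) (e i).2
  rw [hdet, hdet, hE, Matrix.det_mul, Matrix.det_diagonal, ← Finset.prod_coe_sort S,
    ← e.prod_comp fun ζ : S => u ζ]
  ring

end Generic

/-- There are `n` operators `Y` with `Y T₁ = T₂ Y` for which the functionals
`a ↦ repFun β (Y a) z` are linearly independent at some point `z` of the disk. -/
def HasIndependentIntertwiners (β : ℕ → ℝ) (T₁ T₂ : H2 →L[ℂ] H2) (n : ℕ) : Prop :=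
  ∃ (Y : Fin n → H2 →L[ℂ] H2) (g : Fin n → H2), (∀ i, SemiconjBy (Y i) T₁ T₂) ∧
    ∃ z ∈ unitDisk, evaluationDet β Y g z ≠ 0

lemma HasIndependentIntertwiners.comp_equiv {T₃ : H2 →L[ℂ] H2} {n : ℕ}
    (h : HasIndependentIntertwiners β T₂ T₃ n) {X : H2 ≃L[ℂ] H2}
    (hX : SemiconjBy (X : H2 →L[ℂ] H2) T₁ T₂) : HasIndependentIntertwiners β T₁ T₃ n := by
  obtain ⟨Y, g, hY, z, hz, hdet⟩ := h
  refine ⟨fun i => Y i * X, fun j => X.symm (g j), fun i => (hY i).mul_left hX, z, hz, ?_⟩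
  simpa only [evaluationDet, mul_apply_eq_comp, ContinuousLinearEquiv.coe_coe,
    ContinuousLinearEquiv.apply_symm_apply] using hdet

lemma ae_le_encard_linkedPoints_iff (hβ : HardyWeight β) (hf₁ : AnalyticOnClosedDisk f₁)
    (hconst : ¬ ∃ c, ∀ z ∈ unitDisk, f₁ z = c) (hT₁ : RepMul β f₁ T₁)
    (hf₂ : DifferentiableOn ℂ f₂ unitDisk) (hT₂ : RepMul β f₂ T₂) :
    ∀ᵐ w, ∀ α ∈ unitDisk, f₂ α = w → ∀ n : ℕ,
      (n : ℕ∞) ≤ (linkedPoints β T₁ T₂ α).encard ↔ HasIndependentIntertwiners β T₁ T₂ n := by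
  have hdet : ∀ᵐ w, ∀ n, HasIndependentIntertwiners β T₁ T₂ n → ∀ α ∈ unitDisk, f₂ α = w →
      ∃ (Y : Fin n → H2 →L[ℂ] H2) (g : Fin n → H2), (∀ i, SemiconjBy (Y i) T₁ T₂) ∧
        evaluationDet β Y g α ≠ 0 := by
    refine MeasureTheory.ae_all_iff.2 fun n => ?_
    by_cases h : HasIndependentIntertwiners β T₁ T₂ n
    · obtain ⟨Y, g, hY, hne⟩ := id h
      filter_upwards [ae_ne_zero_of_eq isOpen_unitDisk isPreconnected_unitDisk hf₂
        (differentiableOn_evaluationDet hβ Y g) hne] with w hw _ α hα hαw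
      exact ⟨Y, g, hY, hw α hα hαw⟩
    · exact .of_forall fun w h' => absurd h' h
  filter_upwards [hdet, hf₁.ae_notMem_criticalValues hconst] with w hw hcrit α hα hαw n
  constructor
  · intro hn
    choose g hg using fun j : Fin n => exists_repFun_eq_pow hβ j
    obtain ⟨Y, hY, hne⟩ := exists_evaluationDet_ne_zero hn hg
    exact ⟨Y, g, hY, α, hα, hne⟩
  · intro h
    obtain ⟨Y, g, hY, hne⟩ := hw n h α hα hαw
    rw [← Fintype.card_fin n]
    exact card_le_encard_linkedPoints hβ hf₁ hT₁ hT₂ hα (hαw ▸ hcrit) hY hne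

end EvaluationDet

/-- Pairwise similar multiplication operators with nonconstant symbols. -/
structure SimilarFamily {ι : Type*} (β : ℕ → ℝ) (f : ι → ℂ → ℂ) (T : ι → H2 →L[ℂ] H2) : Prop where
  hardyWeight : HardyWeight β
  analytic : ∀ i, AnalyticOnClosedDisk (f i)
  not_const : ∀ i, ¬ ∃ c, ∀ z ∈ unitDisk, f i z = c
  repMul : ∀ i, RepMul β (f i) (T i)
  similar : ∀ i j, ∃ X : H2 ≃L[ℂ] H2, SemiconjBy (X : H2 →L[ℂ] H2) (T i) (T j)

/-- A value `w` which is noncritical for every symbol, and such that every point of the disk where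
some symbol takes the value `w` has exactly `M` linked points, whichever member of the family they
are taken from. -/
structure IsGenericValue {ι : Type*} (β : ℕ → ℝ) (f : ι → ℂ → ℂ) (T : ι → H2 →L[ℂ] H2) (M : ℕ)
    (w : ℂ) : Prop where
  notMem_criticalValues : ∀ i, w ∉ criticalValues (f i)
  encard_linkedPoints : ∀ i j, ∀ α ∈ unitDisk, f i α = w →
    (linkedPoints β (T j) (T i) α).encard = M

namespace SimilarFamily

variable {ι : Type*} {β : ℕ → ℝ} {f : ι → ℂ → ℂ} {T : ι → H2 →L[ℂ] H2}

lemma subset_closure_of_ae (h : SimilarFamily β f T) (i : ι) {P : ℂ → Prop} (hP : ∀ᵐ w, P w) :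
    unitDisk ⊆ closure {α ∈ unitDisk | P (f i α)} :=
  _root_.subset_closure_of_ae isOpen_unitDisk isPreconnected_unitDisk
    (h.analytic i).differentiableOn (h.not_const i) hP

lemma exists_mem_unitDisk_of_ae (h : SimilarFamily β f T) (i : ι) {P : ℂ → Prop}
    (hP : ∀ᵐ w, P w) : ∃ α ∈ unitDisk, P (f i α) :=
  closure_nonempty_iff.1 ⟨0, h.subset_closure_of_ae i hP zero_mem_unitDisk⟩

lemma hasIndependentIntertwiners_left (h : SimilarFamily β f T) {i j : ι} (k : ι) {n : ℕ}
    (hn : HasIndependentIntertwiners β (T j) (T i) n) :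
    HasIndependentIntertwiners β (T k) (T i) n :=
  let ⟨_, hX⟩ := h.similar k j
  hn.comp_equiv hX

lemma ae_le_encard_linkedPoints_iff (h : SimilarFamily β f T) (i j : ι) :
    ∀ᵐ w, ∀ α ∈ unitDisk, f i α = w → ∀ n : ℕ,
      (n : ℕ∞) ≤ (linkedPoints β (T j) (T i) α).encard ↔
        HasIndependentIntertwiners β (T j) (T i) n :=
  _root_.ae_le_encard_linkedPoints_iff h.hardyWeight (h.analytic j) (h.not_const j) (h.repMul j)
    (h.analytic i).differentiableOn (h.repMul i)

lemma hasIndependentIntertwiners_one (h : SimilarFamily β f T) (i j : ι) :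
    HasIndependentIntertwiners β (T j) (T i) 1 := by
  obtain ⟨α, hα, hiff⟩ := h.exists_mem_unitDisk_of_ae i (h.ae_le_encard_linkedPoints_iff i i)
  refine h.hasIndependentIntertwiners_left j ((hiff α hα rfl 1).1 ?_)
  exact Set.one_le_encard_iff_nonempty.2 ⟨α, mem_linkedPoints_self hα⟩

lemma hasIndependentIntertwiners_right (h : SimilarFamily β f T) (i : ι) {j k : ι} {n : ℕ}
    (hn : HasIndependentIntertwiners β (T j) (T k) n) :
    HasIndependentIntertwiners β (T j) (T i) n := by
  obtain ⟨α, hα, hik, hij, hkj⟩ := h.exists_mem_unitDisk_of_ae i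
    ((h.ae_le_encard_linkedPoints_iff i k).and
      ((h.ae_le_encard_linkedPoints_iff i j).and (h.ae_le_encard_linkedPoints_iff k j)))
  obtain ⟨ζ, hζ⟩ := Set.one_le_encard_iff_nonempty.1
    ((hik α hα rfl 1).2 (h.hasIndependentIntertwiners_one i k))
  have hfζ : f k ζ = f i α :=
    apply_eq_of_mem_linkedPoints h.hardyWeight (h.repMul k) (h.repMul i) hα hζ
  refine (hij α hα rfl n).1 (((hkj ζ hζ.1 hfζ n).2 hn).trans (Set.encard_le_encard ?_))
  exact fun η hη => mem_linkedPoints_trans hζ hη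

lemma exists_ae_isGenericValue [Countable ι] [Nonempty ι] (h : SimilarFamily β f T) :
    ∃ M, 0 < M ∧ ∀ᵐ w, IsGenericValue β f T M w := by
  obtain ⟨i₀⟩ := ‹Nonempty ι›
  have hcrit : ∀ᵐ w, ∀ i, w ∉ criticalValues (f i) := MeasureTheory.ae_all_iff.2 fun i =>
    (h.analytic i).ae_notMem_criticalValues (h.not_const i)
  have hiff : ∀ᵐ w, ∀ i j, ∀ α ∈ unitDisk, f i α = w → ∀ n : ℕ,
      (n : ℕ∞) ≤ (linkedPoints β (T j) (T i) α).encard ↔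
        HasIndependentIntertwiners β (T i₀) (T i₀) n := by
    refine MeasureTheory.ae_all_iff.2 fun i => MeasureTheory.ae_all_iff.2 fun j => ?_
    filter_upwards [h.ae_le_encard_linkedPoints_iff i j] with w hw α hα hαw n
    rw [hw α hα hαw n]
    exact ⟨fun hn =>
      h.hasIndependentIntertwiners_left i₀ (h.hasIndependentIntertwiners_right i₀ hn), fun hn =>
      h.hasIndependentIntertwiners_left j (h.hasIndependentIntertwiners_right i hn)⟩
  obtain ⟨α, hα, hcritα, hiffα⟩ := h.exists_mem_unitDisk_of_ae i₀ (hcrit.and hiff)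
  have hfin := finite_linkedPoints h.hardyWeight (h.analytic i₀) (h.repMul i₀) (h.repMul i₀) hα
    (hcritα i₀)
  refine ⟨(linkedPoints β (T i₀) (T i₀) α).ncard,
    (Set.ncard_pos hfin).2 ⟨α, mem_linkedPoints_self hα⟩, ?_⟩
  filter_upwards [hcrit, hiff] with w hwcrit hwiff
  refine ⟨hwcrit, fun i j ζ hζ hζw => ENat.eq_of_forall_natCast_le_iff fun n => ?_⟩
  rw [hwiff i j ζ hζ hζw n, hfin.cast_ncard_eq, hiffα i₀ i₀ α hα rfl n]

end SimilarFamily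

namespace IsGenericValue

variable {ι : Type*} {β : ℕ → ℝ} {f : ι → ℂ → ℂ} {T : ι → H2 →L[ℂ] H2} {M : ℕ} {α ζ : ℂ} {i j : ι}

lemma exists_finset_coe_eq_linkedPoints (h : IsGenericValue β f T M (f i α)) (j : ι)
    (hα : α ∈ unitDisk) : ∃ S : Finset ℂ, (S : Set ℂ) = linkedPoints β (T j) (T i) α ∧
      S.card = M := by
  have hcard := h.encard_linkedPoints i j α hα rfl
  obtain ⟨S, hS⟩ := (Set.finite_of_encard_eq_coe hcard).exists_finset_coe
  refine ⟨S, hS, ?_⟩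
  rwa [← hS, Set.encard_coe_eq_coe_finsetCard, Nat.cast_inj] at hcard

variable (hfam : SimilarFamily β f T) (h : IsGenericValue β f T M (f i α)) (hα : α ∈ unitDisk)
  (hζ : ζ ∈ linkedPoints β (T j) (T i) α)

include hfam h hα hζ

lemma linkedPoints_eq_of_mem (k : ι) :
    linkedPoints β (T k) (T j) ζ = linkedPoints β (T k) (T i) α := by
  have hfζ : f j ζ = f i α :=
    apply_eq_of_mem_linkedPoints hfam.hardyWeight (hfam.repMul j) (hfam.repMul i) hα hζ
  have hcard := h.encard_linkedPoints i k α hα rfl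
  refine (Set.finite_of_encard_eq_coe hcard).eq_of_subset_of_encard_le'
    (fun η hη => mem_linkedPoints_trans hζ hη) ?_
  rw [hcard, h.encard_linkedPoints j k ζ hζ.1 hfζ]

lemma mem_linkedPoints_symm : α ∈ linkedPoints β (T i) (T j) ζ :=
  h.linkedPoints_eq_of_mem hfam hα hζ i ▸ mem_linkedPoints_self hα

end IsGenericValue

/-! ### Blaschke products from linked points -/

lemma isBlaschke_const_mul_prod {S : Finset ℂ} (hS : ∀ s ∈ S, s ∈ unitDisk) {κ : ℂ} (hκ : ‖κ‖ = 1) :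
    IsBlaschke S.card fun z => κ * ∏ s ∈ S, mobius s z := by
  refine ⟨κ.arg, fun k => S.equivFin.symm k, fun k => hS _ (S.equivFin.symm k).2, fun z => ?_⟩
  have hexp : Complex.exp (κ.arg * Complex.I) = κ := by
    simpa only [hκ, ofReal_one, one_mul] using κ.norm_mul_exp_arg_mul_I
  simp only [hexp]
  rw [← Finset.prod_coe_sort S, ← S.equivFin.symm.prod_comp]

section LinkedProd

/-- The product of the values of `u` at the points linked to `α`. With `u = mobius c` this turns out
to be a Blaschke product in `α`. -/
def linkedProd (β : ℕ → ℝ) (T₁ T₂ : H2 →L[ℂ] H2) (u : ℂ → ℂ) (α : ℂ) : ℂ :=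
  ∏ᶠ ζ ∈ linkedPoints β T₁ T₂ α, u ζ

variable {β : ℕ → ℝ} {T₁ T₂ : H2 →L[ℂ] H2} {u : ℂ → ℂ} {α : ℂ}

lemma linkedProd_eq_prod {S : Finset ℂ} (hS : (S : Set ℂ) = linkedPoints β T₁ T₂ α) :
    linkedProd β T₁ T₂ u α = ∏ ζ ∈ S, u ζ := by
  rw [linkedProd, ← hS, finprod_mem_coe_finset]

end LinkedProd

section Family

variable {ι : Type*} {β : ℕ → ℝ} {f : ι → ℂ → ℂ} {T : ι → H2 →L[ℂ] H2} {M : ℕ} {i j : ι}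

lemma evaluationDet_eq_linkedProd_mul (h : SimilarFamily β f T) {Y : Fin M → H2 →L[ℂ] H2}
    (hY : ∀ a, SemiconjBy (Y a) (T j) (T i)) {g g' : Fin M → H2} {u : ℂ → ℂ}
    (hg : ∀ a, ∀ z ∈ unitDisk, repFun β (g' a) z = u z * repFun β (g a) z) {α : ℂ}
    (hα : α ∈ unitDisk) (hgen : IsGenericValue β f T M (f i α)) :
    evaluationDet β Y g' α = linkedProd β (T j) (T i) u α * evaluationDet β Y g α := by
  obtain ⟨S, hS, hcard⟩ := hgen.exists_finset_coe_eq_linkedPoints j hα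
  rw [linkedProd_eq_prod hS]
  refine evaluationDet_eq_prod_mul h.hardyWeight (h.analytic j) (h.repMul j) (h.repMul i) hα
    (hgen.notMem_criticalValues j) hY hS (hcard.trans (Fintype.card_fin M).symm)
    fun a ζ hζ => hg a ζ ?_
  exact (hS ▸ Finset.mem_coe.2 hζ : ζ ∈ linkedPoints β (T j) (T i) α).1

lemma norm_linkedProd_le_one {u : ℂ → ℂ} (hu : ∀ z ∈ unitDisk, ‖u z‖ ≤ 1) {α : ℂ}
    (hα : α ∈ unitDisk) (hgen : IsGenericValue β f T M (f i α)) :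
    ‖linkedProd β (T j) (T i) u α‖ ≤ 1 := by
  obtain ⟨S, hS, -⟩ := hgen.exists_finset_coe_eq_linkedPoints j hα
  rw [linkedProd_eq_prod hS, norm_prod]
  refine Finset.prod_le_one (fun _ _ => norm_nonneg _) fun ζ hζ => hu ζ ?_
  exact (hS ▸ Finset.mem_coe.2 hζ : ζ ∈ linkedPoints β (T j) (T i) α).1

lemma norm_evaluationDet_le (h : SimilarFamily β f T) (hM : ∀ᵐ w, IsGenericValue β f T M w)
    {Y : Fin M → H2 →L[ℂ] H2} (hY : ∀ a, SemiconjBy (Y a) (T j) (T i)) {g g' : Fin M → H2}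
    {u : ℂ → ℂ} (hu : ∀ z ∈ unitDisk, ‖u z‖ ≤ 1)
    (hg : ∀ a, ∀ z ∈ unitDisk, repFun β (g' a) z = u z * repFun β (g a) z) {z : ℂ}
    (hz : z ∈ unitDisk) : ‖evaluationDet β Y g' z‖ ≤ ‖evaluationDet β Y g z‖ := by
  have hcont : ∀ g, ContinuousWithinAt (fun z => ‖evaluationDet β Y g z‖)
      {α ∈ unitDisk | IsGenericValue β f T M (f i α)} z := fun g =>
    (((differentiableOn_evaluationDet h.hardyWeight Y g).continuousOn z hz).mono
      Set.inter_subset_left).norm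
  refine (hcont g').closure_le (h.subset_closure_of_ae i hM hz) (hcont g) fun α hα => ?_
  rw [evaluationDet_eq_linkedProd_mul h hY hg hα.1 hα.2, norm_mul]
  exact mul_le_of_le_one_left (norm_nonneg _) (norm_linkedProd_le_one hu hα.1 hα.2)

/-- The quotient of the determinants for `u • g` and `g` is bounded by `1`, hence analytic, and by
density it is independent of the choice of the intertwining operators. -/
lemma exists_differentiableOn_eq_linkedProd (h : SimilarFamily β f T)
    (hM : ∀ᵐ w, IsGenericValue β f T M w) (i j : ι) {u : ℂ → ℂ} (hu : AnalyticOnClosedDisk u)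
    (hu1 : ∀ z ∈ unitDisk, ‖u z‖ ≤ 1) :
    ∃ F : ℂ → ℂ, DifferentiableOn ℂ F unitDisk ∧ (∀ z ∈ unitDisk, ‖F z‖ ≤ 1) ∧
      ∀ α ∈ unitDisk, IsGenericValue β f T M (f i α) → F α = linkedProd β (T j) (T i) u α := by
  choose g hg using fun a : Fin M => exists_repFun_eq_pow h.hardyWeight a
  choose g' hg' using fun a : Fin M => (hu.mul (analyticOnClosedDisk_eval
    (Polynomial.X ^ (a : ℕ)))).exists_repFun_eq h.hardyWeight
  have hgg' : ∀ a, ∀ z ∈ unitDisk, repFun β (g' a) z = u z * repFun β (g a) z := fun a z hz => by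
    rw [hg' a z hz, hg a z hz, Polynomial.eval_X_pow]
  have hdiff := differentiableOn_evaluationDet (ι := Fin M) h.hardyWeight
  have hexY : ∀ α ∈ unitDisk, IsGenericValue β f T M (f i α) → ∃ Y : Fin M → H2 →L[ℂ] H2,
      (∀ a, SemiconjBy (Y a) (T j) (T i)) ∧ evaluationDet β Y g α ≠ 0 := fun α hα hgen =>
    exists_evaluationDet_ne_zero (hgen.encard_linkedPoints i j α hα rfl).ge hg
  obtain ⟨α₀, hα₀, hgen₀⟩ := h.exists_mem_unitDisk_of_ae i hM
  obtain ⟨Y, hY, hne⟩ := hexY α₀ hα₀ hgen₀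
  obtain ⟨F, hF, hF1, hFdiv⟩ := exists_differentiableOn_eq_div isOpen_unitDisk
    isPreconnected_unitDisk (hdiff Y g') (hdiff Y g)
    (fun _ => norm_evaluationDet_le h hM hY hu1 hgg') ⟨α₀, hα₀, hne⟩
  refine ⟨F, hF, hF1, fun α hα hgen => ?_⟩
  obtain ⟨Z, hZ, hZne⟩ := hexY α hα hgen
  have hdense := h.subset_closure_of_ae i (hM.and (ae_ne_zero_of_eq isOpen_unitDisk
    isPreconnected_unitDisk (h.analytic i).differentiableOn (hdiff Y g) ⟨α₀, hα₀, hne⟩))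
  have hEqOn : Set.EqOn (fun z => F z * evaluationDet β Z g z) (evaluationDet β Z g') unitDisk := by
    refine Set.EqOn.of_subset_closure ?_ (hF.mul (hdiff Z g)).continuousOn
      (hdiff Z g').continuousOn Set.inter_subset_left hdense
    rintro z ⟨hz, hzgen, hzne⟩
    simp only [hFdiv z hz (hzne z hz rfl), evaluationDet_eq_linkedProd_mul h hY hgg' hz hzgen,
      evaluationDet_eq_linkedProd_mul h hZ hgg' hz hzgen, mul_div_cancel_right₀ _ (hzne z hz rfl)]
  refine mul_right_cancel₀ hZne ((hEqOn hα).trans ?_)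
  exact evaluationDet_eq_linkedProd_mul h hZ hgg' hα hgen

section Mobius

variable (h : SimilarFamily β f T) (hM : ∀ᵐ w, IsGenericValue β f T M w) {c : ℂ}
  (hc : c ∈ unitDisk) (hcgen : IsGenericValue β f T M (f j c))

include h hM hc hcgen

/-- `α ↦ linkedProd (mobius c) α` vanishes at the points linked to `c`, whence Schwarz's lemma
applies to it. -/
lemma exists_linkedProd_mobius_eq_mul (i : ι) {S : Finset ℂ}
    (hS : (S : Set ℂ) = linkedPoints β (T i) (T j) c) :
    ∃ G : ℂ → ℂ, DifferentiableOn ℂ G unitDisk ∧ (∀ z ∈ unitDisk, ‖G z‖ ≤ 1) ∧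
      ∀ α ∈ unitDisk, IsGenericValue β f T M (f i α) →
        linkedProd β (T j) (T i) (mobius c) α = (∏ s ∈ S, mobius s α) * G α := by
  obtain ⟨F, hF, hF1, hFeq⟩ := exists_differentiableOn_eq_linkedProd h hM i j
    (analyticOnClosedDisk_mobius hc) fun z hz => (mem_unitDisk.1 (mobius_mem_unitDisk hc hz)).le
  have hSlinked : ∀ s ∈ S, s ∈ linkedPoints β (T i) (T j) c := fun s hs =>
    hS ▸ Finset.mem_coe.2 hs
  have hFS : ∀ s ∈ S, F s = 0 := fun s hs => by
    have hsc := hSlinked s hs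
    have hsgen : IsGenericValue β f T M (f i s) := by
      rwa [apply_eq_of_mem_linkedPoints h.hardyWeight (h.repMul i) (h.repMul j) hc hsc]
    obtain ⟨S', hS', -⟩ := hsgen.exists_finset_coe_eq_linkedPoints j hsc.1
    rw [hFeq s hsc.1 hsgen, linkedProd_eq_prod hS']
    exact Finset.prod_eq_zero
      (Finset.mem_coe.1 (hS' ▸ hcgen.mem_linkedPoints_symm h hc hsc)) (mobius_self c)
  obtain ⟨G, hG, hG1, hGeq⟩ := exists_eq_prod_mobius_mul S (fun s hs => (hSlinked s hs).1) hF hF1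
    hFS
  exact ⟨G, hG, hG1, fun α hα hgen => by rw [← hFeq α hα hgen, hGeq α hα]⟩

lemma norm_linkedProd_mobius_le {α : ℂ} (hα : α ∈ unitDisk)
    (hgen : IsGenericValue β f T M (f i α)) :
    ‖linkedProd β (T j) (T i) (mobius c) α‖ ≤ ‖linkedProd β (T i) (T j) (mobius α) c‖ := by
  obtain ⟨S, hS, -⟩ := hcgen.exists_finset_coe_eq_linkedPoints i hc
  obtain ⟨G, -, hG1, hGeq⟩ := exists_linkedProd_mobius_eq_mul h hM hc hcgen i hS
  rw [hGeq α hα hgen, linkedProd_eq_prod hS, norm_mul, norm_prod, norm_prod]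
  simp only [norm_mobius_comm α]
  exact mul_le_of_le_one_right (Finset.prod_nonneg fun _ _ => norm_nonneg _) (hG1 α hα)

/-- The two products `linkedProd (mobius c) α` and `linkedProd (mobius α) c` have the same modulus,
so the Schwarz quotient `G` is unimodular at generic points, and thus constant. -/
lemma exists_isBlaschke_eq_linkedProd (i : ι) :
    ∃ B : ℂ → ℂ, IsBlaschke M B ∧ ∀ α ∈ unitDisk, IsGenericValue β f T M (f i α) →
      B α = linkedProd β (T j) (T i) (mobius c) α := by
  obtain ⟨S, hS, rfl⟩ := hcgen.exists_finset_coe_eq_linkedPoints i hc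
  have hSlinked : ∀ s ∈ S, s ∈ linkedPoints β (T i) (T j) c := fun s hs =>
    hS ▸ Finset.mem_coe.2 hs
  obtain ⟨G, hG, hG1, hGeq⟩ := exists_linkedProd_mobius_eq_mul h hM hc hcgen i hS
  have hae_ne : ∀ᵐ w : ℂ, w ≠ f j c :=
    MeasureTheory.compl_mem_ae_iff.2 (MeasureTheory.measure_singleton _)
  obtain ⟨α, hα, hgen, hne⟩ := h.exists_mem_unitDisk_of_ae i (hM.and hae_ne)
  have hprod_ne : ‖∏ s ∈ S, mobius s α‖ ≠ 0 := by
    refine norm_ne_zero_iff.2 (Finset.prod_ne_zero_iff.2 fun s hs => ?_)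
    rw [Ne, mobius_eq_zero_iff (hSlinked s hs).1 hα]
    rintro rfl
    exact hne (apply_eq_of_mem_linkedPoints h.hardyWeight (h.repMul i) (h.repMul j) hc
      (hSlinked α hs))
  have hnorm : ‖linkedProd β (T j) (T i) (mobius c) α‖ = ‖∏ s ∈ S, mobius s α‖ := by
    rw [(norm_linkedProd_mobius_le h hM hc hcgen hα hgen).antisymm
      (norm_linkedProd_mobius_le h hM hα hgen hc hcgen), linkedProd_eq_prod hS, norm_prod,
      norm_prod]
    simp only [norm_mobius_comm α]
  have hGα : ‖G α‖ = 1 := by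
    rw [hGeq α hα hgen, norm_mul] at hnorm
    exact mul_left_cancel₀ hprod_ne (hnorm.trans (mul_one _).symm)
  have hconst : Set.EqOn G (Function.const ℂ (G α)) unitDisk :=
    Complex.eqOn_of_isPreconnected_of_isMaxOn_norm isPreconnected_unitDisk isOpen_unitDisk hG hα
      fun z hz => (hG1 z hz).trans hGα.ge
  refine ⟨_, isBlaschke_const_mul_prod (fun s hs => (hSlinked s hs).1) hGα, fun z hz hzgen => ?_⟩
  rw [hGeq z hz hzgen, hconst hz, Function.const_apply, mul_comm]

end Mobius

end Family

/-! ### The trace along a Blaschke product -/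

lemma differentiableOn_intervalIntegral {E : Type*} [NormedAddCommGroup E] [NormedSpace ℂ E]
    {U : Set ℂ} (hU : IsOpen U) {a b : ℝ} {F F' : ℂ → ℝ → E}
    (hF : ∀ w ∈ U, ContinuousOn (F w) (Set.uIcc a b))
    (hF' : ContinuousOn (Function.uncurry F') (U ×ˢ Set.uIcc a b))
    (hderiv : ∀ w ∈ U, ∀ t ∈ Set.uIcc a b, HasDerivAt (fun w => F w t) (F' w t) w) :
    DifferentiableOn ℂ (fun w => ∫ t in a..b, F w t) U := by
  intro w₀ hw₀
  obtain ⟨ε, hε, hsub⟩ := Metric.nhds_basis_closedBall.mem_iff.1 (hU.mem_nhds hw₀)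
  obtain ⟨K, hK⟩ := ((isCompact_closedBall w₀ ε).prod isCompact_uIcc).exists_bound_of_continuousOn
    (hF'.mono (Set.prod_mono_left hsub))
  have hF'w₀ : ContinuousOn (F' w₀) (Set.uIcc a b) :=
    hF'.comp (f := fun t => (w₀, t)) (by fun_prop) fun t ht => ⟨hw₀, ht⟩
  have hmeas : ∀ {g : ℝ → E}, ContinuousOn g (Set.uIcc a b) →
      MeasureTheory.AEStronglyMeasurable g (MeasureTheory.volume.restrict (Set.uIoc a b)) :=
    fun hg => (hg.mono Set.uIoc_subset_uIcc).aestronglyMeasurable measurableSet_uIoc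
  have := intervalIntegral.hasDerivAt_integral_of_dominated_loc_of_deriv_le
    (μ := MeasureTheory.volume) (bound := fun _ => K) (Metric.closedBall_mem_nhds w₀ hε)
    (by filter_upwards [hU.mem_nhds hw₀] with w hw using hmeas (hF w hw))
    (hF w₀ hw₀).intervalIntegrable (hmeas hF'w₀)
    (.of_forall fun t ht w hw => hK (w, t) ⟨hw, Set.uIoc_subset_uIcc ht⟩) (by simp)
    (.of_forall fun t ht w hw => hderiv w (hsub hw) t (Set.uIoc_subset_uIcc ht))
  exact this.2.differentiableAt.differentiableWithinAt

lemma differentiableOn_circleIntegral {E : Type*} [NormedAddCommGroup E] [NormedSpace ℂ E]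
    {U : Set ℂ} (hU : IsOpen U) {c : ℂ} {r : ℝ} (hr : 0 ≤ r) {F F' : ℂ → ℂ → E}
    (hF : ∀ w ∈ U, ContinuousOn (F w) (Metric.sphere c r))
    (hF' : ContinuousOn (Function.uncurry F') (U ×ˢ Metric.sphere c r))
    (hderiv : ∀ w ∈ U, ∀ z ∈ Metric.sphere c r, HasDerivAt (fun w => F w z) (F' w z) w) :
    DifferentiableOn ℂ (fun w => ∮ z in C(c, r), F w z) U := by
  have hmem := circleMap_mem_sphere c hr
  have hcont : Continuous (circleMap c r) := continuous_circleMap c r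
  have hcont_deriv : Continuous (deriv (circleMap c r)) := by
    simp only [funext (deriv_circleMap c r)]
    fun_prop
  refine differentiableOn_intervalIntegral hU (F' := fun w t => deriv (circleMap c r) t •
    F' w (circleMap c r t)) (fun w hw => ?_) ?_
    fun w hw t _ => (hderiv w hw _ (hmem t)).const_smul _
  · exact hcont_deriv.continuousOn.smul ((hF w hw).comp hcont.continuousOn fun t _ => hmem t)
  · exact (hcont_deriv.comp continuous_snd).continuousOn.smul (hF'.comp
      (f := fun q : ℂ × ℝ => (q.1, circleMap c r q.2)) (by fun_prop) fun q hq => ⟨hq.1, hmem q.2⟩)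

open Polynomial in
lemma circleIntegral_mul_derivative_div_eval {f : ℂ → ℂ} {c : ℂ} {r : ℝ}
    (hf : DifferentiableOn ℂ f (Metric.closedBall c r)) {p : ℂ[X]}
    (hp : p ≠ 0) (hroots : ∀ s ∈ p.roots, s ∈ Metric.ball c r) (hr : 0 ≤ r) :
    ∮ z in C(c, r), f z * (p.derivative.eval z / p.eval z) =
      2 * Real.pi * I * (p.roots.map f).sum := by
  have hne : ∀ z ∈ Metric.sphere c r, ∀ s ∈ p.roots, z - s ≠ 0 := by
    rintro z hz s hs hzs
    rw [sub_eq_zero.1 hzs] at hz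
    exact (Metric.mem_ball.1 (hroots s hs)).ne hz
  have hint : ∀ s ∈ p.roots.toFinset,
      CircleIntegrable (fun z => (p.roots.count s : ℂ) * ((z - s)⁻¹ • f z)) c r := fun s hs => by
    refine ContinuousOn.circleIntegrable hr (continuousOn_const.mul (ContinuousOn.smul
      (ContinuousOn.inv₀ (by fun_prop) fun z hz => hne z hz s (Multiset.mem_toFinset.1 hs)) ?_))
    exact hf.continuousOn.mono Metric.sphere_subset_closedBall
  calc ∮ z in C(c, r), f z * (p.derivative.eval z / p.eval z)
      = ∮ z in C(c, r), ∑ s ∈ p.roots.toFinset, p.roots.count s * ((z - s)⁻¹ • f z) := by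
        refine circleIntegral.integral_congr hr fun z hz => ?_
        have hpz : p.eval z ≠ 0 := fun h0 =>
          hne z hz z ((mem_roots hp).2 h0) (sub_self z)
        simp only [(IsAlgClosed.splits p).eval_derivative_div_eval_of_ne_zero hpz,
          Finset.sum_multiset_map_count, Finset.mul_sum, nsmul_eq_mul, smul_eq_mul, one_div]
        exact Finset.sum_congr rfl fun s _ => by ring
    _ = 2 * Real.pi * I * (p.roots.map f).sum := by
        rw [circleIntegral.integral_fun_sum hint, Finset.sum_multiset_map_count, Finset.mul_sum]
        refine Finset.sum_congr rfl fun s hs => ?_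
        rw [circleIntegral.integral_const_mul,
          hf.circleIntegral_sub_inv_smul (hroots s (Multiset.mem_toFinset.1 hs)), nsmul_eq_mul,
          smul_eq_mul]
        ring

section Trace

open Polynomial

variable {m : ℕ} {B f : ℂ → ℂ}

lemma IsBlaschke.exists_eval_div_eval (hB : IsBlaschke m B) (hm : 0 < m) :
    ∃ P Q : ℂ[X], P.natDegree ≤ m ∧ Q.natDegree ≤ m ∧ (∀ z, B z = P.eval z / Q.eval z) ∧
      ∃ R : ℝ, 1 < R ∧ ∀ z, ‖z‖ ≤ R → Q.eval z ≠ 0 ∧ (1 < ‖z‖ → 1 < ‖B z‖) := by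
  obtain ⟨θ, zs, hzs, hBz⟩ := hB
  have hdeg : ∀ F : Fin m → ℂ[X], (∀ j, (F j).natDegree ≤ 1) → (∏ j, F j).natDegree ≤ m :=
    fun F hF => (natDegree_prod_le _ _).trans <|
      (Finset.sum_le_card_nsmul _ _ 1 fun j _ => hF j).trans (by simp)
  obtain ⟨R, hR, hR1⟩ : ∃ R : ℝ, (∀ j, ‖zs j‖ * R < 1) ∧ 1 < R := by
    have hlim : ∀ j, Tendsto (fun r : ℝ => ‖zs j‖ * r) (𝓝[>] 1) (𝓝 (‖zs j‖ * 1)) := fun j =>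
      ((continuous_const.mul continuous_id).tendsto 1).mono_left nhdsWithin_le_nhds
    exact ((eventually_all.2 fun j => (hlim j).eventually_lt_const
      (by rw [mul_one]; exact mem_unitDisk.1 (hzs j))).and self_mem_nhdsWithin).exists
  have hden : ∀ z : ℂ, ‖z‖ ≤ R → ∀ j, 1 - (starRingEnd ℂ) (zs j) * z ≠ 0 := fun z hz j =>
    one_sub_conj_mul_ne_zero <| (mul_le_mul_of_nonneg_left hz (norm_nonneg _)).trans_lt (hR j)
  refine ⟨C (Complex.exp (θ * Complex.I)) * ∏ j, (C (zs j) - X),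
    ∏ j, (1 - C ((starRingEnd ℂ) (zs j)) * X), ?_, ?_, fun z => ?_, R, hR1,
    fun z hz => ⟨?_, fun hz1 => ?_⟩⟩
  · exact (natDegree_C_mul_le _ _).trans (hdeg _ fun j => by compute_degree)
  · exact hdeg _ fun j => by compute_degree
  · simp only [hBz, mobius, Finset.prod_div_distrib, eval_mul, eval_C, eval_prod, eval_sub, eval_X,
      eval_one, mul_div_assoc]
  · simp only [eval_prod, eval_sub, eval_one, eval_mul, eval_C, eval_X]
    exact Finset.prod_ne_zero_iff.2 fun j _ => hden z hz j
  · have : Nonempty (Fin m) := ⟨⟨0, hm⟩⟩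
    rw [hBz, norm_mul, norm_exp_ofReal_mul_I, one_mul, norm_prod]
    simpa only [Finset.prod_const_one] using Finset.prod_lt_prod_of_nonempty
      (fun _ _ => zero_lt_one) (fun j _ => one_lt_norm_mobius (hzs j) hz1 (hden z hz j))
      Finset.univ_nonempty

/-- The argument principle: the circle integral of `f • (P - w • Q)' / (P - w • Q)` is, up to the
factor `2πi`, the sum of `f` over the fibre of `P / Q` above `w`. -/
lemma exists_differentiableOn_eq_sum_fiber {r ρ : ℝ} (hr : 0 < r)
    (hf : DifferentiableOn ℂ f (Metric.closedBall 0 r)) {P Q : ℂ[X]} (hP : P.natDegree ≤ m)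
    (hQ : Q.natDegree ≤ m)
    (hne : ∀ w ∈ Metric.ball (0 : ℂ) ρ, ∀ z ∈ Metric.sphere (0 : ℂ) r, (P - C w * Q).eval z ≠ 0) :
    ∃ h : ℂ → ℂ, DifferentiableOn ℂ h (Metric.ball 0 ρ) ∧ ∀ w ∈ Metric.ball (0 : ℂ) ρ,
      ∀ S : Finset ℂ, S.card = m → (∀ s ∈ S, s ∈ Metric.ball 0 r ∧ (P - C w * Q).eval s = 0) →
        h w = ∑ s ∈ S, f s := by
  have hfc : ContinuousOn f (Metric.sphere 0 r) :=
    hf.continuousOn.mono Metric.sphere_subset_closedBall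
  simp only [eval_sub, eval_mul, eval_C] at hne
  refine ⟨fun w => (2 * Real.pi * I)⁻¹ * ∮ z in C(0, r),
    f z * ((P.derivative.eval z - w * Q.derivative.eval z) / (P.eval z - w * Q.eval z)),
    (differentiableOn_circleIntegral Metric.isOpen_ball hr.le (F' := fun w z =>
      f z * ((-Q.derivative.eval z * (P.eval z - w * Q.eval z) -
        (P.derivative.eval z - w * Q.derivative.eval z) * -Q.eval z) /
          (P.eval z - w * Q.eval z) ^ 2)) (fun w hw => ?_) ?_ fun w hw z hz => ?_).const_mul _,
    fun w hw S hS hSroot => ?_⟩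
  · exact hfc.mul (ContinuousOn.div (by fun_prop) (by fun_prop) (hne w hw))
  · exact (hfc.comp continuousOn_snd fun q hq => hq.2).mul (ContinuousOn.div (by fun_prop)
      (by fun_prop) fun q hq => pow_ne_zero 2 (hne q.1 hq.1 q.2 hq.2))
  · have hlin : ∀ a b : ℂ, HasDerivAt (fun w => a - w * b) (-b) w := fun a b => by
      simpa only [one_mul] using ((hasDerivAt_id' w).mul_const b).const_sub a
    exact ((hlin _ _).div (hlin _ _) (hne w hw z hz)).const_mul _
  · have hp0 : P - C w * Q ≠ 0 := fun h0 => hne w hw r (by simp [abs_of_pos hr]) <| by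
      simpa only [eval_sub, eval_mul, eval_C, eval_zero] using congrArg (eval (r : ℂ)) h0
    have hroots : (P - C w * Q).roots = S.val :=
      roots_eq_of_natDegree_le_card_of_ne_zero (fun s hs => (hSroot s hs).2)
        (by simpa only [hS, max_self] using
          natDegree_sub_le_of_le hP ((natDegree_C_mul_le w _).trans hQ)) hp0
    have hres := circleIntegral_mul_derivative_div_eval hf hp0
      (fun s hs => (hSroot s (by rwa [hroots] at hs)).1) hr.le
    simp only [derivative_sub, derivative_C_mul, eval_sub, eval_mul, eval_C, hroots] at hres
    exact (congrArg _ hres).trans (inv_mul_cancel_left₀ two_pi_I_ne_zero _)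

lemma IsBlaschke.exists_analyticOnClosedDisk_eq_sum_fiber (hB : IsBlaschke m B) (hm : 0 < m)
    (hf : AnalyticOnClosedDisk f) :
    ∃ h, AnalyticOnClosedDisk h ∧ ∀ (w : ℂ) (S : Finset ℂ), S.card = m →
      (∀ s ∈ S, s ∈ unitDisk ∧ B s = w) → h w = ∑ s ∈ S, f s := by
  obtain ⟨P, Q, hP, hQ, hBPQ, R, hR, hPQ⟩ := hB.exists_eval_div_eval hm
  obtain ⟨R', hR', hfR'⟩ := hf.exists_analyticOnNhd_closedBall
  obtain ⟨r, hr1, hrR, hrR'⟩ : ∃ r : ℝ, 1 < r ∧ r ≤ R ∧ r ≤ R' :=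
    ⟨min R R', lt_min hR hR', min_le_left _ _, min_le_right _ _⟩
  have hr : 0 < r := one_pos.trans hr1
  have hsphere : ∀ z ∈ Metric.sphere (0 : ℂ) r, Q.eval z ≠ 0 ∧ 1 < ‖B z‖ := fun z hz => by
    rw [mem_sphere_zero_iff_norm] at hz
    exact (hPQ z (hz.trans_le hrR)).imp_right fun h => h (hr1.trans_eq hz.symm)
  obtain ⟨z₀, hz₀, hmin⟩ := (isCompact_sphere (0 : ℂ) r).exists_isMinOn
    (NormedSpace.sphere_nonempty.2 hr.le) (f := fun z => ‖B z‖) <| by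
      simp only [hBPQ]
      exact (ContinuousOn.div (by fun_prop) (by fun_prop) fun z hz => (hsphere z hz).1).norm
  have hρ := (hsphere z₀ hz₀).2
  obtain ⟨h, hh, hsum⟩ := exists_differentiableOn_eq_sum_fiber hr
    (hfR'.differentiableOn.mono (Metric.closedBall_subset_closedBall hrR')) hP hQ
    (ρ := ‖B z₀‖) fun w hw z hz h0 => by
      rw [eval_sub, eval_mul, eval_C, sub_eq_zero, ← div_eq_iff (hsphere z hz).1, ← hBPQ] at h0
      rw [← h0, mem_ball_zero_iff] at hw
      exact hw.not_ge (hmin hz)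
  refine ⟨h, analyticOnClosedDisk_of_differentiableOn hρ hh, fun w S hS hSw => ?_⟩
  obtain ⟨s₀, hs₀⟩ : S.Nonempty := Finset.card_pos.1 (hS ▸ hm)
  refine hsum w ?_ S hS fun s hs => ?_
  · rw [mem_ball_zero_iff, ← (hSw s₀ hs₀).2]
    exact (hB.norm_le_one (hSw s₀ hs₀).1).trans_lt hρ
  · obtain ⟨hs1, hsw⟩ := hSw s hs
    rw [mem_unitDisk] at hs1
    refine ⟨mem_ball_zero_iff.2 (hs1.trans hr1), ?_⟩
    rw [eval_sub, eval_mul, eval_C, sub_eq_zero, ← div_eq_iff (hPQ s (by linarith)).1, ← hBPQ, hsw]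

end Trace

/-! ### Similar multiplication operators -/

lemma IsBlaschke.differentiableOn {m : ℕ} {B : ℂ → ℂ} (hB : IsBlaschke m B) :
    DifferentiableOn ℂ B unitDisk := by
  obtain ⟨θ, zs, hzs, hBz⟩ := hB
  rw [funext hBz]
  exact (DifferentiableOn.fun_finsetProd fun j _ =>
    differentiableOn_mobius_unitDisk (hzs j)).const_mul _

lemma IsBlaschke.continuousOn_comp {m : ℕ} {B h : ℂ → ℂ} (hB : IsBlaschke m B)
    (hh : AnalyticOnClosedDisk h) : ContinuousOn (fun z => h (B z)) unitDisk :=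
  ContinuousOn.comp
    (fun z hz => (analyticOnClosedDisk_iff.1 hh z hz).continuousAt.continuousWithinAt)
    hB.differentiableOn.continuousOn
    fun _ hz => mem_closedBall_zero_iff.2 (hB.norm_le_one hz)

lemma linkedProd_eq_of_mem_linkedPoints {ι : Type*} {β : ℕ → ℝ} {f : ι → ℂ → ℂ}
    {T : ι → H2 →L[ℂ] H2} {M : ℕ} (h : SimilarFamily β f T) {i j k : ι} {u : ℂ → ℂ} {α ζ : ℂ}
    (hα : α ∈ unitDisk) (hgen : IsGenericValue β f T M (f i α))
    (hζ : ζ ∈ linkedPoints β (T j) (T i) α) :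
    linkedProd β (T k) (T j) u ζ = linkedProd β (T k) (T i) u α := by
  rw [linkedProd, linkedProd, hgen.linkedPoints_eq_of_mem h hα hζ]

/-- The common symbol is the average of one `f j` over the fibres of the Blaschke product of `j`:
linked points have the same image under the Blaschke products, and the same value of the symbols. -/
theorem SimilarFamily.exists_eq_comp_blaschke {ι : Type*} [Countable ι] [Nonempty ι] {β : ℕ → ℝ}
    {f : ι → ℂ → ℂ} {T : ι → H2 →L[ℂ] H2} (h : SimilarFamily β f T) :
    ∃ (m : ℕ) (B : ι → ℂ → ℂ) (φ : ℂ → ℂ), 0 < m ∧ (∀ i, IsBlaschke m (B i)) ∧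
      AnalyticOnClosedDisk φ ∧ ∀ i, ∀ z ∈ unitDisk, f i z = φ (B i z) := by
  obtain ⟨j⟩ := ‹Nonempty ι›
  have : Nonempty ι := ⟨j⟩
  obtain ⟨M, hM0, hM⟩ := h.exists_ae_isGenericValue
  obtain ⟨c, hc, hcgen⟩ := h.exists_mem_unitDisk_of_ae j hM
  choose B hB hBlinked using exists_isBlaschke_eq_linkedProd h hM hc hcgen
  obtain ⟨φ, hφ, hφsum⟩ := (hB j).exists_analyticOnClosedDisk_eq_sum_fiber hM0 (h.analytic j)
  have hM0' : (M : ℂ) ≠ 0 := Nat.cast_ne_zero.2 hM0.ne'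
  have hgeneric : ∀ i, ∀ α ∈ unitDisk, IsGenericValue β f T M (f i α) →
      f i α = (M : ℂ)⁻¹ * φ (B i α) := by
    intro i α hα hgen
    obtain ⟨S, hS, hcard⟩ := hgen.exists_finset_coe_eq_linkedPoints j hα
    have hlinked : ∀ s ∈ S, s ∈ linkedPoints β (T j) (T i) α := fun s hs =>
      hS ▸ Finset.mem_coe.2 hs
    have hfS : ∀ s ∈ S, f j s = f i α := fun s hs =>
      apply_eq_of_mem_linkedPoints h.hardyWeight (h.repMul j) (h.repMul i) hα (hlinked s hs)
    have hBS : ∀ s ∈ S, s ∈ unitDisk ∧ B j s = B i α := fun s hs => by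
      have hs1 := (hlinked s hs).1
      exact ⟨hs1, by rw [hBlinked j s hs1 (by rwa [hfS s hs]), hBlinked i α hα hgen,
        linkedProd_eq_of_mem_linkedPoints h hα hgen (hlinked s hs)]⟩
    rw [hφsum _ S hcard hBS, Finset.sum_congr rfl hfS, Finset.sum_const, hcard, nsmul_eq_mul,
      inv_mul_cancel_left₀ hM0']
  have hφM : AnalyticOnClosedDisk fun w => (M : ℂ)⁻¹ * φ w :=
    (analyticOnClosedDisk_const _).mul hφ
  exact ⟨M, B, _, hM0, hB, hφM, fun i => Set.EqOn.of_subset_closure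
    (fun α hα => hgeneric i α hα.1 hα.2) (h.analytic i).differentiableOn.continuousOn
    ((hB i).continuousOn_comp hφM) Set.inter_subset_left (h.subset_closure_of_ae i hM)⟩

section Statement

variable {β : ℕ → ℝ} {f₁ f₂ : ℂ → ℂ} {T₁ T₂ : H2 →L[ℂ] H2}

lemma RepMul.eq_const_of_semiconjBy (hβ : HardyWeight β) (hT₁ : RepMul β f₁ T₁)
    (hT₂ : RepMul β f₂ T₂) {X : H2 →L[ℂ] H2} (hX : SemiconjBy X T₁ T₂)
    (hsurj : Function.Surjective X) {c : ℂ} (hc : ∀ z ∈ unitDisk, f₁ z = c) :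
    ∀ z ∈ unitDisk, f₂ z = c := by
  intro z hz
  obtain ⟨e, he⟩ := exists_repFun_eq_pow hβ 0
  obtain ⟨a, rfl⟩ := hsurj e
  have hTa : T₁ a = c • a := repFun_injOn hβ fun x hx => by
    rw [hT₁ _ x hx, repFun_smul hβ hx, hc x hx]
  have hTX : T₂ (X a) = c • X a := by
    rw [← map_smul, ← hTa, ← mul_apply_eq_comp, ← mul_apply_eq_comp, hX.eq]
  have hz_eq := hT₂ (X a) z hz
  rw [hTX, repFun_smul hβ hz, he z hz, pow_zero, mul_one, mul_one] at hz_eq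
  exact hz_eq.symm

lemma exists_eq_comp_blaschke_of_similar (hβ : HardyWeight β) (hf₁ : AnalyticOnClosedDisk f₁)
    (hf₂ : AnalyticOnClosedDisk f₂) (hT₁ : RepMul β f₁ T₁) (hT₂ : RepMul β f₂ T₂)
    {X : H2 ≃L[ℂ] H2} (hX : ∀ a, X (T₁ a) = T₂ (X a)) :
    ∃ (m : ℕ) (B₁ B₂ h : ℂ → ℂ), 0 < m ∧ IsBlaschke m B₁ ∧ IsBlaschke m B₂ ∧
      AnalyticOnClosedDisk h ∧
      (∀ z ∈ unitDisk, f₁ z = h (B₁ z)) ∧ (∀ z ∈ unitDisk, f₂ z = h (B₂ z)) := by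
  have hX₁₂ : SemiconjBy (X : H2 →L[ℂ] H2) T₁ T₂ := ContinuousLinearMap.ext hX
  have hX₂₁ : SemiconjBy (X.symm : H2 →L[ℂ] H2) T₂ T₁ := ContinuousLinearMap.ext fun a => by
    simp [ContinuousLinearEquiv.symm_apply_eq, hX]
  by_cases hconst : ∃ c, ∀ z ∈ unitDisk, f₁ z = c
  · obtain ⟨c, hc₁⟩ := hconst
    have hc₂ := hT₁.eq_const_of_semiconjBy hβ hT₂ hX₁₂ X.surjective hc₁
    have hB := isBlaschke_const_mul_prod (S := {0})
      (fun s hs => Finset.mem_singleton.1 hs ▸ zero_mem_unitDisk) norm_one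
    exact ⟨_, _, _, fun _ => c, one_pos, hB, hB, analyticOnClosedDisk_const c, hc₁, hc₂⟩
  · have hconst₂ : ¬ ∃ c, ∀ z ∈ unitDisk, f₂ z = c := fun ⟨c, hc₂⟩ =>
      hconst ⟨c, hT₂.eq_const_of_semiconjBy hβ hT₁ hX₂₁ X.symm.surjective hc₂⟩
    have hfamily : SimilarFamily β ![f₁, f₂] ![T₁, T₂] :=
      { hardyWeight := hβ
        analytic := Fin.forall_fin_two.2 ⟨hf₁, hf₂⟩
        not_const := Fin.forall_fin_two.2 ⟨hconst, hconst₂⟩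
        repMul := Fin.forall_fin_two.2 ⟨hT₁, hT₂⟩
        similar := Fin.forall_fin_two.2 ⟨
          Fin.forall_fin_two.2 ⟨⟨.refl ℂ H2, SemiconjBy.one_left _⟩, ⟨X, hX₁₂⟩⟩,
          Fin.forall_fin_two.2 ⟨⟨X.symm, hX₂₁⟩, ⟨.refl ℂ H2, SemiconjBy.one_left _⟩⟩⟩ }
    obtain ⟨m, B, φ, hm, hB, hφ, hcomp⟩ := hfamily.exists_eq_comp_blaschke
    exact ⟨m, B 0, B 1, φ, hm, hB 0, hB 1, hφ, hcomp 0, hcomp 1⟩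

theorem statement19_general (hβ : SlowlyVarying β) (hf₁ : AnalyticOnClosedDisk f₁)
    (hf₂ : AnalyticOnClosedDisk f₂) (hT₁ : RepMul β f₁ T₁) (hT₂ : RepMul β f₂ T₂) :
    (∃ X : H2 ≃L[ℂ] H2, ∀ a : H2, X (T₁ a) = T₂ (X a)) ↔
      ∃ (m : ℕ) (B₁ B₂ h : ℂ → ℂ), 0 < m ∧ IsBlaschke m B₁ ∧ IsBlaschke m B₂ ∧
        AnalyticOnClosedDisk h ∧
        (∀ z ∈ unitDisk, f₁ z = h (B₁ z)) ∧ (∀ z ∈ unitDisk, f₂ z = h (B₂ z)) := by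
  constructor
  · rintro ⟨X, hX⟩
    exact exists_eq_comp_blaschke_of_similar hβ.hardyWeight hf₁ hf₂ hT₁ hT₂ hX
  · rintro ⟨m, B₁, B₂, h, hm, hB₁, hB₂, hh, hcomp₁, hcomp₂⟩
    exact exists_clequiv_of_eq_comp_blaschke hβ hm hh hT₁ hT₂ hB₁ hB₂ hcomp₁ hcomp₂

end Statement

/-- Let `H²_β` be of polynomial growth and `f₁, f₂` analytic on a
neighbourhood of the closed disk.  Then `M_{f₁} ∼ M_{f₂}` on `H²_β` iff there are
finite Blaschke products `B₁, B₂` of the same order and an `h` analytic on a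
neighbourhood of the closed disk with `f₁ = h ∘ B₁` and `f₂ = h ∘ B₂`. -/
theorem statement19 (w : ℕ → ℝ) (hw : PolyGrowth w) (f₁ f₂ : ℂ → ℂ)
    (hf₁ : AnalyticOnClosedDisk f₁) (hf₂ : AnalyticOnClosedDisk f₂)
    (T₁ T₂ : H2 →L[ℂ] H2)
    (hT₁ : RepMul (betaSeq w) f₁ T₁) (hT₂ : RepMul (betaSeq w) f₂ T₂) :
    (∃ X : H2 ≃L[ℂ] H2, ∀ a : H2, X (T₁ a) = T₂ (X a)) ↔
      ∃ (m : ℕ) (B₁ B₂ h : ℂ → ℂ), 0 < m ∧ IsBlaschke m B₁ ∧ IsBlaschke m B₂ ∧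
        AnalyticOnClosedDisk h ∧
        (∀ z ∈ unitDisk, f₁ z = h (B₁ z)) ∧ (∀ z ∈ unitDisk, f₂ z = h (B₂ z)) :=
  statement19_general hw.slowlyVarying_betaSeq hf₁ hf₂ hT₁ hT₂
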